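/- Let either d ≤ 2s and p ∈ [2,∞), or d > 2s and p ∈ [2, 2d/(d−2s)]. Suppose ρ satisfies the two-power bounds with γ_0 ∈ [0,d) and γ ∈ [0, max(d, d − (p/2)(d−2s))]. Then for all v, w ∈ X_{p,s,ρ} the integration-by-parts formula holds: (C_{d,s}/2) ∬ (v(x)−v(y))(w(x)−w(y))/|x−y|^{d+2s} dx dy = ∫ v(x)(−Δ)^s w(x) dx = ∫ (−Δ)^s v(x) w(x) dx. -/

import Mathlib

open MeasureTheory Filter Metric Set
open scoped Topology ENNReal

noncomputable section

abbrev Ed (d : ℕ) := EuclideanSpace ℝ (Fin d)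

/-- Truncated (away from the singularity) fractional-Laplacian integral. -/
noncomputable def fracLapTrunc (d : ℕ) (s : ℝ) (f : Ed d → ℝ) (x : Ed d) (ε : ℝ) : ℝ :=
  ∫ y in {y : Ed d | ε ≤ dist x y}, (f x - f y) / dist x y ^ ((d : ℝ) + 2 * s)

/-- Fractional Laplacian, as a principal value (limit of truncated integrals),
with normalization constant `Cds`. -/
noncomputable def fracLap (d : ℕ) (s Cds : ℝ) (f : Ed d → ℝ) (x : Ed d) : ℝ :=
  Cds * limUnder (𝓝[>] (0:ℝ)) (fracLapTrunc d s f x)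

/-- `V` is the distributional fractional Laplacian of `v`. -/
def IsDistFracLap (d : ℕ) (s Cds : ℝ) (v V : Ed d → ℝ) : Prop :=
  ∀ φ : Ed d → ℝ, ContDiff ℝ (⊤ : ℕ∞) φ → HasCompactSupport φ →
    ∫ x, v x * fracLap d s Cds φ x = ∫ x, V x * φ x

/-- The nonlocal quantity `l_{p,s}(f)(x) = ∫ |f x - f y|^p / |x-y|^{d+ps} dy`. -/
noncomputable def lps (d : ℕ) (p s : ℝ) (f : Ed d → ℝ) (x : Ed d) : ℝ :=
  ∫ y, |f x - f y| ^ p / dist x y ^ ((d : ℝ) + p * s)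

/-- A weight comparable to `|x|^{-γ₀}` on the unit ball and to `|x|^{-γ}` outside. -/
def TwoPowerWeight (d : ℕ) (ρ : Ed d → ℝ) (c C γ₀ γ : ℝ) : Prop :=
  0 < c ∧ c < C ∧
  (∀ᵐ x : Ed d, ‖x‖ ≤ 1 → c * ‖x‖ ^ (-γ₀) ≤ ρ x ∧ ρ x ≤ C * ‖x‖ ^ (-γ₀)) ∧
  (∀ᵐ x : Ed d, 1 < ‖x‖ → c * ‖x‖ ^ (-γ) ≤ ρ x ∧ ρ x ≤ C * ‖x‖ ^ (-γ))

/-- Standard mollification `f_ε = η_ε ∗ f` with `η_ε(x) = ε^{-d} η(x/ε)`. -/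
noncomputable def mollify (d : ℕ) (η : Ed d → ℝ) (ε : ℝ) (f : Ed d → ℝ) (x : Ed d) : ℝ :=
  ∫ y, (ε ^ (-(d:ℝ)) * η (ε⁻¹ • (x - y))) * f y

/-- A smooth nonnegative probability mollifier supported in the unit ball. -/
def IsMollifier (d : ℕ) (η : Ed d → ℝ) : Prop :=
  ContDiff ℝ (⊤ : ℕ∞) η ∧ (∀ x, 0 ≤ η x) ∧ tsupport η ⊆ closedBall (0 : Ed d) 1 ∧ ∫ x, η x = 1

/-- Membership in the weighted Lebesgue space `L^p(ρ dx)`. -/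
def MemWLp (d : ℕ) (p : ℝ) (ρ f : Ed d → ℝ) : Prop :=
  AEStronglyMeasurable f (volume : Measure (Ed d)) ∧
    Integrable (fun x => |f x| ^ p * ρ x)

/-- `v ∈ X_{p,s,ρ}` with distributional fractional Laplacian `V`. -/
def MemX (d : ℕ) (s Cds p : ℝ) (ρ : Ed d → ℝ) (v V : Ed d → ℝ) : Prop :=
  MemWLp d p ρ v ∧ IsDistFracLap d s Cds v V ∧
    MemWLp d (p / (p - 1)) (fun x => ρ x ^ (-(p / (p - 1) - 1))) V

/-- Weighted `L^p` norm. -/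
noncomputable def wNorm (d : ℕ) (p : ℝ) (ρ f : Ed d → ℝ) : ℝ :=
  (∫ x, |f x| ^ p * ρ x) ^ (1 / p)

/-- Norm of the space `X_{p,s,ρ}` (on the pair `(v, (−Δ)^s v)`). -/
noncomputable def xNorm (d : ℕ) (p : ℝ) (ρ : Ed d → ℝ) (v V : Ed d → ℝ) : ℝ :=
  Real.sqrt ((wNorm d p ρ v) ^ 2 +
    (wNorm d (p / (p - 1)) (fun x => ρ x ^ (-(p / (p - 1) - 1))) V) ^ 2)

/-- Riesz potential `I_{d,s} ∗ f` with kernel constant `κ`. -/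
noncomputable def riesz (d : ℕ) (s κ : ℝ) (f : Ed d → ℝ) (x : Ed d) : ℝ :=
  ∫ y, κ * ‖x - y‖ ^ (-((d:ℝ) - 2 * s)) * f y

end

open MeasureTheory Filter Metric Set
open scoped Topology ENNReal

theorem fi_weak_conv {α : Type*} [MeasurableSpace α] {μ : Measure α} {p q : ℝ}
    (hpq : p.HolderConjugate q) {F g : α → ℝ} {f : ℕ → α → ℝ} {M : ℝ}
    (hF : AEStronglyMeasurable F μ) (hFq : Integrable (fun x => |F x| ^ q) μ)
    (hfm : ∀ n, AEStronglyMeasurable (f n) μ)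
    (hfp : ∀ n, Integrable (fun x => |f n x| ^ p) μ)
    (hM : ∀ n, ∫ x, |f n x| ^ p ∂μ ≤ M)
    (hlim : ∀ᵐ x ∂μ, Tendsto (fun n => f n x) atTop (𝓝 (g x))) :
    AEStronglyMeasurable g μ ∧ Integrable (fun x => |g x| ^ p) μ ∧ ∫ x, |g x| ^ p ∂μ ≤ M ∧
    Integrable (fun x => F x * g x) μ ∧
    Tendsto (fun n => ∫ x, F x * f n x ∂μ) atTop (𝓝 (∫ x, F x * g x ∂μ)) := by
  have hp1 : 1 < p := hpq.lt
  have hp0 : 0 < p := hpq.pos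
  have hq0 : 0 < q := hpq.symm.pos
  have hM0 : 0 ≤ M := le_trans (integral_nonneg (fun x => by positivity)) (hM 0)
  have hgm : AEStronglyMeasurable g μ := aestronglyMeasurable_of_tendsto_ae atTop hfm hlim
  have hrp : ∀ {h : α → ℝ} {r : ℝ}, 0 < r → AEStronglyMeasurable h μ →
      AEStronglyMeasurable (fun x => |h x| ^ r) μ := fun hr hh =>
    (Real.continuous_rpow_const hr.le).comp_aestronglyMeasurable
      (continuous_abs.comp_aestronglyMeasurable hh)
  have hgl : ∫⁻ x, ENNReal.ofReal (|g x| ^ p) ∂μ ≤ ENNReal.ofReal M := by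
    calc ∫⁻ x, ENNReal.ofReal (|g x| ^ p) ∂μ
        = ∫⁻ x, liminf (fun n => ENNReal.ofReal (|f n x| ^ p)) atTop ∂μ := by
          apply lintegral_congr_ae
          filter_upwards [hlim] with x hx
          refine (Tendsto.liminf_eq ?_).symm
          exact ENNReal.tendsto_ofReal (hx.abs.rpow_const (Or.inr hp0.le))
      _ ≤ liminf (fun n => ∫⁻ x, ENNReal.ofReal (|f n x| ^ p) ∂μ) atTop :=
          lintegral_liminf_le' fun n => (hfp n).1.aemeasurable.ennreal_ofReal
      _ ≤ ENNReal.ofReal M := by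
          refine liminf_le_of_frequently_le' (Frequently.of_forall fun n => ?_)
          rw [← ofReal_integral_eq_lintegral_ofReal (hfp n) (ae_of_all _ fun x => by positivity)]
          exact ENNReal.ofReal_le_ofReal (hM n)
  have hgi : Integrable (fun x => |g x| ^ p) μ := by
    refine ⟨hrp hp0 hgm, ?_⟩
    rw [hasFiniteIntegral_iff_ofReal (ae_of_all _ fun x => by positivity)]
    exact hgl.trans_lt ENNReal.ofReal_lt_top
  have hgM : ∫ x, |g x| ^ p ∂μ ≤ M := by
    rw [← ofReal_integral_eq_lintegral_ofReal hgi (ae_of_all _ fun x => by positivity)] at hgl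
    exact (ENNReal.ofReal_le_ofReal_iff hM0).1 hgl
  have young : ∀ a b : ℝ, |a * b| ≤ |a| ^ q + |b| ^ p := by
    intro a b
    rw [abs_mul]
    refine (Real.young_inequality_of_nonneg (abs_nonneg a) (abs_nonneg b) hpq.symm).trans ?_
    have h1 : |a| ^ q / q ≤ |a| ^ q := div_le_self (by positivity) hpq.symm.lt.le
    have h2 : |b| ^ p / p ≤ |b| ^ p := div_le_self (by positivity) hp1.le
    linarith
  have hintg : ∀ {h : α → ℝ}, AEStronglyMeasurable h μ → Integrable (fun x => |h x| ^ p) μ →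
      Integrable (fun x => F x * h x) μ := by
    intro h hh hhp
    refine (hFq.add hhp).mono' (hF.mul hh) (ae_of_all _ fun x => ?_)
    rw [Real.norm_eq_abs]
    exact young _ _
  refine ⟨hgm, hgi, hgM, hintg hgm hgi, ?_⟩
  -- differences
  set D : ℕ → α → ℝ := fun n x => |f n x - g x| with hD
  have hDm : ∀ n, AEStronglyMeasurable (D n) μ := fun n =>
    continuous_abs.comp_aestronglyMeasurable ((hfm n).sub hgm)
  have hDle : ∀ n x, D n x ^ p ≤ 2 ^ p * (|f n x| ^ p + |g x| ^ p) := by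
    intro n x
    have h1 : D n x ≤ 2 * max |f n x| |g x| := by
      have := abs_sub (f n x) (g x)
      have h2 := le_max_left |f n x| |g x|
      have h3 := le_max_right |f n x| |g x|
      simp only [hD]; linarith
    calc D n x ^ p ≤ (2 * max |f n x| |g x|) ^ p :=
          Real.rpow_le_rpow (abs_nonneg _) h1 hp0.le
      _ = 2 ^ p * (max |f n x| |g x|) ^ p := Real.mul_rpow (by norm_num) (by positivity)
      _ ≤ _ := by
          gcongr
          rcases max_cases |f n x| |g x| with ⟨h, _⟩ | ⟨h, _⟩ <;> rw [h]
          · have : 0 ≤ |g x| ^ p := by positivity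
            linarith
          · have : 0 ≤ |f n x| ^ p := by positivity
            linarith
  have hDi : ∀ n, Integrable (fun x => D n x ^ p) μ := by
    intro n
    refine (((hfp n).add hgi).const_mul (2 ^ p)).mono'
      ((Real.continuous_rpow_const hp0.le).comp_aestronglyMeasurable (hDm n))
      (ae_of_all _ fun x => ?_)
    rw [Real.norm_eq_abs, abs_of_nonneg (by positivity)]
    exact hDle n x
  have hDM : ∀ n, ∫ x, D n x ^ p ∂μ ≤ 2 ^ p * (M + M) := by
    intro n
    calc ∫ x, D n x ^ p ∂μ ≤ ∫ x, 2 ^ p * (|f n x| ^ p + |g x| ^ p) ∂μ :=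
          integral_mono (hDi n) (((hfp n).add hgi).const_mul (2 ^ p)) (hDle n)
      _ = 2 ^ p * (∫ x, |f n x| ^ p ∂μ + ∫ x, |g x| ^ p ∂μ) := by
          rw [integral_const_mul, integral_add (hfp n) hgi]
      _ ≤ _ := by gcongr; exact hM n
  have hFD : ∀ n, Integrable (fun x => |F x| * D n x) μ := by
    intro n
    refine (hFq.add (hDi n)).mono' ((continuous_abs.comp_aestronglyMeasurable hF).mul (hDm n))
      (ae_of_all _ fun x => ?_)
    rw [Real.norm_eq_abs]
    have := young |F x| (D n x)
    rw [abs_abs, abs_of_nonneg (abs_nonneg _ : 0 ≤ D n x)] at this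
    exact this
  have key : Tendsto (fun n => ∫ x, |F x| * D n x ∂μ) atTop (𝓝 0) := by
    rw [Metric.tendsto_atTop]
    intro ε hε
    set M' := 2 ^ p * (M + M) + 1 with hM'
    have hM'0 : 0 < M' := by positivity
    obtain ⟨l, hl0, hl⟩ : ∃ l : ℝ, 0 < l ∧ l ^ (-(p - 1)) * M' < ε / 2 := by
      have h1 : Tendsto (fun l : ℝ => l ^ (-(p - 1)) * M') atTop (𝓝 (0 * M')) :=
        (tendsto_rpow_neg_atTop (by linarith)).mul_const _
      rw [zero_mul] at h1
      obtain ⟨l, h⟩ := ((h1.eventually_lt_const (half_pos hε)).and (eventually_gt_atTop 0)).exists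
      exact ⟨l, h.2, h.1⟩
    have hpt : ∀ n x, |F x| * D n x ≤
        min (|F x| * D n x) (l * |F x| ^ q) + l ^ (-(p - 1)) * D n x ^ p := by
      intro n x
      have hDn : 0 ≤ D n x := abs_nonneg _
      by_cases h : |F x| * D n x ≤ l * |F x| ^ q
      · rw [min_eq_left h]
        have : 0 ≤ l ^ (-(p - 1)) * D n x ^ p := by positivity
        linarith
      · have hmin : 0 ≤ min (|F x| * D n x) (l * |F x| ^ q) := by positivity
        push Not at h
        have hF0 : 0 < |F x| := by
          rcases (abs_nonneg (F x)).eq_or_lt with h0 | h0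
          · rw [← h0, Real.zero_rpow hq0.ne'] at h; simp at h
          · exact h0
        have h2 : l * |F x| ^ (q - 1) < D n x := by
          rw [Real.rpow_sub_one hF0.ne', ← mul_div_assoc, div_lt_iff₀ hF0]
          linarith
        have h3 : |F x| ≤ l ^ (-(p - 1)) * D n x ^ (p - 1) := by
          have h4 : (l * |F x| ^ (q - 1)) ^ (p - 1) ≤ D n x ^ (p - 1) :=
            Real.rpow_le_rpow (by positivity) h2.le (by linarith)
          rw [Real.mul_rpow hl0.le (by positivity), ← Real.rpow_mul hF0.le] at h4
          have h5 : (q - 1) * (p - 1) = 1 := by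
            have := hpq.sub_one_mul_conj
            have h6 := hpq.mul_eq_add
            nlinarith
          rw [h5, Real.rpow_one] at h4
          rw [Real.rpow_neg hl0.le, inv_mul_eq_div, le_div_iff₀ (by positivity)]
          linarith
        calc |F x| * D n x ≤ l ^ (-(p - 1)) * D n x ^ (p - 1) * D n x := by gcongr
          _ = l ^ (-(p - 1)) * D n x ^ p := by
            have hD0 : D n x ≠ 0 := (lt_of_le_of_lt (by positivity) h2).ne'
            rw [mul_assoc, ← Real.rpow_add_one hD0]; congr 2; ring
          _ ≤ _ := by linarith
    have hmini : ∀ n, AEStronglyMeasurable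
        (fun x => min (|F x| * D n x) (l * |F x| ^ q)) μ := fun n =>
      (hFD n).1.inf (hFq.const_mul l).1
    have hminb : ∀ n x, ‖min (|F x| * D n x) (l * |F x| ^ q)‖ ≤ l * |F x| ^ q := by
      intro n x
      rw [Real.norm_eq_abs, abs_of_nonneg]
      · exact min_le_right _ _
      · have hDn : 0 ≤ D n x := abs_nonneg _
        positivity
    have hT : Tendsto (fun n => ∫ x, min (|F x| * D n x) (l * |F x| ^ q) ∂μ) atTop (𝓝 0) := by
      rw [show (0:ℝ) = ∫ x, (0:ℝ) ∂μ by simp]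
      refine tendsto_integral_of_dominated_convergence (fun x => l * |F x| ^ q) hmini
        (hFq.const_mul l) (fun n => ae_of_all _ (hminb n)) ?_
      filter_upwards [hlim] with x hx
      have h1 : Tendsto (fun n => |F x| * D n x) atTop (𝓝 0) := by
        have : Tendsto (fun n => |F x| * |f n x - g x|) atTop (𝓝 (|F x| * |g x - g x|)) :=
          (hx.sub_const _).abs.const_mul _
        simpa using this
      refine squeeze_zero (fun n => ?_) (fun n => min_le_left _ _) h1
      have hDn : 0 ≤ D n x := abs_nonneg _
      positivity
    obtain ⟨N, hN⟩ := eventually_atTop.1 (hT.eventually_lt_const (half_pos hε))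
    refine ⟨N, fun n hn => ?_⟩
    have h0 : 0 ≤ ∫ x, |F x| * D n x ∂μ :=
      integral_nonneg fun x => mul_nonneg (abs_nonneg _) (abs_nonneg _)
    rw [Real.dist_eq, sub_zero, abs_of_nonneg h0]
    have hmi : Integrable (fun x => min (|F x| * D n x) (l * |F x| ^ q)) μ :=
      (hFq.const_mul l).mono' (hmini n) (ae_of_all _ (hminb n))
    calc ∫ x, |F x| * D n x ∂μ
        ≤ ∫ x, (min (|F x| * D n x) (l * |F x| ^ q) + l ^ (-(p - 1)) * D n x ^ p) ∂μ :=
          integral_mono (hFD n) (hmi.add ((hDi n).const_mul _)) (hpt n)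
      _ = ∫ x, min (|F x| * D n x) (l * |F x| ^ q) ∂μ
            + l ^ (-(p - 1)) * ∫ x, D n x ^ p ∂μ := by
          rw [integral_add hmi ((hDi n).const_mul _), integral_const_mul]
      _ < ε / 2 + ε / 2 := by
          refine add_lt_add_of_lt_of_le (hN n hn) (le_trans ?_ hl.le)
          gcongr
          linarith [hDM n]
      _ = ε := by ring
  rw [tendsto_iff_norm_sub_tendsto_zero]
  refine squeeze_zero (fun n => norm_nonneg _) (fun n => ?_) key
  rw [← integral_sub (hintg (hfm n) (hfp n)) (hintg hgm hgi)]
  refine (norm_integral_le_integral_norm _).trans (le_of_eq ?_)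
  refine integral_congr_ae (ae_of_all _ fun x => ?_)
  simp only [hD]
  rw [← mul_sub, Real.norm_eq_abs, abs_mul]

open MeasureTheory Filter Metric Set
open scoped Topology ENNReal

/-- truncated kernel -/
noncomputable def fiK (d : ℕ) (e ε : ℝ) (z : Ed d) : ℝ := if ε ≤ ‖z‖ then ‖z‖ ^ (-e) else 0
noncomputable def fiJ (d : ℕ) (e : ℝ) (x : Ed d) : ℝ := (1 + ‖x‖) ^ (-e)
noncomputable def fiL (d : ℕ) (e ε : ℝ) (f : Ed d → ℝ) (x : Ed d) : ℝ :=
  ∫ y, (f x - f y) * fiK d e ε (x - y)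
noncomputable def fiLL (d : ℕ) (e : ℝ) (f : Ed d → ℝ) (x : Ed d) : ℝ :=
  1 / 2 * ∫ z, (2 * f x - f (x + z) - f (x - z)) * ‖z‖ ^ (-e)

theorem fiK_nonneg {d : ℕ} {e ε : ℝ} (z : Ed d) : 0 ≤ fiK d e ε z := by
  unfold fiK; split_ifs <;> positivity

theorem fiK_neg {d : ℕ} {e ε : ℝ} (z : Ed d) : fiK d e ε (-z) = fiK d e ε z := by
  unfold fiK; rw [norm_neg]

theorem fiK_symm {d : ℕ} {e ε : ℝ} (x y : Ed d) : fiK d e ε (x - y) = fiK d e ε (y - x) := by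
  rw [← fiK_neg, neg_sub]

theorem fiK_le {d : ℕ} {e ε : ℝ} (z : Ed d) : fiK d e ε z ≤ ‖z‖ ^ (-e) := by
  unfold fiK; split_ifs
  · exact le_rfl
  · positivity

theorem fiK_meas {d : ℕ} {e ε : ℝ} : Measurable (fiK d e ε) := by
  unfold fiK
  refine Measurable.ite (measurableSet_le measurable_const measurable_norm) ?_ measurable_const
  exact measurable_norm.pow_const _

theorem fiK_tendsto {d : ℕ} {e : ℝ} (he : 0 < e) (z : Ed d) :
    Tendsto (fun ε => fiK d e ε z) (𝓝[>] 0) (𝓝 (‖z‖ ^ (-e))) := by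
  by_cases hz : z = 0
  · subst hz
    refine tendsto_const_nhds.congr' ?_
    filter_upwards [self_mem_nhdsWithin] with ε hε
    have hε' : 0 < ε := hε
    simp [fiK, not_le.2 hε', Real.zero_rpow (neg_ne_zero.2 he.ne')]
  · have hz' : 0 < ‖z‖ := norm_pos_iff.2 hz
    refine tendsto_const_nhds.congr' ?_
    have : Ioo (0:ℝ) ‖z‖ ∈ 𝓝[>] (0:ℝ) := Ioo_mem_nhdsGT hz'
    filter_upwards [this] with ε hε
    simp [fiK, hε.2.le]

theorem fiK_le_J {d : ℕ} {e ε : ℝ} (he : 0 ≤ e) (hε : 0 < ε) (z : Ed d) :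
    fiK d e ε z ≤ (1 / ε + 1) ^ e * fiJ d e z := by
  unfold fiK fiJ
  split_ifs with h
  · have hz : 0 < ‖z‖ := hε.trans_le h
    have h1 : 1 + ‖z‖ ≤ (1 / ε + 1) * ‖z‖ := by
      have : 1 ≤ 1 / ε * ‖z‖ := by rw [one_div, inv_mul_eq_div, le_div_iff₀ hε]; linarith
      nlinarith
    have h2 : (1 + ‖z‖) ^ e ≤ (1 / ε + 1) ^ e * ‖z‖ ^ e := by
      rw [← Real.mul_rpow (by positivity) hz.le]
      exact Real.rpow_le_rpow (by positivity) h1 he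
    rw [Real.rpow_neg hz.le, Real.rpow_neg (by positivity), ← div_eq_mul_inv,
      inv_le_iff_one_le_mul₀ (by positivity), ← mul_div_right_comm, one_le_div (by positivity)]
    exact h2
  · positivity

theorem fiJ_pos {d : ℕ} {e : ℝ} (x : Ed d) : 0 < fiJ d e x := by unfold fiJ; positivity

theorem fiJ_integrable {d : ℕ} {e : ℝ} (he : (d:ℝ) < e) : Integrable (fiJ d e) := by
  apply integrable_one_add_norm
  simpa using he

theorem fiJ_meas {d : ℕ} {e : ℝ} : Measurable (fiJ d e) := by
  unfold fiJ
  exact (measurable_const.add measurable_norm).pow_const _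

theorem fiK_integrable {d : ℕ} {e ε : ℝ} (he : (d:ℝ) < e) (hε : 0 < ε) :
    Integrable (fiK d e ε) := by
  have he0 : 0 ≤ e := (Nat.cast_nonneg d).trans he.le
  refine ((fiJ_integrable he).const_mul ((1 / ε + 1) ^ e)).mono' fiK_meas.aestronglyMeasurable
    (ae_of_all _ fun z => ?_)
  rw [Real.norm_eq_abs, abs_of_nonneg (fiK_nonneg z)]
  exact fiK_le_J he0 hε z

theorem fiJ_shift {d : ℕ} {e : ℝ} (he : 0 ≤ e) (x z : Ed d) :
    fiJ d e x ≤ (1 + ‖z‖) ^ e * fiJ d e (x + z) := by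
  unfold fiJ
  have h1 : 1 + ‖x + z‖ ≤ (1 + ‖z‖) * (1 + ‖x‖) := by
    have := norm_add_le x z
    nlinarith [norm_nonneg x, norm_nonneg z, mul_nonneg (norm_nonneg x) (norm_nonneg z)]
  have h2 : (1 + ‖x + z‖) ^ e ≤ (1 + ‖z‖) ^ e * (1 + ‖x‖) ^ e := by
    rw [← Real.mul_rpow (by positivity) (by positivity)]
    exact Real.rpow_le_rpow (by positivity) h1 he
  rw [Real.rpow_neg (by positivity), Real.rpow_neg (by positivity), ← div_eq_mul_inv,
      inv_le_iff_one_le_mul₀ (by positivity), ← mul_div_right_comm, one_le_div (by positivity)]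
  exact h2

theorem fi_trunc_eq {d : ℕ} {s : ℝ} (f : Ed d → ℝ) (x : Ed d) (ε : ℝ) :
    fracLapTrunc d s f x ε = fiL d ((d:ℝ) + 2 * s) ε f x := by
  unfold fracLapTrunc fiL
  rw [← integral_indicator]
  · congr 1
    ext y
    unfold fiK Set.indicator
    simp only [mem_ofPred_eq, dist_eq_norm]
    split_ifs
    · rw [Real.rpow_neg (norm_nonneg _), div_eq_mul_inv]
    · simp
  · exact measurableSet_le measurable_const (measurable_const.dist measurable_id)

theorem fi_ball_integrable {d : ℕ} (hd : 1 ≤ d) {a : ℝ} (ha : a < d) (r : ℝ) :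
    IntegrableOn (fun y : Ed d => ‖y‖ ^ (-a)) (ball 0 r) := by
  have : Nonempty (Fin d) := ⟨⟨0, hd⟩⟩
  have := integrableOn_fun_norm_addHaar (E := Ed d) (μ := volume) (f := fun t : ℝ => t ^ (-a)) (r := r)
  rw [this]
  have h2 : IntegrableOn (fun y : ℝ => y ^ ((d:ℝ) - 1 - a)) (Ioo 0 r) := by
    rcases le_or_gt r 0 with hr | hr
    · simp [Ioo_eq_empty (not_lt.2 hr)]
    · rw [← integrableOn_Ioc_iff_integrableOn_Ioo,
        ← intervalIntegrable_iff_integrableOn_Ioc_of_le hr.le]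
      exact intervalIntegral.intervalIntegrable_rpow' (by linarith)
  refine h2.congr_fun (fun y hy => ?_) measurableSet_Ioo
  have hy0 : 0 < y := hy.1
  simp only [finrank_euclideanSpace, Fintype.card_fin, smul_eq_mul]
  rw [← Real.rpow_natCast, ← Real.rpow_add hy0, Nat.cast_sub hd]
  congr 1; push_cast; ring

/-- integrability of min(|z|^2,1)|z|^{-e} -/
theorem fi_min_integrable {d : ℕ} (hd : 1 ≤ d) {e : ℝ} (he : (d:ℝ) < e) (he2 : e < d + 2) :
    Integrable (fun z : Ed d => min (‖z‖ ^ 2) 1 * ‖z‖ ^ (-e)) := by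
  have h1 := fi_ball_integrable hd (a := e - 2) (by linarith) 1
  have h2 := (fiK_integrable (d := d) he one_pos)
  refine ((integrable_indicator_iff measurableSet_ball).2 h1 |>.add h2).mono' ?_
    (ae_of_all _ fun z => ?_)
  · exact (((measurable_norm.pow_const 2).min measurable_const).mul
      (measurable_norm.pow_const _)).aestronglyMeasurable
  · rw [Real.norm_eq_abs, abs_of_nonneg (by positivity)]
    simp only [Pi.add_apply]
    by_cases hz : ‖z‖ < 1
    · rw [indicator_of_mem (by simpa using hz)]
      by_cases hz0 : z = 0
      · subst hz0
        have := fiK_nonneg (d := d) (e := e) (ε := 1) 0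
        simp
        positivity
      · have hz' : 0 < ‖z‖ := norm_pos_iff.2 hz0
        have : ‖z‖ ^ (-(e - 2)) = ‖z‖ ^ 2 * ‖z‖ ^ (-e) := by
          rw [← Real.rpow_natCast, ← Real.rpow_add hz']; congr 1; push_cast; ring
        rw [this]
        have h3 := fiK_nonneg (d := d) (e := e) (ε := 1) z
        have h4 : min (‖z‖ ^ 2) 1 * ‖z‖ ^ (-e) ≤ ‖z‖ ^ 2 * ‖z‖ ^ (-e) := by
          gcongr; exact min_le_left _ _
        linarith
    · rw [indicator_of_notMem (by simpa using hz)]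
      push Not at hz
      have h4 : min (‖z‖ ^ 2) 1 * ‖z‖ ^ (-e) ≤ 1 * ‖z‖ ^ (-e) := by
          gcongr; exact min_le_right _ _
      simp only [fiK, hz, if_true]
      linarith

/-- second difference bound -/
theorem fi_second_diff {E : Type*} [NormedAddCommGroup E] [NormedSpace ℝ E]
    {ψ : E → ℝ} (h : ContDiff ℝ (⊤ : ℕ∞) ψ) (hc : HasCompactSupport ψ) :
    ∃ M : ℝ, 0 ≤ M ∧ ∀ x z, |2 * ψ x - ψ (x + z) - ψ (x - z)| ≤ M * ‖z‖ ^ 2 := by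
  have hdiff : Differentiable ℝ ψ := h.differentiable (by simp)
  have h1 : ContDiff ℝ 1 (fderiv ℝ ψ) :=
    ContDiff.fderiv_right (n := 2) (contDiff_infty.1 h 2) one_add_one_eq_two.le
  obtain ⟨C, hC⟩ := h1.lipschitzWith_of_hasCompactSupport (hc.fderiv ℝ) (by simp)
  have key : ∀ x z, |ψ (x + z) - ψ x - fderiv ℝ ψ x z| ≤ C * ‖z‖ * ‖z‖ := by
    intro x z
    have := (convex_segment x (x + z)).norm_image_sub_le_of_norm_hasFDerivWithin_le'
      (f := ψ) (f' := fderiv ℝ ψ) (φ := fderiv ℝ ψ x) (C := C * ‖z‖)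
      (fun y _ => (hdiff y).hasFDerivAt.hasFDerivWithinAt) ?_
      (left_mem_segment ℝ x (x + z)) (right_mem_segment ℝ x (x + z))
    · simpa using this
    · intro y hy
      have h2 := hC.norm_sub_le y x
      refine h2.trans ?_
      gcongr
      rw [segment_eq_image'] at hy
      obtain ⟨t, ht, rfl⟩ := hy
      simp only [add_sub_cancel_left, norm_smul, Real.norm_eq_abs, abs_of_nonneg ht.1]
      nlinarith [norm_nonneg z, ht.2]
  refine ⟨2 * C, by positivity, fun x z => ?_⟩
  have h1 := key x z
  have h2 := key x (-z)
  rw [norm_neg, map_neg, ← sub_eq_add_neg] at h2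
  rw [abs_le] at *
  constructor <;> nlinarith [h1.1, h1.2, h2.1, h2.2]

open MeasureTheory Filter Metric Set
open scoped Topology ENNReal

theorem fi_bdd_mul_K {d : ℕ} {e ε : ℝ} (he : (d:ℝ) < e) (hε : 0 < ε) {g : Ed d → ℝ} {A : ℝ}
    (hg : AEStronglyMeasurable g volume) (hA : ∀ x, |g x| ≤ A) :
    Integrable (fun z => g z * fiK d e ε z) := by
  refine ((fiK_integrable he hε).const_mul A).mono' (hg.mul fiK_meas.aestronglyMeasurable)
    (ae_of_all _ fun z => ?_)
  rw [Real.norm_eq_abs, abs_mul, abs_of_nonneg (fiK_nonneg z)]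
  exact mul_le_mul_of_nonneg_right (hA z) (fiK_nonneg z)

theorem fiL_eq_second {d : ℕ} {e ε : ℝ} (he : (d:ℝ) < e) (hε : 0 < ε) {ψ : Ed d → ℝ} {A : ℝ}
    (hm : Measurable ψ) (hA : ∀ x, |ψ x| ≤ A) (x : Ed d) :
    fiL d e ε ψ x = 1 / 2 * ∫ z, (2 * ψ x - ψ (x + z) - ψ (x - z)) * fiK d e ε z := by
  have h1 : fiL d e ε ψ x = ∫ z, (ψ x - ψ (x - z)) * fiK d e ε z := by
    unfold fiL
    rw [← integral_sub_left_eq_self _ volume x]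
    simp
  have h2 : fiL d e ε ψ x = ∫ z, (ψ x - ψ (x + z)) * fiK d e ε z := by
    rw [h1, ← integral_neg_eq_self]
    simp [fiK_neg]
  have hb : ∀ y, |ψ x - ψ y| ≤ 2 * A := fun y => by
    have := abs_sub (ψ x) (ψ y)
    linarith [hA x, hA y]
  have i1 : Integrable (fun z => (ψ x - ψ (x - z)) * fiK d e ε z) :=
    fi_bdd_mul_K he hε (Measurable.aestronglyMeasurable (by fun_prop)) (fun z => hb _)
  have i2 : Integrable (fun z => (ψ x - ψ (x + z)) * fiK d e ε z) :=
    fi_bdd_mul_K he hε (Measurable.aestronglyMeasurable (by fun_prop)) (fun z => hb _)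
  have h3 : ∫ z, (2 * ψ x - ψ (x + z) - ψ (x - z)) * fiK d e ε z = fiL d e ε ψ x + fiL d e ε ψ x := by
    nth_rw 1 [h2]
    rw [h1, ← integral_add i2 i1]
    congr 1; ext z; ring
  rw [h3]; ring

theorem fi_sd_bound {d : ℕ} {e A M : ℝ} {ψ : Ed d → ℝ} (hA : ∀ x, |ψ x| ≤ A) {x : Ed d}
    (hM : ∀ z, |2 * ψ x - ψ (x + z) - ψ (x - z)| ≤ M * ‖z‖ ^ 2) (hM0 : 0 ≤ M) (z : Ed d) :
    |2 * ψ x - ψ (x + z) - ψ (x - z)| * ‖z‖ ^ (-e)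
      ≤ (M + 4 * A) * (min (‖z‖ ^ 2) 1 * ‖z‖ ^ (-e)) := by
  rw [← mul_assoc]
  gcongr
  have hA0 : 0 ≤ A := (abs_nonneg _).trans (hA 0)
  have h4 : |2 * ψ x - ψ (x + z) - ψ (x - z)| ≤ 4 * A := by
    have h1 := hA x; have h2 := hA (x+z); have h3 := hA (x-z)
    rw [abs_le] at *
    constructor <;> linarith
  rcases le_total (‖z‖ ^ 2) 1 with h | h
  · rw [min_eq_left h]
    have := hM z
    nlinarith [sq_nonneg ‖z‖]
  · rw [min_eq_right h]; linarith

theorem fiL_bound {d : ℕ} (hd : 1 ≤ d) {e ε : ℝ} (he : (d:ℝ) < e) (he2 : e < d + 2) (hε : 0 < ε)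
    {A M : ℝ} {ψ : Ed d → ℝ} (hm : Measurable ψ) (hA : ∀ x, |ψ x| ≤ A) {x : Ed d}
    (hM : ∀ z, |2 * ψ x - ψ (x + z) - ψ (x - z)| ≤ M * ‖z‖ ^ 2) (hM0 : 0 ≤ M) :
    |fiL d e ε ψ x| ≤ (M + 4 * A) * ∫ z : Ed d, min (‖z‖ ^ 2) 1 * ‖z‖ ^ (-e) := by
  have hA0 : 0 ≤ A := (abs_nonneg _).trans (hA 0)
  rw [fiL_eq_second he hε hm hA, abs_mul]
  have hi := (fi_min_integrable hd he he2).const_mul (M + 4 * A)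
  have h1 : |∫ z, (2 * ψ x - ψ (x + z) - ψ (x - z)) * fiK d e ε z| ≤
      ∫ z : Ed d, (M + 4 * A) * (min (‖z‖ ^ 2) 1 * ‖z‖ ^ (-e)) := by
    rw [← Real.norm_eq_abs]
    refine norm_integral_le_of_norm_le hi (ae_of_all _ fun z => ?_)
    rw [Real.norm_eq_abs, abs_mul, abs_of_nonneg (fiK_nonneg z)]
    refine le_trans ?_ (fi_sd_bound hA hM hM0 z)
    gcongr
    exact fiK_le z
  rw [integral_const_mul] at h1
  have h2 : 0 ≤ ∫ z : Ed d, min (‖z‖ ^ 2) 1 * ‖z‖ ^ (-e) := integral_nonneg fun z => by positivity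
  rw [abs_of_pos (by norm_num : (0:ℝ) < 1/2)]
  have h3 : 0 ≤ |∫ z, (2 * ψ x - ψ (x + z) - ψ (x - z)) * fiK d e ε z| := abs_nonneg _
  linarith

theorem fiL_tendsto {d : ℕ} (hd : 1 ≤ d) {e : ℝ} (he : (d:ℝ) < e) (he2 : e < d + 2)
    {A M : ℝ} {ψ : Ed d → ℝ} (hm : Measurable ψ) (hA : ∀ x, |ψ x| ≤ A) {x : Ed d}
    (hM : ∀ z, |2 * ψ x - ψ (x + z) - ψ (x - z)| ≤ M * ‖z‖ ^ 2) (hM0 : 0 ≤ M) :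
    Tendsto (fun ε => fiL d e ε ψ x) (𝓝[>] 0) (𝓝 (fiLL d e ψ x)) := by
  have he0 : 0 < e := (Nat.cast_nonneg d).trans_lt he
  have hi := (fi_min_integrable hd he he2).const_mul (M + 4 * A)
  have h : Tendsto (fun ε => ∫ z, (2 * ψ x - ψ (x + z) - ψ (x - z)) * fiK d e ε z) (𝓝[>] 0)
      (𝓝 (∫ z, (2 * ψ x - ψ (x + z) - ψ (x - z)) * ‖z‖ ^ (-e))) := by
    refine tendsto_integral_filter_of_dominated_convergence _ ?_ ?_ hi ?_
    · refine Eventually.of_forall fun ε => ?_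
      exact (Measurable.mul (by fun_prop) fiK_meas).aestronglyMeasurable
    · refine Eventually.of_forall fun ε => ae_of_all _ fun z => ?_
      rw [Real.norm_eq_abs, abs_mul, abs_of_nonneg (fiK_nonneg z)]
      refine le_trans ?_ (fi_sd_bound hA hM hM0 z)
      gcongr
      exact fiK_le z
    · exact ae_of_all _ fun z => (fiK_tendsto he0 z).const_mul _
  refine (h.const_mul (1/2)).congr' ?_
  filter_upwards [self_mem_nhdsWithin] with ε hε
  rw [fiL_eq_second he hε hm hA]

theorem fi_test_bdd {d : ℕ} {ψ : Ed d → ℝ} (h : ContDiff ℝ (⊤ : ℕ∞) ψ) (hc : HasCompactSupport ψ) :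
    ∃ A, ∀ x, |ψ x| ≤ A := by
  obtain ⟨A, hA⟩ := hc.exists_bound_of_continuous h.continuous
  exact ⟨A, fun x => by simpa using hA x⟩

theorem fiL_test_tendsto {d : ℕ} (hd : 1 ≤ d) {e : ℝ} (he : (d:ℝ) < e) (he2 : e < d + 2)
    {ψ : Ed d → ℝ} (h : ContDiff ℝ (⊤ : ℕ∞) ψ) (hc : HasCompactSupport ψ) (x : Ed d) :
    Tendsto (fun ε => fiL d e ε ψ x) (𝓝[>] 0) (𝓝 (fiLL d e ψ x)) := by
  obtain ⟨A, hA⟩ := fi_test_bdd h hc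
  obtain ⟨M, hM0, hM⟩ := fi_second_diff h hc
  exact fiL_tendsto hd he he2 h.continuous.measurable hA (hM x) hM0

/-- bound away from the support -/
theorem fiL_far {d : ℕ} {e ε A r : ℝ} (he : 0 ≤ e) (hr : 0 < r) {ψ : Ed d → ℝ}
    (hi : Integrable ψ) (hs : ∀ y, r < ‖y‖ → ψ y = 0) {x : Ed d} (hx : 2 * r ≤ ‖x‖)
    (hA : ∫ y, |ψ y| ≤ A) :
    |fiL d e ε ψ x| ≤ (‖x‖ / 2) ^ (-e) * A := by
  unfold fiL
  have hx0 : 0 < ‖x‖ := by linarith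
  have hψx : ψ x = 0 := hs x (by linarith)
  rw [← Real.norm_eq_abs]
  have h1 : ‖∫ y, (ψ x - ψ y) * fiK d e ε (x - y)‖ ≤ ∫ y, (‖x‖ / 2) ^ (-e) * |ψ y| := by
    refine norm_integral_le_of_norm_le (hi.abs.const_mul _) (ae_of_all _ fun y => ?_)
    rw [hψx, Real.norm_eq_abs, abs_mul, zero_sub, abs_neg, abs_of_nonneg (fiK_nonneg _), mul_comm]
    by_cases hy : r < ‖y‖
    · rw [hs y hy]; simp
    · push Not at hy
      refine mul_le_mul_of_nonneg_right ((fiK_le _).trans ?_) (abs_nonneg _)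
      refine Real.rpow_le_rpow_of_nonpos (by positivity) ?_ (by linarith)
      have := norm_sub_norm_le x y
      linarith
  refine h1.trans ?_
  rw [integral_const_mul]
  gcongr

theorem fi_far_J {d : ℕ} {e : ℝ} (he : 0 ≤ e) {x : Ed d} (hx : 1 ≤ ‖x‖) :
    (‖x‖ / 2) ^ (-e) ≤ 4 ^ e * fiJ d e x := by
  unfold fiJ
  have h0 : (0:ℝ) < ‖x‖ / 2 := by linarith
  have : (1 + ‖x‖) ^ e ≤ 4 ^ e * (‖x‖ / 2) ^ e := by
    rw [← Real.mul_rpow (by norm_num) h0.le]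
    exact Real.rpow_le_rpow (by positivity) (by linarith) he
  rw [Real.rpow_neg h0.le, Real.rpow_neg (by positivity), ← div_eq_mul_inv,
      inv_le_iff_one_le_mul₀ (by positivity), ← mul_div_right_comm, one_le_div (by positivity)]
  exact this

theorem fi_near_J {d : ℕ} {e r : ℝ} (he : 0 ≤ e) (hr : 0 ≤ r) {x : Ed d} (hx : ‖x‖ ≤ r) :
    1 ≤ (1 + r) ^ e * fiJ d e x := by
  unfold fiJ
  have : (1 + ‖x‖) ^ e ≤ (1 + r) ^ e := Real.rpow_le_rpow (by positivity) (by linarith) he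
  rw [Real.rpow_neg (by positivity), ← div_eq_mul_inv, one_le_div (by positivity)]
  exact this

theorem fiL_test_bound {d : ℕ} (hd : 1 ≤ d) {e : ℝ} (he : (d:ℝ) < e) (he2 : e < d + 2)
    {ψ : Ed d → ℝ} (h : ContDiff ℝ (⊤ : ℕ∞) ψ) (hc : HasCompactSupport ψ) :
    ∃ C, 0 ≤ C ∧ ∀ ε > 0, ∀ x, |fiL d e ε ψ x| ≤ C * fiJ d e x := by
  have he0 : 0 ≤ e := (Nat.cast_nonneg d).trans he.le
  obtain ⟨A, hA⟩ := fi_test_bdd h hc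
  have hA0 : 0 ≤ A := (abs_nonneg _).trans (hA 0)
  obtain ⟨M, hM0, hM⟩ := fi_second_diff h hc
  obtain ⟨r, hr⟩ := hc.isCompact.isBounded.subset_closedBall (0 : Ed d)
  set r' := max r 1
  have hr1 : 1 ≤ r' := le_max_right _ _
  have hs : ∀ y, r' < ‖y‖ → ψ y = 0 := by
    intro y hy
    by_contra hne
    have := hr (subset_tsupport _ hne)
    rw [mem_closedBall, dist_zero_right] at this
    have := le_max_left r 1
    linarith
  obtain ⟨I, hI⟩ : ∃ I, I = ∫ z : Ed d, min (‖z‖ ^ 2) 1 * ‖z‖ ^ (-e) := ⟨_, rfl⟩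
  have hI0 : 0 ≤ I := by
    rw [hI]; exact integral_nonneg fun z => by positivity
  obtain ⟨r', hr1, hs⟩ : ∃ r' : ℝ, 1 ≤ r' ∧ ∀ y, r' < ‖y‖ → ψ y = 0 := ⟨r', hr1, hs⟩
  have hB0 : 0 ≤ ∫ y, |ψ y| := integral_nonneg fun z => by positivity
  refine ⟨(M + 4 * A) * I * (1 + 2 * r') ^ e + 4 ^ e * ∫ y, |ψ y|, by positivity,
    fun ε hε x => ?_⟩
  have hJ := (fiJ_pos (d := d) (e := e) x).le
  rcases le_total ‖x‖ (2 * r') with hx | hx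
  · have h1 := fiL_bound hd he he2 hε h.continuous.measurable hA (hM x) hM0
    have h2 := fi_near_J he0 (by positivity) hx
    rw [← hI] at h1
    have h3 : (M + 4 * A) * I * 1 ≤ (M + 4 * A) * I * ((1 + 2 * r') ^ e * fiJ d e x) :=
      mul_le_mul_of_nonneg_left h2 (by positivity)
    have h4 : 0 ≤ 4 ^ e * (∫ y, |ψ y|) * fiJ d e x := by positivity
    rw [add_mul]
    linarith
  · have h1 := fiL_far (ε := ε) he0 (by linarith) (h.continuous.integrable_of_hasCompactSupport hc) hs hx le_rfl
    have h2 := fi_far_J he0 (x := x) (by linarith)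
    calc |fiL d e ε ψ x| ≤ (‖x‖ / 2) ^ (-e) * ∫ y, |ψ y| := h1
      _ ≤ 4 ^ e * fiJ d e x * ∫ y, |ψ y| := by gcongr
      _ ≤ _ := by
        have : 0 ≤ (M + 4 * A) * I * (1 + 2 * r') ^ e * fiJ d e x := by positivity
        rw [add_mul]
        linarith

theorem fi_fracLap_eq {d : ℕ} (hd : 1 ≤ d) {s Cds : ℝ} (hs : s ∈ Ioo (0:ℝ) 1)
    {ψ : Ed d → ℝ} (h : ContDiff ℝ (⊤ : ℕ∞) ψ) (hc : HasCompactSupport ψ) (x : Ed d) :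
    fracLap d s Cds ψ x = Cds * fiLL d ((d:ℝ) + 2 * s) ψ x := by
  unfold fracLap
  have h1 := fiL_test_tendsto (e := (d:ℝ) + 2 * s) hd (by linarith [hs.1]) (by linarith [hs.2]) h hc x
  have h2 : (fracLapTrunc d s ψ x) = fun ε => fiL d ((d:ℝ) + 2 * s) ε ψ x := by
    ext ε; exact fi_trunc_eq ψ x ε
  rw [h2, h1.limUnder_eq]

theorem fiLL_test_bound {d : ℕ} (hd : 1 ≤ d) {e : ℝ} (he : (d:ℝ) < e) (he2 : e < d + 2)
    {ψ : Ed d → ℝ} (h : ContDiff ℝ (⊤ : ℕ∞) ψ) (hc : HasCompactSupport ψ) :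
    ∃ C, 0 ≤ C ∧ ∀ x, |fiLL d e ψ x| ≤ C * fiJ d e x := by
  obtain ⟨C, hC0, hC⟩ := fiL_test_bound hd he he2 h hc
  refine ⟨C, hC0, fun x => ?_⟩
  refine le_of_tendsto (fiL_test_tendsto hd he he2 h hc x).abs ?_
  filter_upwards [self_mem_nhdsWithin] with ε hε
  exact hC ε hε x

theorem fiLL_shift {d : ℕ} {e : ℝ} (ψ : Ed d → ℝ) (x z : Ed d) :
    fiLL d e (fun y => ψ (y + z)) x = fiLL d e ψ (x + z) := by
  unfold fiLL
  congr 2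
  ext w
  dsimp only
  rw [add_right_comm x w z, show x - w + z = x + z - w by abel]

theorem fiLL_scale {d : ℕ} {e : ℝ} (ψ : Ed d → ℝ) (x : Ed d) {R : ℝ} (hR : 0 < R) :
    fiLL d e (fun y => ψ (R⁻¹ • y)) x = R ^ ((d:ℝ) - e) * fiLL d e ψ (R⁻¹ • x) := by
  unfold fiLL
  have := Measure.integral_comp_inv_smul (volume : Measure (Ed d))
    (fun z => (2 * ψ (R⁻¹ • x) - ψ (R⁻¹ • x + z) - ψ (R⁻¹ • x - z)) * ‖z‖ ^ (-e)) R
  simp only [finrank_euclideanSpace, Fintype.card_fin, smul_eq_mul] at this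
  rw [abs_of_pos (by positivity)] at this
  have h2 : ∫ z, (2 * ψ (R⁻¹ • x) - ψ (R⁻¹ • (x + z)) - ψ (R⁻¹ • (x - z))) * ‖z‖ ^ (-e) =
      R ^ (-e) * ∫ z, (2 * ψ (R⁻¹ • x) - ψ (R⁻¹ • x + R⁻¹ • z) - ψ (R⁻¹ • x - R⁻¹ • z)) *
        ‖R⁻¹ • z‖ ^ (-e) := by
    rw [← integral_const_mul]
    congr 1
    ext z
    rw [smul_add, smul_sub, norm_smul, norm_inv, Real.norm_eq_abs, abs_of_pos hR,
      Real.mul_rpow (by positivity) (by positivity), Real.inv_rpow hR.le, Real.rpow_neg hR.le e,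
      inv_inv]
    have : R ^ e ≠ 0 := by positivity
    field_simp
  dsimp only
  rw [h2, this, Real.rpow_sub hR, Real.rpow_natCast, Real.rpow_neg hR.le]
  ring

theorem fiLL_meas {d : ℕ} (hd : 1 ≤ d) {e : ℝ} (he : (d:ℝ) < e) (he2 : e < d + 2)
    {ψ : Ed d → ℝ} (h : ContDiff ℝ (⊤ : ℕ∞) ψ) (hc : HasCompactSupport ψ) :
    AEStronglyMeasurable (fiLL d e ψ) volume := by
  unfold fiLL
  refine AEStronglyMeasurable.const_mul ?_ _
  have hm := h.continuous
  refine (StronglyMeasurable.integral_prod_right' (f := fun q : Ed d × Ed d =>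
    (2 * ψ q.1 - ψ (q.1 + q.2) - ψ (q.1 - q.2)) * ‖q.2‖ ^ (-e)) ?_).aestronglyMeasurable
  refine Measurable.stronglyMeasurable ?_
  refine Measurable.mul (by fun_prop) ?_
  exact measurable_snd.norm.pow_const _

open MeasureTheory Filter Metric Set
open scoped Topology ENNReal

theorem fi_inv_cv {d : ℕ} (hd : 1 ≤ d) {R : ℝ} (hR : 0 < R) (g : Ed d → ℝ) :
    ∫ y, g y = ∫ y, (R / ‖y‖) ^ (2 * d) * g (EuclideanGeometry.inversion (0 : Ed d) R y) := by
  have : Nonempty (Fin d) := ⟨⟨0, hd⟩⟩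
  have hnull : (volume : Measure (Ed d)) {0} = 0 := measure_singleton _
  have hae : ∀ f : Ed d → ℝ, ∫ y in ({0}ᶜ : Set (Ed d)), f y = ∫ y, f y := by
    intro f
    apply setIntegral_eq_integral_of_ae_compl_eq_zero
    have : ∀ᵐ x : Ed d, x ∈ ({0}ᶜ : Set (Ed d)) := compl_mem_ae_iff.2 hnull
    filter_upwards [this] with x hx hx'
    exact absurd hx hx'
  have h := integral_image_eq_integral_abs_det_fderiv_smul (volume : Measure (Ed d))
    (s := ({0}ᶜ : Set (Ed d))) (f := EuclideanGeometry.inversion (0 : Ed d) R)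
    (f' := fun x => ((R / dist x 0) ^ 2 • (((ℝ ∙ (x - 0))ᗮ.reflection : Ed d ≃ₗᵢ[ℝ] Ed d) : Ed d →L[ℝ] Ed d)))
    (measurableSet_singleton 0).compl
    (fun x hx => (EuclideanGeometry.hasFDerivAt_inversion hx).hasFDerivWithinAt)
    ((EuclideanGeometry.inversion_injective _ hR.ne').injOn) g
  have him : EuclideanGeometry.inversion (0 : Ed d) R '' {0}ᶜ = {0}ᶜ := by
    rw [image_compl_eq (EuclideanGeometry.inversion_bijective _ hR.ne')]
    simp
  rw [him, hae, hae] at h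
  rw [h]
  congr 1
  ext y
  have hdet : |(((R / dist y 0) ^ 2 • (((ℝ ∙ (y - 0))ᗮ.reflection : Ed d ≃ₗᵢ[ℝ] Ed d) : Ed d →L[ℝ] Ed d))).det|
      = (R / ‖y‖) ^ (2 * d) := by
    unfold ContinuousLinearMap.det
    rw [ContinuousLinearMap.toLinearMap_smul, LinearMap.det_smul, abs_mul, finrank_euclideanSpace,
      Fintype.card_fin, dist_zero_right, pow_mul]
    have h1 : |LinearMap.det ((((ℝ ∙ (y - 0))ᗮ.reflection : Ed d ≃ₗᵢ[ℝ] Ed d) : Ed d →L[ℝ] Ed d) : Ed d →ₗ[ℝ] Ed d)| = 1 := by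
      rw [← abs_one, ← sq_eq_sq_iff_abs_eq_abs, sq, ← LinearMap.det_comp]
      have : ((((ℝ ∙ (y - 0))ᗮ.reflection : Ed d ≃ₗᵢ[ℝ] Ed d) : Ed d →L[ℝ] Ed d) : Ed d →ₗ[ℝ] Ed d) ∘ₗ
        ((((ℝ ∙ (y - 0))ᗮ.reflection : Ed d ≃ₗᵢ[ℝ] Ed d) : Ed d →L[ℝ] Ed d) : Ed d →ₗ[ℝ] Ed d) = LinearMap.id := by
        ext1 z
        simp [Submodule.reflection_reflection]
      rw [this, LinearMap.det_id]; simp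
    rw [h1, mul_one, abs_of_nonneg (by positivity)]
  rw [hdet, smul_eq_mul]

theorem fi_riesz_int {d : ℕ} (hd : 1 ≤ d) {a e ε : ℝ} (ha0 : 0 ≤ a) (ha : a < d) (he : (d:ℝ) < e)
    (hε : 0 < ε) (x : Ed d) :
    Integrable (fun y : Ed d => ‖y‖ ^ (-a) * fiK d e ε (x - y)) := by
  have he0 : 0 ≤ e := (Nat.cast_nonneg d).trans he.le
  have h1 := (integrable_indicator_iff measurableSet_ball).2 (fi_ball_integrable hd ha 1)
  have h2 := (fiK_integrable (d := d) he hε).comp_sub_left x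
  refine ((h1.const_mul (ε ^ (-e))).add h2).mono' ?_ (ae_of_all _ fun y => ?_)
  · exact ((measurable_norm.pow_const _).mul
      (fiK_meas.comp (measurable_const.sub measurable_id))).aestronglyMeasurable
  · rw [Real.norm_eq_abs, abs_of_nonneg (mul_nonneg (by positivity) (fiK_nonneg _))]
    simp only [Pi.add_apply]
    by_cases hy : y ∈ ball (0 : Ed d) 1
    · rw [indicator_of_mem hy]
      have hk : fiK d e ε (x - y) ≤ ε ^ (-e) := by
        unfold fiK; split_ifs with h
        · exact Real.rpow_le_rpow_of_nonpos hε h (by linarith)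
        · positivity
      have := fiK_nonneg (d := d) (e := e) (ε := ε) (x - y)
      have h3 : ‖y‖ ^ (-a) * fiK d e ε (x - y) ≤ ‖y‖ ^ (-a) * ε ^ (-e) := by gcongr
      linarith
    · rw [indicator_of_notMem hy]
      rw [mem_ball, dist_zero_right, not_lt] at hy
      have : ‖y‖ ^ (-a) ≤ 1 := Real.rpow_le_one_of_one_le_of_nonpos hy (by linarith)
      have h0 := fiK_nonneg (d := d) (e := e) (ε := ε) (x - y)
      nlinarith

theorem fi_kelvin {d : ℕ} (hd : 1 ≤ d) {a e ε : ℝ} (hae : a + e = 2 * d)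
    {x : Ed d} (hx : x ≠ 0) :
    ∫ y, (‖x‖ ^ (-a) - ‖y‖ ^ (-a)) * fiK d e ε (x - y) =
      - ∫ y, (‖x‖ ^ (-a) - ‖y‖ ^ (-a)) *
        (if ε * ‖y‖ ≤ ‖x‖ * ‖x - y‖ then ‖x - y‖ ^ (-e) else 0) := by
  have : Nonempty (Fin d) := ⟨⟨0, hd⟩⟩
  have hX : 0 < ‖x‖ := norm_pos_iff.2 hx
  rw [fi_inv_cv hd hX, ← integral_neg]
  have hnull : (volume : Measure (Ed d)) {0} = 0 := measure_singleton _
  have hae0 : ∀ᵐ y : Ed d, y ∈ ({0}ᶜ : Set (Ed d)) := compl_mem_ae_iff.2 hnull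
  refine integral_congr_ae ?_
  filter_upwards [hae0] with y hy
  have hy0 : y ≠ 0 := hy
  have hY : 0 < ‖y‖ := norm_pos_iff.2 hy0
  have hn : ‖EuclideanGeometry.inversion (0 : Ed d) ‖x‖ y‖ = ‖x‖ ^ 2 / ‖y‖ := by
    simpa using EuclideanGeometry.dist_inversion_center (0 : Ed d) y ‖x‖
  have hdd : ‖x - EuclideanGeometry.inversion (0 : Ed d) ‖x‖ y‖ = ‖x‖ * ‖x - y‖ / ‖y‖ := by
    have h := EuclideanGeometry.dist_inversion_inversion hx hy0 ‖x‖
    have h2 : EuclideanGeometry.inversion (0 : Ed d) ‖x‖ x = x := by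
      simpa using EuclideanGeometry.inversion_dist_center (0 : Ed d) x
    rw [h2, dist_zero_right, dist_zero_right, dist_eq_norm, dist_eq_norm] at h
    rw [h]; field_simp
  unfold fiK
  rw [hn, hdd]
  by_cases hc : ε * ‖y‖ ≤ ‖x‖ * ‖x - y‖
  · rw [if_pos hc, if_pos ((le_div_iff₀ hY).2 hc)]
    rw [Real.div_rpow (by positivity) hY.le, Real.div_rpow (by positivity) hY.le,
      Real.mul_rpow hX.le (norm_nonneg _), ← Real.rpow_natCast ‖x‖ 2, ← Real.rpow_mul hX.le,
      ← Real.rpow_natCast _ (2*d), Real.div_rpow hX.le hY.le]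
    have he : e = 2 * d - a := by linarith
    have e1 : ‖x‖ ^ (((2:ℕ):ℝ) * -a) = ‖x‖ ^ (-a) * ‖x‖ ^ (-a) := by
      rw [← Real.rpow_add hX]; congr 1; push_cast; ring
    have e2 : ∀ t : ℝ, 0 < t → t ^ (-e) = t ^ a / t ^ (((2 * d : ℕ):ℝ)) := by
      intro t ht
      rw [← Real.rpow_sub ht]; congr 1; push_cast; rw [he]; ring
    rw [e1, e2 _ hX, e2 _ hY, Real.rpow_neg hX.le, Real.rpow_neg hY.le]
    have := Real.rpow_pos_of_pos hX a
    have := Real.rpow_pos_of_pos hY a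
    have := Real.rpow_pos_of_pos hX (((2 * d : ℕ):ℝ))
    have := Real.rpow_pos_of_pos hY (((2 * d : ℕ):ℝ))
    field_simp
    ring
  · rw [if_neg hc, if_neg (fun h => hc ((le_div_iff₀ hY).1 h))]
    simp

theorem fi_shell_vol {d : ℕ} {x : Ed d} {ε η : ℝ} (hε : 0 < ε) (hη : 0 < η) (hη1 : η ≤ 1 / 2) :
    volume.real (closedBall x (ε * (1 + η)) \ ball x (ε * (1 - η)) : Set (Ed d))
      ≤ volume.real (ball (0 : Ed d) 1) * ε ^ d * (2 * η * d * 2 ^ (d - 1)) := by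
  have h1 : 0 ≤ ε * (1 - η) := mul_nonneg hε.le (by linarith)
  rw [measureReal_sdiff (ball_subset_closedBall.trans (closedBall_subset_closedBall (by nlinarith)))
    measurableSet_ball measure_closedBall_lt_top.ne]
  have hbv : volume.real (ball x (ε * (1 - η)) : Set (Ed d)) =
      (ε * (1 - η)) ^ d * volume.real (ball (0 : Ed d) 1) := by
    rw [measureReal_def, Measure.addHaar_ball_of_pos volume x (mul_pos hε (by linarith)),
      ENNReal.toReal_mul, ENNReal.toReal_ofReal (by positivity), finrank_euclideanSpace,
      Fintype.card_fin, measureReal_def]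
  rw [Measure.addHaar_real_closedBall volume x (by positivity), hbv]
  rw [finrank_euclideanSpace, Fintype.card_fin, mul_pow, mul_pow]
  have h2 : (1 + η) ^ d - (1 - η) ^ d ≤ 2 * η * d * 2 ^ (d - 1) := by
    refine (le_abs_self _).trans ((abs_pow_sub_pow_le _ _ _).trans ?_)
    rw [show 1 + η - (1 - η) = 2 * η by ring, abs_of_pos (by positivity : 0 < 2 * η),
      abs_of_pos (by positivity : 0 < 1 + η), abs_of_pos (by linarith : 0 < 1 - η)]
    gcongr
    exact max_le (by linarith) (by linarith)
  have h3 : 0 ≤ volume.real (ball (0 : Ed d) 1) * ε ^ d := by positivity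
  nlinarith

theorem fi_riesz_tendsto {d : ℕ} (hd : 1 ≤ d) {a e : ℝ} (ha0 : 0 ≤ a) (ha : a < d)
    (he : (d:ℝ) < e) (he2 : e < d + 2) (hae : a + e = 2 * d) {x : Ed d} (hx : x ≠ 0) :
    Tendsto (fun ε => ∫ y, (‖x‖ ^ (-a) - ‖y‖ ^ (-a)) * fiK d e ε (x - y)) (𝓝[>] 0) (𝓝 0) := by
  have he0 : 0 ≤ e := (Nat.cast_nonneg d).trans he.le
  have hX : 0 < ‖x‖ := norm_pos_iff.2 hx
  -- Lipschitz near x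
  obtain ⟨C, δ, hC0, hδ, hC⟩ : ∃ C δ : ℝ, 0 ≤ C ∧ 0 < δ ∧ ∀ y : Ed d, ‖x - y‖ < δ →
      |‖x‖ ^ (-a) - ‖y‖ ^ (-a)| ≤ C * ‖x - y‖ := by
    have hdf : DifferentiableAt ℝ (fun y : Ed d => ‖y‖ ^ (-a)) x :=
      ((contDiffAt_norm ℝ hx (n := 1)).differentiableAt (by simp)).rpow_const (Or.inl hX.ne')
    obtain ⟨C, hC0, hC⟩ := hdf.hasFDerivAt.isBigO_sub.exists_nonneg
    have := hC.bound
    rw [Metric.eventually_nhds_iff] at this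
    obtain ⟨δ, hδ, h⟩ := this
    refine ⟨C, δ, hC0, hδ, fun y hy => ?_⟩
    have := h (y := y) (by rw [dist_comm, dist_eq_norm]; exact hy)
    rw [Real.norm_eq_abs, abs_sub_comm, norm_sub_rev] at this
    exact this
  obtain ⟨K, hK⟩ : ∃ K, K = volume.real (ball (0 : Ed d) 1) * d * 2 ^ (d - 1) := ⟨_, rfl⟩
  have key : ∀ᶠ ε in 𝓝[>] (0:ℝ), ‖∫ y, (‖x‖ ^ (-a) - ‖y‖ ^ (-a)) * fiK d e ε (x - y)‖ ≤
      (C * 2 * 2 ^ e * K * (4 / ‖x‖)) * ε ^ (d + 2 - e) := by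
    have hsm : ∀ᶠ ε in 𝓝[>] (0:ℝ), ε < min (δ / 2) (‖x‖ / 4) :=
      mem_nhdsWithin_of_mem_nhds (Iio_mem_nhds (by positivity))
    filter_upwards [self_mem_nhdsWithin, hsm] with ε hε hε2
    have hε0 : 0 < ε := hε
    have hεδ : 2 * ε < δ := by have := hε2.trans_le (min_le_left _ _); linarith
    have hεx : 4 * ε < ‖x‖ := by have := hε2.trans_le (min_le_right _ _); linarith
    obtain ⟨η, hη⟩ : ∃ η, η = 2 * ε / ‖x‖ := ⟨_, rfl⟩
    have hη0 : 0 < η := by rw [hη]; positivity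
    have hηx : η * ‖x‖ = 2 * ε := by rw [hη]; field_simp
    have hη1 : η ≤ 1 / 2 := by rw [hη, div_le_iff₀ hX]; linarith
    set S : Set (Ed d) := closedBall x (ε * (1 + η)) \ ball x (ε * (1 - η)) with hS
    set g1 : Ed d → ℝ := fun y => (‖x‖ ^ (-a) - ‖y‖ ^ (-a)) * fiK d e ε (x - y) with hg1
    set g2 : Ed d → ℝ := fun y => (‖x‖ ^ (-a) - ‖y‖ ^ (-a)) *
        (if ε * ‖y‖ ≤ ‖x‖ * ‖x - y‖ then ‖x - y‖ ^ (-e) else 0) with hg2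
    have hSm : MeasurableSet S := measurableSet_closedBall.diff measurableSet_ball
    have hSfin : volume S ≠ ∞ := by
      refine ne_top_of_le_ne_top ?_ (measure_mono (s := S) (t := closedBall x (ε * (1 + η))) sdiff_subset)
      exact measure_closedBall_lt_top.ne
    obtain ⟨Q, hQ⟩ : ∃ Q, Q = C * (2 * ε) * (ε / 2) ^ (-e) := ⟨_, rfl⟩
    have hQ0 : 0 ≤ Q := by rw [hQ]; positivity
    have hdiff : ∀ y, |g1 y - g2 y| ≤ S.indicator (fun _ => Q) y := by
      intro y
      have t1 : ‖y‖ ≤ ‖x‖ + ‖x - y‖ := by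
        have := norm_sub_le x (x - y); simpa using this
      have t2 : ‖x‖ ≤ ‖y‖ + ‖x - y‖ := by
        have := norm_add_le y (x - y); simpa using this
      have hval : ε * (1 - η) ≤ ‖x - y‖ → ‖x - y‖ ≤ ε * (1 + η) →
          |‖x‖ ^ (-a) - ‖y‖ ^ (-a)| * ‖x - y‖ ^ (-e) ≤ S.indicator (fun _ => Q) y := by
        intro l1 l2
        have hyS : y ∈ S := by
          refine ⟨?_, ?_⟩
          · rw [mem_closedBall, dist_comm, dist_eq_norm]; exact l2
          · rw [mem_ball, dist_comm, dist_eq_norm]; exact not_lt.2 l1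
        rw [indicator_of_mem hyS, hQ]
        have l3 : ‖x - y‖ ≤ 2 * ε := by nlinarith
        have l4 : ε / 2 ≤ ‖x - y‖ := by nlinarith
        refine mul_le_mul ?_ ?_ (by positivity) (by positivity)
        · exact (hC y (by linarith)).trans (by gcongr)
        · exact Real.rpow_le_rpow_of_nonpos (by positivity) l4 (by linarith)
      have hpos : 0 ≤ S.indicator (fun _ => Q) y := indicator_nonneg (fun _ _ => hQ0) y
      simp only [hg1, hg2, fiK]
      by_cases c1 : ε ≤ ‖x - y‖ <;> by_cases c2 : ε * ‖y‖ ≤ ‖x‖ * ‖x - y‖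
      · rw [if_pos c1, if_pos c2]; simpa using hpos
      · rw [if_pos c1, if_neg c2, mul_zero, sub_zero, abs_mul,
          abs_of_nonneg (by positivity : 0 ≤ ‖x - y‖ ^ (-e))]
        push Not at c2
        have u1 : ‖x‖ * ‖x - y‖ < ε * (‖x‖ + ‖x - y‖) := c2.trans_le (by gcongr)
        have u2 : ‖x - y‖ ≤ 2 * ε := by
          by_contra hcon
          push Not at hcon
          nlinarith
        refine hval (by nlinarith) ?_
        have : ‖x‖ * ‖x - y‖ ≤ ‖x‖ * (ε * (1 + η)) := by nlinarith
        exact le_of_mul_le_mul_left this hX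
      · rw [if_neg c1, if_pos c2, mul_zero, zero_sub, abs_neg, abs_mul,
          abs_of_nonneg (by positivity : 0 ≤ ‖x - y‖ ^ (-e))]
        push Not at c1
        refine hval ?_ (by nlinarith)
        have : ‖x‖ * (ε * (1 - η)) ≤ ‖x‖ * ‖x - y‖ := by nlinarith
        exact le_of_mul_le_mul_left this hX
      · rw [if_neg c1, if_neg c2]; simpa using hpos
    have i1 : Integrable g1 := by
      have := (((fiK_integrable (d := d) he hε0).comp_sub_left x).const_mul (‖x‖ ^ (-a))).sub
        (fi_riesz_int hd ha0 ha he hε0 x)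
      refine this.congr (ae_of_all _ fun y => ?_)
      simp only [hg1, Pi.sub_apply]; ring
    have hid : Integrable (S.indicator (fun _ => Q)) := by
      rw [integrable_indicator_iff hSm]
      exact integrableOn_const hSfin
    have m2 : Measurable g2 := by
      refine Measurable.mul (measurable_const.sub (measurable_norm.pow_const _)) ?_
      refine Measurable.ite (measurableSet_le (by fun_prop) (by fun_prop)) ?_ measurable_const
      exact (by fun_prop : Measurable fun y : Ed d => ‖x - y‖).pow_const _
    have id : Integrable (fun y => g1 y - g2 y) :=
      hid.mono' (i1.aestronglyMeasurable.sub m2.aestronglyMeasurable) (ae_of_all _ hdiff)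
    have i2 : Integrable g2 := by
      refine (i1.sub id).congr (ae_of_all _ fun y => ?_)
      simp
    have hk : ∫ y, g1 y = - ∫ y, g2 y := fi_kelvin hd hae hx
    have h2I : 2 * ∫ y, g1 y = ∫ y, (g1 y - g2 y) := by
      rw [integral_sub i1 i2]; linarith
    have hb : ‖∫ y, (g1 y - g2 y)‖ ≤ volume.real S * Q := by
      refine (norm_integral_le_of_norm_le hid (ae_of_all _ hdiff)).trans ?_
      rw [integral_indicator hSm, setIntegral_const, smul_eq_mul]
    have hv := fi_shell_vol (x := x) hε0 hη0 hη1
    rw [← hS] at hv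
    have hfin : volume.real S * Q ≤ 2 * ((C * 2 * 2 ^ e * K * (4 / ‖x‖)) * ε ^ (d + 2 - e)) := by
      refine (mul_le_mul_of_nonneg_right hv hQ0).trans ?_
      have ex : ε ^ (d + 2 - e) = ε ^ d * ε * ε * ε ^ (-e) := by
        rw [show (d:ℝ) + 2 - e = d + 1 + 1 + (-e) by ring, Real.rpow_add hε0, Real.rpow_add hε0,
          Real.rpow_add hε0, Real.rpow_natCast, Real.rpow_one]
      have ey : (ε / 2) ^ (-e) = ε ^ (-e) * 2 ^ e := by
        rw [Real.div_rpow hε0.le (by norm_num), Real.rpow_neg (by norm_num : (0:ℝ) ≤ 2)]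
        field_simp
      rw [hQ, hη, ex, ey, hK]
      have : 0 ≤ volume.real (ball (0 : Ed d) 1) * d * 2 ^ (d - 1) * ε ^ d * ε * ε * ε ^ (-e) * C * 2 ^ e / ‖x‖ := by
        positivity
      have e3 : volume.real (ball (0:Ed d) 1) * ε ^ d * (2 * (2 * ε / ‖x‖) * ↑d * 2 ^ (d - 1)) * (C * (2 * ε) * (ε ^ (-e) * 2 ^ e)) = 8 * (volume.real (ball (0 : Ed d) 1) * d * 2 ^ (d - 1) * ε ^ d * ε * ε * ε ^ (-e) * C * 2 ^ e / ‖x‖) := by ring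
      have e4 : 2 * (C * 2 * 2 ^ e * (volume.real (ball (0:Ed d) 1) * ↑d * 2 ^ (d - 1)) * (4 / ‖x‖) * (ε ^ d * ε * ε * ε ^ (-e))) = 16 * (volume.real (ball (0 : Ed d) 1) * d * 2 ^ (d - 1) * ε ^ d * ε * ε * ε ^ (-e) * C * 2 ^ e / ‖x‖) := by ring
      rw [e3, e4]; linarith
    have h5 : ‖2 * ∫ y, g1 y‖ = 2 * ‖∫ y, g1 y‖ := by rw [norm_mul]; norm_num
    rw [← h2I, h5] at hb
    linarith
  refine squeeze_zero_norm' key ?_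
  have h0 : Tendsto (fun ε : ℝ => ε ^ ((d:ℝ) + 2 - e)) (𝓝[>] 0) (𝓝 0) := by
    have := (Real.continuousAt_rpow_const 0 ((d:ℝ) + 2 - e) (Or.inr (by linarith))).tendsto
    rw [Real.zero_rpow (by linarith)] at this
    exact this.mono_left nhdsWithin_le_nhds
  simpa using h0.const_mul (C * 2 * 2 ^ e * K * (4 / ‖x‖))

open MeasureTheory Filter Metric Set
open scoped Topology ENNReal

theorem fi_B_ineq {q t u w : ℝ} (hq : 0 ≤ q) (ht : 0 < t) (hu : 0 < u) (hw : 0 < w) :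
    (t + u) ^ (-q) * (u / (t + u)) * u ^ q * (u ^ (-q) - w ^ (-q)) ≤ (t + u) ^ (-q) - (t + w) ^ (-q) := by
  have htu : 0 < t + u := by positivity
  have hr : 0 < w / u := by positivity
  have g1 := Real.geom_mean_le_arith_mean2_weighted (w₁ := t / (t + u)) (w₂ := u / (t + u))
    (p₁ := 1) (p₂ := w / u) (by positivity) (by positivity) (by positivity) hr.le (by field_simp)
  have g2 := Real.geom_mean_le_arith_mean2_weighted (w₁ := t / (t + u)) (w₂ := u / (t + u))
    (p₁ := 1) (p₂ := (w / u) ^ (-q)) (by positivity) (by positivity) (by positivity) (by positivity)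
    (by field_simp)
  simp only [Real.one_rpow, one_mul, mul_one] at g1 g2
  have h : (t / (t + u) + u / (t + u) * (w / u)) ^ (-q) ≤ t / (t + u) + u / (t + u) * (w / u) ^ (-q) := by
    refine (Real.rpow_le_rpow_of_nonpos (by positivity) g1 (by linarith)).trans ?_
    rwa [← Real.rpow_mul hr.le, mul_comm, Real.rpow_mul hr.le]
  have e1 : t / (t + u) + u / (t + u) * (w / u) = (t + w) / (t + u) := by field_simp
  rw [e1, Real.div_rpow (by positivity) htu.le, Real.div_rpow hw.le hu.le] at h
  have hp1 : 0 < (t + u) ^ (-q) := by positivity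
  have e2 : u ^ (-q) * u ^ q = 1 := by rw [← Real.rpow_add hu]; simp
  have e3 : w ^ (-q) / u ^ (-q) = w ^ (-q) * u ^ q := by
    rw [Real.rpow_neg hu.le, div_inv_eq_mul]
  rw [e3, div_le_iff₀ hp1] at h
  have e4 : (t + u) ^ (-q) * (u / (t + u)) * u ^ q * (u ^ (-q) - w ^ (-q)) =
    (t + u) ^ (-q) * (u / (t + u)) * (u ^ (-q) * u ^ q) - (t + u) ^ (-q) * (u / (t + u)) * (w ^ (-q) * u ^ q) := by ring
  rw [e4, e2]
  have e5 : t / (t + u) = 1 - u / (t + u) := by field_simp; ring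
  rw [e5] at h
  nlinarith

theorem fi_super {d : ℕ} (hd : 1 ≤ d) {a e τ A L : ℝ} (ha0 : 0 ≤ a) (ha : a < d)
    (he : (d:ℝ) < e) (he2 : e < d + 2) (hae : 0 < a → a + e = 2 * d) (hτ : 0 < τ)
    {χ : Ed d → ℝ} (hm : Measurable χ) (hA : ∀ x, |χ x| ≤ A)
    (hle : ∀ y, χ y ≤ (τ ^ 2 + ‖y‖ ^ 2) ^ (-(a / 2))) {x : Ed d}
    (hx : χ x = (τ ^ 2 + ‖x‖ ^ 2) ^ (-(a / 2)))
    (hL : Tendsto (fun ε => fiL d e ε χ x) (𝓝[>] 0) (𝓝 L)) : 0 ≤ L := by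
  have : Nonempty (Fin d) := ⟨⟨0, hd⟩⟩
  by_cases h0 : x = 0 ∨ a = 0
  · have hmax : ∀ y, χ y ≤ χ x := by
      intro y
      refine (hle y).trans ?_
      rw [hx]
      rcases h0 with h | h
      · subst h
        refine Real.rpow_le_rpow_of_nonpos (by positivity) ?_ (by linarith)
        simp
      · subst h; simp
    refine ge_of_tendsto hL (Eventually.of_forall fun ε => ?_)
    refine integral_nonneg fun y => mul_nonneg (sub_nonneg.2 (hmax y)) (fiK_nonneg _)
  · push Not at h0
    obtain ⟨hx0, ha1⟩ := h0
    have ha2 : 0 < a := lt_of_le_of_ne ha0 (Ne.symm ha1)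
    have hX : 0 < ‖x‖ := norm_pos_iff.2 hx0
    obtain ⟨c, hc⟩ : ∃ c, c = (τ ^ 2 + ‖x‖ ^ 2) ^ (-(a / 2)) * (‖x‖ ^ 2 / (τ ^ 2 + ‖x‖ ^ 2)) * (‖x‖ ^ 2) ^ (a / 2) := ⟨_, rfl⟩
    have ht := (fi_riesz_tendsto hd ha0 ha he he2 (hae ha2) hx0).const_mul c
    rw [mul_zero] at ht
    refine le_of_tendsto_of_tendsto ht hL ?_
    filter_upwards [self_mem_nhdsWithin] with ε hε
    have hε0 : 0 < ε := hε
    rw [← integral_const_mul]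
    unfold fiL
    have hnull : (volume : Measure (Ed d)) {0} = 0 := measure_singleton _
    have hae0 : ∀ᵐ y : Ed d, y ∈ ({0}ᶜ : Set (Ed d)) := compl_mem_ae_iff.2 hnull
    refine integral_mono_ae ?_ ?_ ?_
    · refine Integrable.const_mul ?_ _
      have := (((fiK_integrable (d := d) he hε0).comp_sub_left x).const_mul (‖x‖ ^ (-a))).sub
        (fi_riesz_int hd ha0 ha he hε0 x)
      refine this.congr (ae_of_all _ fun y => ?_)
      simp only [Pi.sub_apply]; ring
    · have h1 := fi_bdd_mul_K he hε0 (g := fun z => χ x - χ (x - z)) (A := 2 * A)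
        (Measurable.aestronglyMeasurable (by fun_prop)) (fun y => by
          have := abs_sub (χ x) (χ (x - y))
          linarith [hA x, hA (x - y)])
      have h2 := h1.comp_sub_left x
      simpa using h2
    · filter_upwards [hae0] with y hy
      have hY : 0 < ‖y‖ := norm_pos_iff.2 hy
      rw [← mul_assoc]
      refine mul_le_mul_of_nonneg_right ?_ (fiK_nonneg _)
      have h1 := fi_B_ineq (q := a / 2) (t := τ ^ 2) (u := ‖x‖ ^ 2) (w := ‖y‖ ^ 2) (by positivity)
        (by positivity) (by positivity) (by positivity)
      have e1 : ∀ r : ℝ, 0 ≤ r → (r ^ 2) ^ (-(a / 2)) = r ^ (-a) := by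
        intro r hr
        rw [← Real.rpow_natCast, ← Real.rpow_mul hr]; congr 1; push_cast; ring
      rw [e1 _ hX.le, e1 _ hY.le, ← hc] at h1
      rw [hx]
      linarith [hle y]

/-- the fixed bump used in the cutoff construction -/
noncomputable def fiTh (d : ℕ) : ContDiffBump (0 : Ed d) := ⟨1, 2, one_pos, one_lt_two⟩

noncomputable def fiTo : ContDiffBump (0 : ℝ) := ⟨1, 2, one_pos, one_lt_two⟩

noncomputable def fiY (d : ℕ) (a τ : ℝ) (y : Ed d) : ℝ :=
  (τ ^ 2 + ‖y‖ ^ 2) ^ (-(a / 2)) * fiTh d y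

noncomputable def fiG (d : ℕ) (a : ℝ) (q : ℝ × Ed d) : ℝ :=
  (q.1 ^ 2 + ‖q.2‖ ^ 2) ^ (-(a / 2)) * fiTh d q.2 * (1 - fiTh d ((8:ℝ) • q.2)) *
    fiTo q.1

theorem fiTh_one {d : ℕ} {y : Ed d} (h : ‖y‖ ≤ 1) : fiTh d y = 1 :=
  (fiTh d).one_of_mem_closedBall (by simpa [fiTh] using h)

theorem fiTh_zero {d : ℕ} {y : Ed d} (h : 2 ≤ ‖y‖) : fiTh d y = 0 :=
  (fiTh d).zero_of_le_dist (by simpa [fiTh] using h)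

theorem fiY_contDiff {d : ℕ} {a τ : ℝ} (hτ : 0 < τ) : ContDiff ℝ (⊤ : ℕ∞) (fiY d a τ) := by
  unfold fiY
  refine ContDiff.mul ?_ (fiTh d).contDiff
  refine ContDiff.rpow_const_of_ne (contDiff_const.add (contDiff_norm_sq ℝ)) fun y => ?_
  positivity

theorem fiY_supp {d : ℕ} {a τ : ℝ} {y : Ed d} (h : 2 ≤ ‖y‖) : fiY d a τ y = 0 := by
  unfold fiY; rw [fiTh_zero h, mul_zero]

theorem fiY_compact {d : ℕ} {a τ : ℝ} : HasCompactSupport (fiY d a τ) := by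
  refine HasCompactSupport.intro (isCompact_closedBall (0 : Ed d) 2) fun x hx => fiY_supp ?_
  rw [mem_closedBall, dist_zero_right, not_le] at hx
  exact hx.le

theorem fiG_contDiff {d : ℕ} {a : ℝ} : ContDiff ℝ (⊤ : ℕ∞) (fiG d a) := by
  rw [contDiff_iff_contDiffAt]
  intro q
  by_cases hq : ‖q.2‖ < 1 / 8
  · have : fiG d a =ᶠ[𝓝 q] fun _ => 0 := by
      have : ∀ᶠ q' : ℝ × Ed d in 𝓝 q, ‖q'.2‖ < 1 / 8 :=
        (continuous_snd.norm).continuousAt.eventually (Iio_mem_nhds hq)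
      filter_upwards [this] with q' hq'
      have : fiTh d ((8:ℝ) • q'.2) = 1 := fiTh_one (by rw [norm_smul]; norm_num; linarith)
      unfold fiG; rw [this]; simp
    exact contDiffAt_const.congr_of_eventuallyEq this
  · push Not at hq
    unfold fiG
    have h1 : ContDiffAt ℝ (⊤ : ℕ∞) (fun q : ℝ × Ed d => (q.1 ^ 2 + ‖q.2‖ ^ 2) ^ (-(a / 2))) q := by
      refine ContDiffAt.rpow_const_of_ne ?_ (by positivity)
      exact ((contDiff_fst.pow 2).add ((contDiff_norm_sq ℝ).comp contDiff_snd)).contDiffAt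
    refine ((h1.mul ?_).mul ?_).mul ?_
    · exact ((fiTh d).contDiff.comp contDiff_snd).contDiffAt
    · exact (contDiff_const.sub ((fiTh d).contDiff.comp (contDiff_snd.const_smul _))).contDiffAt
    · exact (fiTo.contDiff.comp contDiff_fst).contDiffAt

theorem fiG_compact {d : ℕ} {a : ℝ} : HasCompactSupport (fiG d a) := by
  refine HasCompactSupport.intro ((isCompact_closedBall (0 : ℝ) 2).prod
    (isCompact_closedBall (0 : Ed d) 2)) fun q hq => ?_
  rw [mem_prod, not_and_or] at hq
  unfold fiG
  rcases hq with h | h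
  · rw [mem_closedBall, not_le] at h
    rw [fiTo.zero_of_le_dist (by exact h.le), mul_zero]
  · rw [mem_closedBall, dist_zero_right, not_le] at h
    rw [fiTh_zero h.le]; simp

theorem fiY_eq_G {d : ℕ} {a τ : ℝ} (hτ : 0 < τ) (hτ1 : τ ≤ 1) {y : Ed d} (hy : 1 / 4 ≤ ‖y‖) :
    fiY d a τ y = fiG d a (τ, y) := by
  unfold fiY fiG
  rw [fiTh_zero (y := (8:ℝ) • y) (by rw [norm_smul]; norm_num; linarith),
    fiTo.one_of_mem_closedBall (by
      rw [mem_closedBall, dist_zero_right, Real.norm_eq_abs, abs_of_pos hτ]; exact hτ1)]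
  simp

theorem fiY_nonneg {d : ℕ} {a τ : ℝ} (y : Ed d) : 0 ≤ fiY d a τ y :=
  mul_nonneg (by positivity) (fiTh d).nonneg

theorem fiY_le {d : ℕ} {a τ : ℝ} (y : Ed d) : fiY d a τ y ≤ (τ ^ 2 + ‖y‖ ^ 2) ^ (-(a / 2)) :=
  mul_le_of_le_one_right (by positivity) (fiTh d).le_one

theorem fiY_int {d : ℕ} (hd : 1 ≤ d) {a τ : ℝ} (hτ : 0 < τ) (ha0 : 0 ≤ a) (ha : a < d) :
    ∫ y, fiY d a τ y ≤ ∫ y in ball (0 : Ed d) 2, ‖y‖ ^ (-a) := by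
  have : Nonempty (Fin d) := ⟨⟨0, hd⟩⟩
  rw [← integral_indicator measurableSet_ball]
  have hnull : (volume : Measure (Ed d)) {0} = 0 := measure_singleton _
  have hae0 : ∀ᵐ y : Ed d, y ∈ ({0}ᶜ : Set (Ed d)) := compl_mem_ae_iff.2 hnull
  refine integral_mono_ae ((fiY_contDiff hτ).continuous.integrable_of_hasCompactSupport fiY_compact)
    ((integrable_indicator_iff measurableSet_ball).2 (fi_ball_integrable hd ha 2)) ?_
  filter_upwards [hae0] with y hy
  have hY : 0 < ‖y‖ := norm_pos_iff.2 hy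
  by_cases h : y ∈ ball (0 : Ed d) 2
  · rw [indicator_of_mem h]
    refine (fiY_le y).trans ?_
    have e1 : (‖y‖ ^ 2) ^ (-(a / 2)) = ‖y‖ ^ (-a) := by
      rw [← Real.rpow_natCast, ← Real.rpow_mul hY.le]; congr 1; push_cast; ring
    rw [← e1]
    refine Real.rpow_le_rpow_of_nonpos (by positivity) ?_ (by linarith)
    nlinarith [sq_nonneg τ]
  · rw [indicator_of_notMem h, fiY_supp]
    simpa using h

open MeasureTheory Filter Metric Set
open scoped Topology ENNReal

theorem fiY_mid {d : ℕ} (hd : 1 ≤ d) {a e : ℝ} (ha0 : 0 ≤ a) (ha : a < d)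
    (he : (d:ℝ) < e) (he2 : e < d + 2) :
    ∃ M, 0 ≤ M ∧ ∀ τ, 0 < τ → τ ≤ 1 → ∀ ε > 0, ∀ x : Ed d, 1 / 2 ≤ ‖x‖ →
      -M ≤ fiL d e ε (fiY d a τ) x := by
  have he0 : 0 ≤ e := (Nat.cast_nonneg d).trans he.le
  obtain ⟨M, hM0, hM⟩ := fi_second_diff (fiG_contDiff (d := d) (a := a)) fiG_compact
  obtain ⟨I, hI⟩ : ∃ I, I = ∫ z : Ed d, min (‖z‖ ^ 2) 1 * ‖z‖ ^ (-e) := ⟨_, rfl⟩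
  have hI0 : 0 ≤ I := by rw [hI]; exact integral_nonneg fun z => by positivity
  obtain ⟨A, hA⟩ : ∃ A, A = ∫ y in ball (0 : Ed d) 2, ‖y‖ ^ (-a) := ⟨_, rfl⟩
  have hA0 : 0 ≤ A := by rw [hA]; exact integral_nonneg fun z => by positivity
  refine ⟨M * I + 4 ^ e * (2 * A), by positivity, fun τ hτ hτ1 ε hε x hx => ?_⟩
  have hsm := fiY_contDiff (d := d) (a := a) hτ
  have hintg := hsm.continuous.integrable_of_hasCompactSupport (fiY_compact (a := a) (τ := τ)) (μ := volume)
  obtain ⟨Q, hQ⟩ := fi_test_bdd hsm fiY_compact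
  rw [fiL_eq_second he hε hsm.continuous.measurable hQ]
  have hi1 : Integrable (fun z : Ed d => M * (min (‖z‖ ^ 2) 1 * ‖z‖ ^ (-e)) +
      4 ^ e * (fiY d a τ (x + z) + fiY d a τ (x - z))) :=
    ((fi_min_integrable hd he he2).const_mul M).add
      (((hintg.comp_add_left x).add (hintg.comp_sub_left x)).const_mul _)
  have hi2 : Integrable (fun z => (2 * fiY d a τ x - fiY d a τ (x + z) - fiY d a τ (x - z)) * fiK d e ε z) := by
    refine fi_bdd_mul_K he hε (A := 4 * Q) (Continuous.aestronglyMeasurable ?_) fun z => ?_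
    · have := hsm.continuous
      fun_prop
    · have h1 := hQ x; have h2 := hQ (x+z); have h3 := hQ (x-z)
      rw [abs_le] at *
      constructor <;> linarith
  have hlow : ∫ z : Ed d, -(M * (min (‖z‖ ^ 2) 1 * ‖z‖ ^ (-e)) +
      4 ^ e * (fiY d a τ (x + z) + fiY d a τ (x - z))) ≤
      ∫ z, (2 * fiY d a τ x - fiY d a τ (x + z) - fiY d a τ (x - z)) * fiK d e ε z := by
    refine integral_mono hi1.neg hi2 fun z => ?_
    simp only []
    have p0 := fiY_nonneg (a := a) (τ := τ) x
    have p1 := fiY_nonneg (a := a) (τ := τ) (x + z)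
    have p2 := fiY_nonneg (a := a) (τ := τ) (x - z)
    have hk0 := fiK_nonneg (e := e) (ε := ε) z
    by_cases hz : ‖z‖ < 1 / 4
    · have n1 : 1 / 4 ≤ ‖x + z‖ := by have := norm_sub_le (x + z) z; simp at this; linarith
      have n2 : 1 / 4 ≤ ‖x - z‖ := by have := norm_add_le (x - z) z; simp at this; linarith
      have h := hM (τ, x) (0, z)
      rw [Prod.mk_add_mk, Prod.mk_sub_mk, add_zero, sub_zero, ← fiY_eq_G hτ hτ1 n1, ← fiY_eq_G hτ hτ1 n2,
        ← fiY_eq_G hτ hτ1 (by linarith : 1 / 4 ≤ ‖x‖)] at h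
      have h0z : ‖((0:ℝ), z)‖ = ‖z‖ := by simp [Prod.norm_def]
      rw [h0z] at h
      have h1 : |2 * fiY d a τ x - fiY d a τ (x + z) - fiY d a τ (x - z)| * fiK d e ε z ≤
          M * ‖z‖ ^ 2 * ‖z‖ ^ (-e) := mul_le_mul h (fiK_le z) hk0 (by positivity)
      rw [min_eq_left (by nlinarith [norm_nonneg z])]
      have h2 := neg_abs_le (2 * fiY d a τ x - fiY d a τ (x + z) - fiY d a τ (x - z))
      have h3 := mul_le_mul_of_nonneg_right h2 hk0
      have h4 : 0 ≤ 4 ^ e * (fiY d a τ (x + z) + fiY d a τ (x - z)) := by positivity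
      linarith
    · push Not at hz
      have hk : fiK d e ε z ≤ 4 ^ e := by
        refine (fiK_le z).trans ?_
        have := Real.rpow_le_rpow_of_nonpos (by norm_num) hz (by linarith : -e ≤ 0)
        refine this.trans (le_of_eq ?_)
        rw [one_div, Real.inv_rpow (by norm_num), Real.rpow_neg (by norm_num), inv_inv]
      have h4 : 0 ≤ M * (min (‖z‖ ^ 2) 1 * ‖z‖ ^ (-e)) := by positivity
      have h5 : (fiY d a τ (x + z) + fiY d a τ (x - z)) * fiK d e ε z ≤
        (fiY d a τ (x + z) + fiY d a τ (x - z)) * 4 ^ e := by gcongr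
      have h6 : 0 ≤ fiY d a τ x * fiK d e ε z := by positivity
      linarith
  have hs3 : Integrable (fun z => (4:ℝ) ^ e * (fiY d a τ (x + z) + fiY d a τ (x - z))) :=
    ((hintg.comp_add_left x).add (hintg.comp_sub_left x)).const_mul _
  rw [integral_neg, integral_add ((fi_min_integrable hd he he2).const_mul M)
      hs3, integral_const_mul,
      integral_const_mul, integral_add (hintg.comp_add_left x) (hintg.comp_sub_left x),
      integral_add_left_eq_self (fun z => fiY d a τ z) x,
      integral_sub_left_eq_self (fun z => fiY d a τ z) volume x, ← hI] at hlow
  have hYA := fiY_int hd hτ ha0 ha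
  rw [← hA] at hYA
  have h9 : 4 ^ e * ((∫ z, fiY d a τ z) + ∫ z, fiY d a τ z) ≤ 4 ^ e * (2 * A) := by
    gcongr; linarith
  have : 0 ≤ M * I + 4 ^ e * (2 * A) := by positivity
  linarith

theorem fiY_bound {d : ℕ} (hd : 1 ≤ d) {a e : ℝ} (ha0 : 0 ≤ a) (ha : a < d)
    (he : (d:ℝ) < e) (he2 : e < d + 2) (hae : 0 < a → a + e = 2 * d) :
    ∃ M, 0 ≤ M ∧ ∀ τ, 0 < τ → τ ≤ 1 → ∀ x : Ed d,
      -(M * fiJ d e x) ≤ fiLL d e (fiY d a τ) x := by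
  have he0 : 0 ≤ e := (Nat.cast_nonneg d).trans he.le
  obtain ⟨M, hM0, hM⟩ := fiY_mid hd ha0 ha he he2
  obtain ⟨A, hA⟩ : ∃ A, A = ∫ y in ball (0 : Ed d) 2, ‖y‖ ^ (-a) := ⟨_, rfl⟩
  have hA0 : 0 ≤ A := by rw [hA]; exact integral_nonneg fun z => by positivity
  refine ⟨M * (1 + 4) ^ e + 4 ^ e * A, by positivity, fun τ hτ hτ1 x => ?_⟩
  have hsm := fiY_contDiff (d := d) (a := a) hτ
  have hintg := hsm.continuous.integrable_of_hasCompactSupport (fiY_compact (a := a) (τ := τ)) (μ := volume)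
  obtain ⟨Q, hQ⟩ := fi_test_bdd hsm fiY_compact
  have hlim := fiL_test_tendsto hd he he2 hsm fiY_compact x
  have hJ := (fiJ_pos (d := d) (e := e) x).le
  have q1 : 0 ≤ M * (1 + 4) ^ e * fiJ d e x := by positivity
  have q2 : 0 ≤ 4 ^ e * A * fiJ d e x := by positivity
  rw [add_mul]
  rcases le_total ‖x‖ (1 / 2) with h1 | h1
  · have := fi_super hd ha0 ha he he2 hae hτ hsm.continuous.measurable hQ fiY_le (x := x) (by
      unfold fiY; rw [fiTh_one (by linarith), mul_one]) hlim
    linarith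
  · rcases le_total ‖x‖ 4 with h2 | h2
    · have h3 := fi_near_J he0 (by norm_num : (0:ℝ) ≤ 4) h2
      have h4 : -M ≤ fiLL d e (fiY d a τ) x := by
        refine ge_of_tendsto hlim ?_
        filter_upwards [self_mem_nhdsWithin] with ε hε
        exact hM τ hτ hτ1 ε hε x h1
      have : M * 1 ≤ M * ((1 + 4) ^ e * fiJ d e x) := by gcongr
      linarith
    · have h4 : -(4 ^ e * A * fiJ d e x) ≤ fiLL d e (fiY d a τ) x := by
        refine ge_of_tendsto hlim ?_
        filter_upwards [self_mem_nhdsWithin] with ε hε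
        have hYA := fiY_int hd hτ ha0 ha
        rw [← hA] at hYA
        have h5 := fiL_far (ε := ε) (A := A) (x := x) he0 (two_pos) hintg (fun y hy => fiY_supp hy.le) (by linarith) (by
          refine le_trans (le_of_eq ?_) hYA
          congr 1; ext y; rw [abs_of_nonneg (fiY_nonneg y)])
        have h6 := fi_far_J he0 (x := x) (by linarith)
        have h7 := mul_le_mul_of_nonneg_right h6 hA0
        have h8 := neg_abs_le (fiL d e ε (fiY d a τ) x)
        linarith
      linarith

theorem fiJ_scale {d : ℕ} {e R : ℝ} (he : 0 ≤ e) (hR : 1 ≤ R) (x : Ed d) :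
    fiJ d e (R⁻¹ • x) ≤ R ^ e * fiJ d e x := by
  have hR0 : 0 < R := by linarith
  unfold fiJ
  rw [norm_smul, norm_inv, Real.norm_eq_abs, abs_of_pos hR0]
  have h1 : (1 + ‖x‖) ≤ R * (1 + R⁻¹ * ‖x‖) := by
    rw [mul_add, ← mul_assoc, mul_inv_cancel₀ hR0.ne']; linarith
  have h2 := Real.rpow_le_rpow (by positivity) h1 he
  rw [Real.mul_rpow hR0.le (by positivity)] at h2
  rw [Real.rpow_neg (by positivity), Real.rpow_neg (by positivity), ← div_eq_mul_inv,
    inv_le_iff_one_le_mul₀ (by positivity), ← mul_div_right_comm, one_le_div (by positivity)]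
  exact h2

/-- Cutoff functions. -/
theorem fi_cutoff {d : ℕ} (hd : 1 ≤ d) {a e : ℝ} (ha0 : 0 ≤ a) (ha : a < d)
    (he : (d:ℝ) < e) (he2 : e < d + 2) (hae : 0 < a → a + e = 2 * d) {f : Ed d → ℝ}
    (hN : Tendsto (fun R : ℝ => R ^ (-(a + (e - d))) * ∫ x, f x ^ 2 * fiJ d e (R⁻¹ • x)) atTop (𝓝 0)) :
    ∃ χ r : ℕ → Ed d → ℝ, (∀ n, ContDiff ℝ (⊤ : ℕ∞) (χ n)) ∧ (∀ n, HasCompactSupport (χ n)) ∧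
      (∀ n x, 0 ≤ χ n x) ∧ (∀ n x, χ n x ≤ 1) ∧ (∀ x, Tendsto (fun n => χ n x) atTop (𝓝 1)) ∧
      (∀ n, Measurable (r n)) ∧ (∀ n x, 0 ≤ r n x) ∧ (∀ n, ∃ K, ∀ x, r n x ≤ K * fiJ d e x) ∧
      (∀ n x, - r n x ≤ fiLL d e (χ n) x) ∧ (∀ n, ∫ x, f x ^ 2 * r n x ≤ 1) := by
  have he0 : 0 ≤ e := (Nat.cast_nonneg d).trans he.le
  obtain ⟨M, hM0, hM⟩ := fiY_bound hd ha0 ha he he2 hae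
  have hex : ∀ n : ℕ, ∃ R' : ℝ, (n:ℝ) + 1 ≤ R' ∧
      M * ((n:ℝ) + 1) ^ a * (R' ^ (-(a + (e - d))) * ∫ x, f x ^ 2 * fiJ d e (R'⁻¹ • x)) ≤ 1 := by
    intro n
    have h1 := hN.const_mul (M * ((n:ℝ) + 1) ^ a)
    rw [mul_zero] at h1
    have h2 := (h1.eventually (Iic_mem_nhds (one_pos))).and (eventually_ge_atTop ((n:ℝ) + 1))
    obtain ⟨R', h3, h4⟩ := h2.exists
    exact ⟨R', h4, h3⟩
  choose R' hR1 hR2 using hex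
  have hR0 : ∀ n, 0 < R' n := fun n => lt_of_lt_of_le (by positivity) (hR1 n)
  have hR11 : ∀ n, 1 ≤ R' n := fun n => le_trans (by simp) (hR1 n)
  have hτ : ∀ n : ℕ, 0 < ((n:ℝ) + 1) / R' n := fun n => div_pos (by positivity) (hR0 n)
  have hτ1 : ∀ n : ℕ, ((n:ℝ) + 1) / R' n ≤ 1 := fun n => (div_le_one (hR0 n)).2 (hR1 n)
  have hsm : ∀ n : ℕ, ContDiff ℝ (⊤ : ℕ∞) (fun x => fiY d a (((n:ℝ) + 1) / R' n) ((R' n)⁻¹ • x)) :=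
    fun n => (fiY_contDiff (hτ n)).comp (contDiff_id.const_smul _)
  have hcp : ∀ n : ℕ, HasCompactSupport (fun x => fiY d a (((n:ℝ) + 1) / R' n) ((R' n)⁻¹ • x)) :=
    fun n => (fiY_compact).comp_smul (inv_ne_zero (hR0 n).ne')
  have hval : ∀ (n : ℕ) (x : Ed d), (((n:ℝ) + 1) / R' n) ^ a * fiY d a (((n:ℝ) + 1) / R' n) ((R' n)⁻¹ • x)
      = (1 + (‖x‖ / (n + 1)) ^ 2) ^ (-(a / 2)) * fiTh d ((R' n)⁻¹ • x) := by
    intro n x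
    unfold fiY
    rw [← mul_assoc]
    congr 1
    have e1 : (((n:ℝ) + 1) / R' n) ^ 2 + ‖(R' n)⁻¹ • x‖ ^ 2 = (((n:ℝ) + 1) / R' n) ^ 2 * (1 + (‖x‖ / (n + 1)) ^ 2) := by
      rw [norm_smul, norm_inv, Real.norm_eq_abs, abs_of_pos (hR0 n)]
      have := hR0 n
      field_simp
    have e2 : ((((n:ℝ) + 1) / R' n) ^ 2) ^ (-(a / 2)) = (((n:ℝ) + 1) / R' n) ^ (-a) := by
      rw [← Real.rpow_natCast, ← Real.rpow_mul (hτ n).le]; congr 1; push_cast; ring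
    rw [e1, Real.mul_rpow (by positivity) (by positivity), e2, ← mul_assoc, ← Real.rpow_add (hτ n)]
    simp
  have hB1 : ∀ (n : ℕ) (x : Ed d), (1 + (‖x‖ / (n + 1)) ^ 2) ^ (-(a / 2)) ≤ 1 := fun n x =>
    Real.rpow_le_one_of_one_le_of_nonpos (by nlinarith [sq_nonneg (‖x‖ / (n + 1))]) (by linarith)
  refine ⟨fun n x => (((n:ℝ) + 1) / R' n) ^ a * fiY d a (((n:ℝ) + 1) / R' n) ((R' n)⁻¹ • x),
    fun n x => M * ((n:ℝ) + 1) ^ a * (R' n) ^ (-(a + (e - d))) * fiJ d e ((R' n)⁻¹ • x),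
    fun n => contDiff_const.mul (hsm n), fun n => (hcp n).mul_left, ?_, ?_, ?_, ?_, ?_, ?_, ?_, ?_⟩
  · intro n x
    have := (hτ n)
    exact mul_nonneg (by positivity) (fiY_nonneg _)
  · intro n x
    dsimp only
    rw [hval]
    exact mul_le_one₀ (hB1 n x) (fiTh d).nonneg (fiTh d).le_one
  · intro x
    simp_rw [hval]
    have h1 : Tendsto (fun n : ℕ => (1 + (‖x‖ / ((n:ℝ) + 1)) ^ 2) ^ (-(a / 2))) atTop (𝓝 1) := by
      have h2 : Tendsto (fun n : ℕ => ‖x‖ / ((n:ℝ) + 1)) atTop (𝓝 0) :=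
        (tendsto_atTop_add_const_right _ _ tendsto_natCast_atTop_atTop).const_div_atTop _
      have h3 := (h2.pow 2).const_add 1
      have h4 := h3.rpow_const (p := -(a / 2)) (Or.inl (by norm_num))
      simpa using h4
    have h2 : ∀ᶠ n : ℕ in atTop, fiTh d ((R' n)⁻¹ • x) = 1 := by
      filter_upwards [eventually_ge_atTop ⌈‖x‖⌉₊] with n hn
      refine fiTh_one ?_
      rw [norm_smul, norm_inv, Real.norm_eq_abs, abs_of_pos (hR0 n), inv_mul_le_iff₀ (hR0 n), mul_one]
      have := Nat.ceil_le.1 hn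
      linarith [hR1 n]
    refine h1.congr' ?_
    filter_upwards [h2] with n hn
    rw [hn, mul_one]
  · intro n
    exact (fiJ_meas.comp (measurable_const_smul _)).const_mul _
  · intro n x
    have := hR0 n
    have := (fiJ_pos (d := d) (e := e) ((R' n)⁻¹ • x)).le
    positivity
  · intro n
    have := hR0 n
    refine ⟨M * ((n:ℝ) + 1) ^ a * (R' n) ^ (-(a + (e - d))) * (R' n) ^ e, fun x => ?_⟩
    rw [mul_assoc _ (R' n ^ e)]
    exact mul_le_mul_of_nonneg_left (fiJ_scale he0 (hR11 n) x) (by positivity)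
  · intro n x
    have h0 := hR0 n
    have e1 : fiLL d e (fun x => (((n:ℝ) + 1) / R' n) ^ a * fiY d a (((n:ℝ) + 1) / R' n) ((R' n)⁻¹ • x)) x
        = (((n:ℝ) + 1) / R' n) ^ a * fiLL d e (fun x => fiY d a (((n:ℝ) + 1) / R' n) ((R' n)⁻¹ • x)) x := by
      unfold fiLL
      rw [← integral_const_mul, ← integral_const_mul, ← integral_const_mul]
      refine integral_congr_ae (ae_of_all _ fun z => ?_)
      dsimp only
      ring
    rw [e1, fiLL_scale _ _ h0]
    have h1 := hM _ (hτ n) (hτ1 n) ((R' n)⁻¹ • x)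
    have h2 := mul_le_mul_of_nonneg_left h1 (by have := hτ n; positivity :
      0 ≤ (((n:ℝ) + 1) / R' n) ^ a * (R' n) ^ ((d:ℝ) - e))
    refine le_trans (le_of_eq ?_) (h2.trans (le_of_eq (by ring)))
    dsimp only
    rw [Real.div_rpow (by positivity) h0.le, show -(a + (e - (d:ℝ))) = (d - e) - a by ring,
      Real.rpow_sub h0 _ a]
    ring
  · intro n
    refine le_trans (le_of_eq ?_) (hR2 n)
    rw [← mul_assoc, ← integral_const_mul]
    congr 1; ext x; ring

open MeasureTheory Filter Metric Set
open scoped Topology ENNReal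

theorem fi_N_pt {d : ℕ} {p b e γ μ R t n : ℝ} (hp : 2 ≤ p) (hγ : 0 ≤ γ)
    (h1 : γ ≤ b + (b - d) * (p - 2) / 2) (h2 : γ ≤ (e - 2 * d) / 2 * (p - 2) + e)
    (hμ : 0 < μ) (hR : 1 ≤ R) (ht : 0 ≤ t) (hn : 0 ≤ n) :
    R ^ (-b) * (t ^ 2 * (1 + R⁻¹ * n) ^ (-e)) ≤
      μ ^ 2 * (R ^ (-(d:ℝ)) * (1 + R⁻¹ * n) ^ (-(2 * (d:ℝ)))) + μ ^ (2 - p) * (t ^ p * (1 + n) ^ (-γ)) := by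
  have hR0 : 0 < R := by linarith
  obtain ⟨h, hh⟩ : ∃ h, h = 1 + R⁻¹ * n := ⟨_, rfl⟩
  rw [← hh]
  have hh1 : 1 ≤ h := by rw [hh]; have : 0 ≤ R⁻¹ * n := by positivity
                         linarith
  have hh0 : 0 < h := by linarith
  obtain ⟨m, hm⟩ : ∃ m, m = μ * R ^ ((b - d) / 2) * h ^ ((e - 2 * d) / 2) := ⟨_, rfl⟩
  have hm0 : 0 < m := by rw [hm]; positivity
  have key : t ^ 2 ≤ m ^ 2 + m ^ (2 - p) * t ^ p := by
    rcases le_total t m with h | h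
    · have : t ^ 2 ≤ m ^ 2 := by gcongr
      have : 0 ≤ m ^ (2 - p) * t ^ p := by positivity
      linarith
    · have ht0 : 0 < t := by linarith
      have e1 : t ^ 2 = t ^ (2 - p) * t ^ p := by
        rw [← Real.rpow_add ht0]; norm_num
      have e2 : t ^ (2 - p) ≤ m ^ (2 - p) := Real.rpow_le_rpow_of_nonpos hm0 h (by linarith)
      have e3 : t ^ (2 - p) * t ^ p ≤ m ^ (2 - p) * t ^ p := by gcongr
      have : 0 ≤ m ^ 2 := by positivity
      linarith
  have k1 : R ^ (-b) * (m ^ 2 * h ^ (-e)) = μ ^ 2 * (R ^ (-(d:ℝ)) * h ^ (-(2 * (d:ℝ)))) := by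
    have q1 : m ^ 2 = μ ^ 2 * R ^ (b - d) * h ^ (e - 2 * d) := by
      rw [hm, mul_pow, mul_pow, ← Real.rpow_natCast (R ^ _), ← Real.rpow_natCast (h ^ _),
        ← Real.rpow_mul hR0.le, ← Real.rpow_mul hh0.le]
      push_cast
      congr 2 <;> [congr 1; skip] <;> congr 1 <;> ring
    have q2 : R ^ (-b) * R ^ (b - d) = R ^ (-(d:ℝ)) := by
      rw [← Real.rpow_add hR0]; congr 1; ring
    have q3 : h ^ (e - 2 * d) * h ^ (-e) = h ^ (-(2 * (d:ℝ))) := by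
      rw [← Real.rpow_add hh0]; congr 1; ring
    rw [q1, ← q2, ← q3]; ring
  have k2 : R ^ (-b) * (m ^ (2 - p) * h ^ (-e)) ≤ μ ^ (2 - p) * (1 + n) ^ (-γ) := by
    have q1 : m ^ (2 - p) = μ ^ (2 - p) * R ^ ((b - d) / 2 * (2 - p)) * h ^ ((e - 2 * d) / 2 * (2 - p)) := by
      rw [hm, Real.mul_rpow (by positivity) (by positivity), Real.mul_rpow (by positivity) (by positivity),
        ← Real.rpow_mul hR0.le, ← Real.rpow_mul hh0.le]
    have q2 : R ^ (-b) * R ^ ((b - d) / 2 * (2 - p)) ≤ R ^ (-γ) := by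
      rw [← Real.rpow_add hR0]; exact Real.rpow_le_rpow_of_exponent_le hR (by linarith)
    have q3 : h ^ ((e - 2 * d) / 2 * (2 - p)) * h ^ (-e) ≤ h ^ (-γ) := by
      rw [← Real.rpow_add hh0]; exact Real.rpow_le_rpow_of_exponent_le hh1 (by linarith)
    have q4 : R ^ (-γ) * h ^ (-γ) ≤ (1 + n) ^ (-γ) := by
      rw [← Real.mul_rpow hR0.le hh0.le]
      refine Real.rpow_le_rpow_of_nonpos (by positivity) ?_ (by linarith)
      rw [hh, mul_add, ← mul_assoc, mul_inv_cancel₀ hR0.ne']; linarith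
    have q5 := mul_le_mul q2 q3 (by positivity) (by positivity)
    calc R ^ (-b) * (m ^ (2 - p) * h ^ (-e)) = μ ^ (2 - p) * ((R ^ (-b) * R ^ ((b - d) / 2 * (2 - p))) *
          (h ^ ((e - 2 * d) / 2 * (2 - p)) * h ^ (-e))) := by rw [q1]; ring
      _ ≤ μ ^ (2 - p) * (1 + n) ^ (-γ) := by
          refine mul_le_mul_of_nonneg_left (q5.trans q4) (by positivity)
  have k3 : R ^ (-b) * (t ^ 2 * h ^ (-e)) ≤ R ^ (-b) * ((m ^ 2 + m ^ (2 - p) * t ^ p) * h ^ (-e)) := by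
    gcongr
  have k4 := mul_le_mul_of_nonneg_left k2 (by positivity : 0 ≤ t ^ p)
  linarith

theorem fi_scale_int {d : ℕ} {R : ℝ} (hR : 0 < R) (g : Ed d → ℝ) :
    ∫ x, R ^ (-(d:ℝ)) * g (R⁻¹ • x) = ∫ x, g x := by
  have h := Measure.integral_comp_inv_smul_of_nonneg (volume : Measure (Ed d)) g hR.le
  rw [integral_const_mul, h, smul_eq_mul, ← mul_assoc, finrank_euclideanSpace, Fintype.card_fin,
    ← Real.rpow_natCast, ← Real.rpow_add hR]
  simp

theorem fi_N {d : ℕ} (hd : 1 ≤ d) {p b e γ : ℝ} (hp : 2 ≤ p) (hγ : 0 ≤ γ) (hb : 0 < b)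
    (h1 : γ ≤ b + (b - d) * (p - 2) / 2) (h2 : γ ≤ (e - 2 * d) / 2 * (p - 2) + e)
    {f : Ed d → ℝ} (hf : AEStronglyMeasurable f volume)
    (hfi : Integrable (fun x => |f x| ^ p * (1 + ‖x‖) ^ (-γ))) :
    Integrable (fun x => f x ^ 2 * fiJ d e x) ∧
    Tendsto (fun R : ℝ => R ^ (-b) * ∫ x, f x ^ 2 * fiJ d e (R⁻¹ • x)) atTop (𝓝 0) := by
  have hd0 : (0:ℝ) < d := by exact_mod_cast hd
  have hJR : ∀ R : ℝ, 1 ≤ R → ∀ x : Ed d, ∀ q, fiJ d q (R⁻¹ • x) = (1 + R⁻¹ * ‖x‖) ^ (-q) := by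
    intro R hR x q
    unfold fiJ
    rw [norm_smul, norm_inv, Real.norm_eq_abs, abs_of_pos (by linarith : 0 < R)]
  have hpt : ∀ μ, 0 < μ → ∀ R, 1 ≤ R → ∀ x : Ed d, R ^ (-b) * (f x ^ 2 * fiJ d e (R⁻¹ • x)) ≤
      μ ^ 2 * (R ^ (-(d:ℝ)) * fiJ d (2 * d) (R⁻¹ • x)) + μ ^ (2 - p) * (|f x| ^ p * (1 + ‖x‖) ^ (-γ)) := by
    intro μ hμ R hR x
    rw [hJR R hR, hJR R hR, ← sq_abs]
    exact fi_N_pt hp hγ h1 h2 hμ hR (abs_nonneg _) (norm_nonneg _)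
  have hJ2 : Integrable (fiJ d (2 * d)) := fiJ_integrable (by linarith)
  have hJ2R : ∀ R : ℝ, 1 ≤ R → Integrable (fun x : Ed d => R ^ (-(d:ℝ)) * fiJ d (2 * d) (R⁻¹ • x)) :=
    fun R hR => (hJ2.comp_smul (inv_ne_zero (by linarith))).const_mul _
  have hmR : ∀ R : ℝ, AEStronglyMeasurable (fun x => R ^ (-b) * (f x ^ 2 * fiJ d e (R⁻¹ • x))) volume :=
    fun R => ((hf.pow 2).mul (fiJ_meas.comp (measurable_const_smul _)).aestronglyMeasurable).const_mul _
  have hI : ∀ R : ℝ, 1 ≤ R → Integrable (fun x => R ^ (-b) * (f x ^ 2 * fiJ d e (R⁻¹ • x))) := by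
    intro R hR
    refine (((hJ2R R hR).const_mul (1 ^ 2)).add (hfi.const_mul (1 ^ (2 - p)))).mono' (hmR R) (ae_of_all _ fun x => ?_)
    have := (fiJ_pos (d := d) (e := e) (R⁻¹ • x)).le
    rw [Real.norm_eq_abs, abs_of_nonneg (by have : 0 < R := by linarith
                                            positivity)]
    exact hpt 1 one_pos R hR x
  refine ⟨by simpa using hI 1 le_rfl, ?_⟩
  obtain ⟨C1, hC1⟩ : ∃ C1, C1 = ∫ x, fiJ d (2 * d) x := ⟨_, rfl⟩
  have hC10 : 0 ≤ C1 := by rw [hC1]; exact integral_nonneg fun x => (fiJ_pos x).le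
  -- dominated part
  have hF : ∀ μ, 0 < μ → Tendsto (fun R : ℝ => ∫ x, max (R ^ (-b) * (f x ^ 2 * fiJ d e (R⁻¹ • x)) -
      μ ^ 2 * (R ^ (-(d:ℝ)) * fiJ d (2 * d) (R⁻¹ • x))) 0) atTop (𝓝 0) := by
    intro μ hμ
    have h0 : (0:ℝ) = ∫ x : Ed d, (0:ℝ) := by simp
    conv => rhs; rw [h0]
    refine tendsto_integral_filter_of_dominated_convergence
      (fun x => μ ^ (2 - p) * (|f x| ^ p * (1 + ‖x‖) ^ (-γ))) ?_ ?_ (hfi.const_mul _) ?_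
    · filter_upwards [eventually_ge_atTop (1:ℝ)] with R hR
      exact ((hmR R).sub ((hJ2R R hR).1.const_mul _)).sup aestronglyMeasurable_const
    · filter_upwards [eventually_ge_atTop (1:ℝ)] with R hR
      refine ae_of_all _ fun x => ?_
      rw [Real.norm_eq_abs, abs_of_nonneg (le_max_right _ _)]
      refine max_le ?_ (by positivity)
      have := hpt μ hμ R hR x
      linarith
    · refine ae_of_all _ fun x => ?_
      have t1 : Tendsto (fun R : ℝ => R ^ (-b) * f x ^ 2) atTop (𝓝 0) := by
        simpa using (tendsto_rpow_neg_atTop hb).mul_const (f x ^ 2)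
      refine squeeze_zero' (Eventually.of_forall fun R => le_max_right _ _) ?_ t1
      filter_upwards [eventually_ge_atTop (1:ℝ)] with R hR
      have hR0 : 0 < R := by linarith
      refine max_le ?_ (by positivity)
      have q1 : fiJ d e (R⁻¹ • x) ≤ 1 := by
        rw [hJR R hR]
        exact Real.rpow_le_one_of_one_le_of_nonpos (by have : 0 ≤ R⁻¹ * ‖x‖ := by positivity
                                                       linarith) (by nlinarith)
      have q2 := (fiJ_pos (d := d) (e := 2 * d) (R⁻¹ • x)).le
      have q3 : 0 ≤ μ ^ 2 * (R ^ (-(d:ℝ)) * fiJ d (2 * d) (R⁻¹ • x)) := by positivity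
      have q4 : R ^ (-b) * (f x ^ 2 * fiJ d e (R⁻¹ • x)) ≤ R ^ (-b) * (f x ^ 2 * 1) := by
        gcongr
      linarith
  have hle : ∀ μ, 0 < μ → ∀ R : ℝ, 1 ≤ R → R ^ (-b) * ∫ x, f x ^ 2 * fiJ d e (R⁻¹ • x) ≤
      μ ^ 2 * C1 + ∫ x, max (R ^ (-b) * (f x ^ 2 * fiJ d e (R⁻¹ • x)) -
      μ ^ 2 * (R ^ (-(d:ℝ)) * fiJ d (2 * d) (R⁻¹ • x))) 0 := by
    intro μ hμ R hR
    have i1 := (hJ2R R hR).const_mul (μ ^ 2)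
    have i2 : Integrable (fun x => max (R ^ (-b) * (f x ^ 2 * fiJ d e (R⁻¹ • x)) -
      μ ^ 2 * (R ^ (-(d:ℝ)) * fiJ d (2 * d) (R⁻¹ • x))) 0) :=
      ((hI R hR).sub i1).sup (integrable_zero (Ed d) ℝ volume)
    rw [hC1, ← fi_scale_int (by linarith : 0 < R) (fiJ d (2 * d)), ← integral_const_mul, ← integral_const_mul,
      ← integral_add i1 i2]
    refine integral_mono (hI R hR) (i1.add i2) fun x => ?_
    have := le_max_left (R ^ (-b) * (f x ^ 2 * fiJ d e (R⁻¹ • x)) -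
      μ ^ 2 * (R ^ (-(d:ℝ)) * fiJ d (2 * d) (R⁻¹ • x))) 0
    simp only [Pi.add_apply]
    change _ ≤ μ ^ 2 * (R ^ (-(d:ℝ)) * fiJ d (2 * d) (R⁻¹ • x)) + max (R ^ (-b) * (f x ^ 2 * fiJ d e (R⁻¹ • x)) -
      μ ^ 2 * (R ^ (-(d:ℝ)) * fiJ d (2 * d) (R⁻¹ • x))) 0
    linarith
  rw [Metric.tendsto_nhds]
  intro ε hε
  obtain ⟨μ, hμ, hμε⟩ : ∃ μ : ℝ, 0 < μ ∧ μ ^ 2 * C1 < ε / 2 := by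
    refine ⟨Real.sqrt (ε / (4 * (C1 + 1))), by positivity, ?_⟩
    rw [Real.sq_sqrt (by positivity), div_mul_eq_mul_div, div_lt_iff₀ (by positivity)]
    nlinarith
  filter_upwards [(hF μ hμ).eventually (Iio_mem_nhds (by linarith : (0:ℝ) < ε / 2)), eventually_ge_atTop (1:ℝ)] with R hR hR1
  have := hle μ hμ R hR1
  have hR0 : 0 < R := by linarith
  have n0 : 0 ≤ R ^ (-b) * ∫ x, f x ^ 2 * fiJ d e (R⁻¹ • x) :=
    mul_nonneg (by positivity) (integral_nonneg fun x => mul_nonneg (sq_nonneg _) (fiJ_pos _).le)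
  rw [Real.dist_eq, sub_zero, abs_of_nonneg n0]
  have hR' : ∫ x, max (R ^ (-b) * (f x ^ 2 * fiJ d e (R⁻¹ • x)) -
      μ ^ 2 * (R ^ (-(d:ℝ)) * fiJ d (2 * d) (R⁻¹ • x))) 0 < ε / 2 := hR
  linarith

open MeasureTheory Filter Metric Set
open scoped Topology ENNReal

noncomputable def fiB (d n : ℕ) : ContDiffBump (0 : Ed d) :=
  ⟨1 / (2 * ((n:ℝ) + 1)), 1 / ((n:ℝ) + 1), by positivity, by
    apply one_div_lt_one_div_of_lt (by positivity)
    have : (0:ℝ) ≤ n := Nat.cast_nonneg n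
    linarith⟩

noncomputable def fiE (d n : ℕ) : Ed d → ℝ := (fiB d n).normed volume

noncomputable def fiT (d n : ℕ) (f : Ed d → ℝ) (x : Ed d) : ℝ := ∫ z, fiE d n z * f (x - z)

theorem fiE_nonneg {d n : ℕ} (z : Ed d) : 0 ≤ fiE d n z := (fiB d n).nonneg_normed z
theorem fiE_even {d n : ℕ} (z : Ed d) : fiE d n (-z) = fiE d n z := (fiB d n).normed_neg z
theorem fiE_int {d n : ℕ} : ∫ z, fiE d n z = 1 := (fiB d n).integral_normed
theorem fiE_integrable {d n : ℕ} : Integrable (fiE d n) := (fiB d n).integrable_normed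
theorem fiE_cont {d n : ℕ} : Continuous (fiE d n) := (fiB d n).continuous_normed
theorem fiE_smooth {d n : ℕ} : ContDiff ℝ (⊤ : ℕ∞) (fiE d n) := (fiB d n).contDiff_normed
theorem fiE_compact {d n : ℕ} : HasCompactSupport (fiE d n) := (fiB d n).hasCompactSupport_normed
theorem fiE_supp {d n : ℕ} {z : Ed d} (hz : 1 / ((n:ℝ) + 1) ≤ ‖z‖) : fiE d n z = 0 := by
  have h := (fiB d n).support_normed_eq (μ := volume)
  by_contra hc
  have : z ∈ ball (0 : Ed d) (fiB d n).rOut := by rw [← h]; exact hc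
  rw [mem_ball_zero_iff] at this
  exact absurd hz (not_le.2 this)
theorem fi_inv_le_one (n : ℕ) : 1 / ((n:ℝ) + 1) ≤ 1 := by
  rw [div_le_one (by positivity)]; simp
theorem fiE_supp1 {d n : ℕ} {z : Ed d} (hz : 1 ≤ ‖z‖) : fiE d n z = 0 :=
  fiE_supp ((fi_inv_le_one n).trans hz)
theorem fiE_lint {d n : ℕ} : ∫⁻ z, ENNReal.ofReal (fiE d n z) = 1 := by
  rw [← ofReal_integral_eq_lintegral_ofReal fiE_integrable (ae_of_all _ fiE_nonneg), fiE_int, ENNReal.ofReal_one]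

theorem fiE_le (d : ℕ) : ∃ A : ℝ, 0 ≤ A ∧ ∀ (n : ℕ) (z : Ed d), fiE d n z ≤ A * (1 / ((n:ℝ) + 1)) ^ (-(d:ℝ)) := by
  refine ⟨2 ^ d / (volume.real (ball (0 : Ed d) 1)), by positivity, fun n z => ?_⟩
  have h := (fiB d n).normed_le_div_measure_closedBall_rOut volume 2 (by
    simp only [fiB]; apply le_of_eq; field_simp) z
  refine h.trans (le_of_eq ?_)
  have h2 : (fiB d n).rOut = 1 / ((n:ℝ) + 1) := rfl
  rw [h2, Measure.addHaar_real_closedBall _ _ (by positivity), finrank_euclideanSpace, Fintype.card_fin,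
    Real.rpow_neg (by positivity), Real.rpow_natCast]
  rw [div_mul_eq_div_div, div_right_comm, div_eq_mul_inv (2 ^ d / _)]

theorem fi_ball_scale {d : ℕ} {g r : ℝ} (hr : 0 < r) :
    ∫ y in ball (0 : Ed d) r, ‖y‖ ^ (-g) = r ^ ((d:ℝ) - g) * ∫ y in ball (0 : Ed d) 1, ‖y‖ ^ (-g) := by
  have h := fi_scale_int hr (indicator (ball (0 : Ed d) 1) (fun y => ‖y‖ ^ (-g)))
  rw [integral_indicator measurableSet_ball] at h
  rw [← h, ← integral_indicator measurableSet_ball, ← integral_const_mul]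
  refine integral_congr_ae (ae_of_all _ fun y => ?_)
  dsimp only
  have hn : ‖r⁻¹ • y‖ = r⁻¹ * ‖y‖ := by
    rw [norm_smul, norm_inv, Real.norm_eq_abs, abs_of_pos hr]
  by_cases hy : y ∈ ball (0 : Ed d) r
  · have hy' : r⁻¹ • y ∈ ball (0 : Ed d) 1 := by
      rw [mem_ball_zero_iff] at hy ⊢
      rw [hn, inv_mul_lt_iff₀ hr, mul_one]; exact hy
    rw [indicator_of_mem hy, indicator_of_mem hy', hn, Real.mul_rpow (by positivity) (norm_nonneg _),
      Real.inv_rpow hr.le, Real.rpow_neg hr.le g, inv_inv, ← mul_assoc, ← mul_assoc, ← Real.rpow_add hr,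
      ← Real.rpow_add hr, show (d:ℝ) - g + -d + g = 0 by ring, Real.rpow_zero, one_mul]
  · have hy' : r⁻¹ • y ∉ ball (0 : Ed d) 1 := by
      rw [mem_ball_zero_iff] at hy ⊢
      rw [hn, inv_mul_lt_iff₀ hr, mul_one]; exact hy
    rw [indicator_of_notMem hy, indicator_of_notMem hy', mul_zero, mul_zero]

theorem fi_A1_pow {d : ℕ} (hd : 1 ≤ d) {g : ℝ} (hg0 : 0 ≤ g) (hg : g < d) :
    ∃ K : ℝ, 0 ≤ K ∧ ∀ (n : ℕ) (x : Ed d), x ≠ 0 →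
      ∫⁻ z, ENNReal.ofReal (fiE d n z * ‖x - z‖ ^ (-g)) ≤ ENNReal.ofReal (K * ‖x‖ ^ (-g)) := by
  obtain ⟨A, hA0, hA⟩ := fiE_le d
  obtain ⟨I, hI⟩ : ∃ I, I = ∫ y in ball (0 : Ed d) 1, ‖y‖ ^ (-g) := ⟨_, rfl⟩
  have hI0 : 0 ≤ I := by rw [hI]; exact integral_nonneg fun y => by positivity
  refine ⟨2 ^ g + A * 3 ^ ((d:ℝ) - g) * I * 2 ^ g, by positivity, fun n x hx => ?_⟩
  obtain ⟨δ, hδ⟩ : ∃ δ : ℝ, δ = 1 / ((n:ℝ) + 1) := ⟨_, rfl⟩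
  have hδ0 : 0 < δ := by rw [hδ]; positivity
  have hx0 : 0 < ‖x‖ := norm_pos_iff.2 hx
  rcases le_total (2 * δ) ‖x‖ with h | h
  · calc ∫⁻ z, ENNReal.ofReal (fiE d n z * ‖x - z‖ ^ (-g)) ≤
        ∫⁻ z, ENNReal.ofReal (fiE d n z) * ENNReal.ofReal (2 ^ g * ‖x‖ ^ (-g)) := by
          refine lintegral_mono fun z => ?_
          rw [← ENNReal.ofReal_mul (fiE_nonneg z)]
          refine ENNReal.ofReal_le_ofReal ?_
          rcases le_total δ ‖z‖ with h1 | h1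
          · rw [fiE_supp (hδ ▸ h1)]; simp
          · refine mul_le_mul_of_nonneg_left ?_ (fiE_nonneg z)
            have h2 : ‖x‖ / 2 ≤ ‖x - z‖ := by have := norm_sub_norm_le x z; linarith
            refine (Real.rpow_le_rpow_of_nonpos (by positivity) h2 (by linarith)).trans (le_of_eq ?_)
            rw [Real.div_rpow hx0.le (by norm_num), Real.rpow_neg (by norm_num : (0:ℝ) ≤ 2), div_inv_eq_mul, mul_comm]
      _ = ENNReal.ofReal (2 ^ g * ‖x‖ ^ (-g)) := by
          rw [lintegral_mul_const _ (fiE_cont.measurable.ennreal_ofReal), fiE_lint, one_mul]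
      _ ≤ _ := by
          refine ENNReal.ofReal_le_ofReal ?_
          have : 0 ≤ A * 3 ^ ((d:ℝ) - g) * I * 2 ^ g * ‖x‖ ^ (-g) := by positivity
          linarith
  · have hbi : Integrable (indicator (ball (0 : Ed d) (3 * δ)) (fun y => ‖y‖ ^ (-g))) :=
      (integrable_indicator_iff measurableSet_ball).2 (fi_ball_integrable hd hg _)
    have hbi2 : Integrable (fun z => A * δ ^ (-(d:ℝ)) * indicator (ball (0 : Ed d) (3 * δ)) (fun y => ‖y‖ ^ (-g)) (x - z)) :=
      (hbi.comp_sub_left x).const_mul _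
    have hval : ∫ z, A * δ ^ (-(d:ℝ)) * indicator (ball (0 : Ed d) (3 * δ)) (fun y => ‖y‖ ^ (-g)) (x - z) =
        A * 3 ^ ((d:ℝ) - g) * I * δ ^ (-g) := by
      rw [integral_const_mul, integral_sub_left_eq_self (indicator (ball (0 : Ed d) (3 * δ)) (fun y => ‖y‖ ^ (-g))) volume x,
        integral_indicator measurableSet_ball, fi_ball_scale (by positivity), ← hI,
        Real.mul_rpow (by norm_num) hδ0.le]
      have : δ ^ (-g) = δ ^ (-(d:ℝ)) * δ ^ ((d:ℝ) - g) := by rw [← Real.rpow_add hδ0]; congr 1; ring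
      rw [this]; ring
    have hnn : ∀ z, 0 ≤ A * δ ^ (-(d:ℝ)) * indicator (ball (0 : Ed d) (3 * δ)) (fun y => ‖y‖ ^ (-g)) (x - z) := fun z =>
      mul_nonneg (by positivity) (indicator_nonneg (fun y _ => by positivity) _)
    calc ∫⁻ z, ENNReal.ofReal (fiE d n z * ‖x - z‖ ^ (-g)) ≤
        ∫⁻ z, ENNReal.ofReal (A * δ ^ (-(d:ℝ)) * indicator (ball (0 : Ed d) (3 * δ)) (fun y => ‖y‖ ^ (-g)) (x - z)) := by
          refine lintegral_mono fun z => ENNReal.ofReal_le_ofReal ?_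
          rcases le_or_gt δ ‖z‖ with h1 | h1
          · rw [fiE_supp (hδ ▸ h1), zero_mul]; exact hnn z
          · rw [indicator_of_mem (by rw [mem_ball_zero_iff]; have := norm_sub_le x z; linarith)]
            refine mul_le_mul_of_nonneg_right ?_ (by positivity)
            rw [hδ]; exact hA n z
      _ = ENNReal.ofReal (A * 3 ^ ((d:ℝ) - g) * I * δ ^ (-g)) := by
          rw [← hval, ofReal_integral_eq_lintegral_ofReal hbi2 (ae_of_all _ hnn)]
      _ ≤ _ := by
          refine ENNReal.ofReal_le_ofReal ?_
          have h3 : δ ^ (-g) ≤ 2 ^ g * ‖x‖ ^ (-g) := by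
            refine (Real.rpow_le_rpow_of_nonpos (by positivity : 0 < ‖x‖ / 2) (by linarith) (by linarith)).trans (le_of_eq ?_)
            rw [Real.div_rpow hx0.le (by norm_num), Real.rpow_neg (by norm_num : (0:ℝ) ≤ 2), div_inv_eq_mul, mul_comm]
          have h4 := mul_le_mul_of_nonneg_left h3 (by positivity : 0 ≤ A * 3 ^ ((d:ℝ) - g) * I)
          have : 0 ≤ 2 ^ g * ‖x‖ ^ (-g) := by positivity
          linarith

open MeasureTheory Filter Metric Set
open scoped Topology ENNReal

theorem fi_w_lower {d : ℕ} (hd : 1 ≤ d) {ρ : Ed d → ℝ} {c C γ₀ γ : ℝ} (hw : TwoPowerWeight d ρ c C γ₀ γ)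
    (hγ₀ : 0 ≤ γ₀) (hγ : 0 ≤ γ) : ∀ᵐ x : Ed d, c * (1 + ‖x‖) ^ (-γ) ≤ ρ x := by
  obtain ⟨hc, hcC, h1, h2⟩ := hw
  have : Nonempty (Fin d) := ⟨⟨0, hd⟩⟩
  have hne : ∀ᵐ x : Ed d, x ≠ 0 := Measure.ae_ne volume 0
  filter_upwards [h1, h2, hne] with x a1 a2 a3
  have hx0 : 0 < ‖x‖ := norm_pos_iff.2 a3
  rcases le_or_gt ‖x‖ 1 with h | h
  · refine le_trans (mul_le_mul_of_nonneg_left ?_ hc.le) (a1 h).1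
    have q1 : (1 + ‖x‖) ^ (-γ) ≤ 1 := Real.rpow_le_one_of_one_le_of_nonpos (by linarith) (by linarith)
    have q2 : 1 ≤ ‖x‖ ^ (-γ₀) := Real.one_le_rpow_of_pos_of_le_one_of_nonpos hx0 h (by linarith)
    linarith
  · refine le_trans (mul_le_mul_of_nonneg_left ?_ hc.le) (a2 h).1
    exact Real.rpow_le_rpow_of_nonpos hx0 (by linarith) (by linarith)

theorem fi_w_locint {d : ℕ} (hd : 1 ≤ d) {ρ : Ed d → ℝ} {c C γ₀ γ : ℝ} (hw : TwoPowerWeight d ρ c C γ₀ γ)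
    (hm : Measurable ρ) (hpos : ∀ x, 0 < ρ x)
    (hγ₀ : γ₀ < d) (hγ : 0 ≤ γ) (r : ℝ) : IntegrableOn ρ (ball 0 r) := by
  obtain ⟨hc, hcC, h1, h2⟩ := hw
  have hi : IntegrableOn (fun x : Ed d => C * (‖x‖ ^ (-γ₀) + 1)) (ball 0 r) :=
    ((fi_ball_integrable hd hγ₀ r).add (integrableOn_const (by exact measure_ball_lt_top.ne))).const_mul C
  refine hi.mono' hm.aestronglyMeasurable (ae_restrict_of_ae ?_)
  filter_upwards [h1, h2] with x a1 a2
  have hn : (0:ℝ) ≤ ‖x‖ ^ (-γ₀) := by positivity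
  have hC : 0 < C := hc.trans hcC
  rw [Real.norm_eq_abs, abs_of_pos (hpos x)]
  rcases le_or_gt ‖x‖ 1 with h | h
  · refine (a1 h).2.trans (mul_le_mul_of_nonneg_left (by linarith) hC.le)
  · refine (a2 h).2.trans (mul_le_mul_of_nonneg_left ?_ hC.le)
    have := Real.rpow_le_one_of_one_le_of_nonpos h.le (by linarith : -γ ≤ 0)
    linarith

/-- The weight is an A₁-type weight with respect to the mollifiers. -/
theorem fi_w_A1 {d : ℕ} (hd : 1 ≤ d) {ρ : Ed d → ℝ} {c C γ₀ γ : ℝ} (hw : TwoPowerWeight d ρ c C γ₀ γ)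
    (hγ₀0 : 0 ≤ γ₀) (hγ₀ : γ₀ < d) (hγ : 0 ≤ γ) :
    ∃ K : ℝ, 0 ≤ K ∧ ∀ n : ℕ, ∀ᵐ x : Ed d,
      ∫⁻ z, ENNReal.ofReal (fiE d n z * ρ (x - z)) ≤ ENNReal.ofReal (K * ρ x) := by
  obtain ⟨hc, hcC, h1, h2⟩ := hw
  have hC : 0 < C := hc.trans hcC
  obtain ⟨K, hK0, hK⟩ := fi_A1_pow hd hγ₀0 hγ₀
  have : Nonempty (Fin d) := ⟨⟨0, hd⟩⟩
  have hne : ∀ᵐ x : Ed d, x ≠ 0 := Measure.ae_ne volume 0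
  have hup : ∀ᵐ y : Ed d, (‖y‖ ≤ 3 → ρ y ≤ C * 3 ^ γ₀ * ‖y‖ ^ (-γ₀)) ∧ (1 < ‖y‖ → ρ y ≤ C * ‖y‖ ^ (-γ)) := by
    filter_upwards [h1, h2] with y a1 a2
    refine ⟨fun h3 => ?_, fun h => (a2 h).2⟩
    have h31 : (1:ℝ) ≤ 3 ^ γ₀ := Real.one_le_rpow (by norm_num) hγ₀0
    rcases le_or_gt ‖y‖ 1 with h | h
    · refine (a1 h).2.trans (mul_le_mul_of_nonneg_right ?_ (by positivity))
      nlinarith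
    · refine (a2 h).2.trans ?_
      rw [mul_assoc]
      refine mul_le_mul_of_nonneg_left ?_ hC.le
      have q1 := Real.rpow_le_one_of_one_le_of_nonpos h.le (by linarith : -γ ≤ 0)
      have q2 : (3:ℝ) ^ (-γ₀) ≤ ‖y‖ ^ (-γ₀) := Real.rpow_le_rpow_of_nonpos (by linarith) h3 (by linarith)
      have q3 : (3:ℝ) ^ γ₀ * 3 ^ (-γ₀) = 1 := by rw [← Real.rpow_add (by norm_num)]; simp
      have q4 := mul_le_mul_of_nonneg_left q2 (by linarith : (0:ℝ) ≤ 3 ^ γ₀)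
      linarith
  refine ⟨C * 3 ^ γ₀ * K * 2 ^ γ / c + C * 2 ^ γ / c, by positivity, fun n => ?_⟩
  filter_upwards [h1, h2, hne] with x a1 a2 a3
  have hx0 : 0 < ‖x‖ := norm_pos_iff.2 a3
  have hup' : ∀ᵐ z : Ed d, (‖x - z‖ ≤ 3 → ρ (x - z) ≤ C * 3 ^ γ₀ * ‖x - z‖ ^ (-γ₀)) ∧
      (1 < ‖x - z‖ → ρ (x - z) ≤ C * ‖x - z‖ ^ (-γ)) :=
    (quasiMeasurePreserving_sub_left volume x).ae hup
  have h22 : (2:ℝ) ^ γ * 2 ^ (-γ) = 1 := by rw [← Real.rpow_add (by norm_num)]; simp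
  rcases le_or_gt ‖x‖ 2 with h | h
  · have lo : c * 2 ^ (-γ) * ‖x‖ ^ (-γ₀) ≤ ρ x := by
      rcases le_or_gt ‖x‖ 1 with h' | h'
      · refine le_trans (mul_le_mul_of_nonneg_right ?_ (by positivity)) (a1 h').1
        have := Real.rpow_le_one_of_one_le_of_nonpos (by norm_num : (1:ℝ) ≤ 2) (by linarith : -γ ≤ 0)
        nlinarith
      · refine le_trans ?_ (a2 h').1
        rw [mul_assoc]
        refine mul_le_mul_of_nonneg_left ?_ hc.le
        have q1 := Real.rpow_le_one_of_one_le_of_nonpos h'.le (by linarith : -γ₀ ≤ 0)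
        have q2 : (2:ℝ) ^ (-γ) ≤ ‖x‖ ^ (-γ) := Real.rpow_le_rpow_of_nonpos (by linarith) h (by linarith)
        have q3 : (0:ℝ) < 2 ^ (-γ) := by positivity
        nlinarith
    calc ∫⁻ z, ENNReal.ofReal (fiE d n z * ρ (x - z))
        ≤ ∫⁻ z, ENNReal.ofReal (C * 3 ^ γ₀) * ENNReal.ofReal (fiE d n z * ‖x - z‖ ^ (-γ₀)) := by
          refine lintegral_mono_ae ?_
          filter_upwards [hup'] with z hz
          rw [← ENNReal.ofReal_mul (by positivity)]
          refine ENNReal.ofReal_le_ofReal ?_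
          rcases le_or_gt 1 ‖z‖ with h1 | h1
          · rw [fiE_supp1 h1]; simp
          · have := hz.1 (by have := norm_sub_le x z; linarith)
            have := mul_le_mul_of_nonneg_left this (fiE_nonneg (n := n) z)
            linarith
      _ = ENNReal.ofReal (C * 3 ^ γ₀) * ∫⁻ z, ENNReal.ofReal (fiE d n z * ‖x - z‖ ^ (-γ₀)) := by
          rw [lintegral_const_mul']; exact ENNReal.ofReal_ne_top
      _ ≤ ENNReal.ofReal (C * 3 ^ γ₀) * ENNReal.ofReal (K * ‖x‖ ^ (-γ₀)) := by
          gcongr; exact hK n x a3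
      _ = ENNReal.ofReal (C * 3 ^ γ₀ * (K * ‖x‖ ^ (-γ₀))) :=
          (ENNReal.ofReal_mul (by positivity)).symm
      _ ≤ _ := by
          refine ENNReal.ofReal_le_ofReal ?_
          have r1 := mul_le_mul_of_nonneg_left lo (by positivity : 0 ≤ C * 3 ^ γ₀ * K * 2 ^ γ / c)
          have r2 : C * 3 ^ γ₀ * K * 2 ^ γ / c * (c * 2 ^ (-γ) * ‖x‖ ^ (-γ₀)) = C * 3 ^ γ₀ * (K * ‖x‖ ^ (-γ₀)) := by
            have : C * 3 ^ γ₀ * K * 2 ^ γ / c * (c * 2 ^ (-γ) * ‖x‖ ^ (-γ₀)) =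
              C * 3 ^ γ₀ * (K * ‖x‖ ^ (-γ₀)) * ((2 ^ γ * 2 ^ (-γ)) * (c / c)) := by ring
            rw [this, h22, div_self hc.ne']; ring
          have r3 : 0 ≤ C * 2 ^ γ / c * ρ x := by
            have : 0 ≤ ρ x := le_trans (by positivity) lo
            positivity
          linarith
  · have lo : c * ‖x‖ ^ (-γ) ≤ ρ x := (a2 (by linarith)).1
    calc ∫⁻ z, ENNReal.ofReal (fiE d n z * ρ (x - z))
        ≤ ∫⁻ z, ENNReal.ofReal (fiE d n z) * ENNReal.ofReal (C * 2 ^ γ * ‖x‖ ^ (-γ)) := by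
          refine lintegral_mono_ae ?_
          filter_upwards [hup'] with z hz
          rw [← ENNReal.ofReal_mul (fiE_nonneg z)]
          refine ENNReal.ofReal_le_ofReal ?_
          rcases le_or_gt 1 ‖z‖ with h1 | h1
          · rw [fiE_supp1 h1]; simp
          · refine mul_le_mul_of_nonneg_left ?_ (fiE_nonneg z)
            have h3 : ‖x‖ / 2 ≤ ‖x - z‖ := by have := norm_sub_norm_le x z; linarith
            refine (hz.2 (by linarith)).trans ?_
            rw [mul_assoc]
            refine mul_le_mul_of_nonneg_left ?_ hC.le
            refine (Real.rpow_le_rpow_of_nonpos (by positivity) h3 (by linarith)).trans (le_of_eq ?_)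
            rw [Real.div_rpow hx0.le (by norm_num), Real.rpow_neg (by norm_num : (0:ℝ) ≤ 2), div_inv_eq_mul, mul_comm]
      _ = ENNReal.ofReal (C * 2 ^ γ * ‖x‖ ^ (-γ)) := by
          rw [lintegral_mul_const _ (fiE_cont.measurable.ennreal_ofReal), fiE_lint, one_mul]
      _ ≤ _ := by
          refine ENNReal.ofReal_le_ofReal ?_
          have r1 := mul_le_mul_of_nonneg_left lo (by positivity : 0 ≤ C * 2 ^ γ / c)
          have r2 : C * 2 ^ γ / c * (c * ‖x‖ ^ (-γ)) = C * 2 ^ γ * ‖x‖ ^ (-γ) := by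
            field_simp
          have r3 : 0 ≤ C * 3 ^ γ₀ * K * 2 ^ γ / c * ρ x := by
            have : 0 ≤ ρ x := le_trans (by positivity) lo
            positivity
          linarith

open MeasureTheory Filter Metric Set
open scoped Topology ENNReal

theorem fi_w_conj {d : ℕ} {p r : ℝ} (hp : 2 ≤ p) (hr : 0 < r) (t : ℝ) :
    |t * r ^ (-(1 / p))| ^ (p / (p - 1)) = |t| ^ (p / (p - 1)) * r ^ (-(p / (p - 1) - 1)) ∧
    |t * r ^ (1 / p)| ^ p = |t| ^ p * r := by
  have hp0 : p ≠ 0 := by linarith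
  have hp1 : p - 1 ≠ 0 := by linarith
  constructor
  · rw [abs_mul, abs_of_pos (by positivity : 0 < r ^ (-(1 / p))), Real.mul_rpow (abs_nonneg _) (by positivity),
      ← Real.rpow_mul hr.le]
    congr 2
    field_simp
    ring
  · rw [abs_mul, abs_of_pos (by positivity : 0 < r ^ (1 / p)), Real.mul_rpow (abs_nonneg _) (by positivity),
      ← Real.rpow_mul hr.le, one_div_mul_cancel hp0, Real.rpow_one]

theorem fi_w_weak {d : ℕ} {p : ℝ} (hp : 2 ≤ p) {ρ : Ed d → ℝ} (hpos : ∀ x, 0 < ρ x) (hm : Measurable ρ)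
    {V g : Ed d → ℝ} {f : ℕ → Ed d → ℝ} {M : ℝ}
    (hV : MemWLp d (p / (p - 1)) (fun x => ρ x ^ (-(p / (p - 1) - 1))) V)
    (hf : ∀ n, MemWLp d p ρ (f n)) (hM : ∀ n, ∫ x, |f n x| ^ p * ρ x ≤ M)
    (hlim : ∀ᵐ x, Tendsto (fun n => f n x) atTop (𝓝 (g x))) :
    MemWLp d p ρ g ∧ ∫ x, |g x| ^ p * ρ x ≤ M ∧ Integrable (fun x => V x * g x) ∧
      Tendsto (fun n => ∫ x, V x * f n x) atTop (𝓝 (∫ x, V x * g x)) := by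
  have hpq : p.HolderConjugate (p / (p - 1)) := Real.HolderConjugate.conjExponent (by linarith)
  have hmr : ∀ q : ℝ, AEStronglyMeasurable (fun x => ρ x ^ q) volume := fun q =>
    (hm.pow_const q).aestronglyMeasurable
  have e1 : ∀ u v r : ℝ, 0 < r → (u * r ^ (-(1 / p))) * (v * r ^ (1 / p)) = u * v := by
    intro u v r hr
    have : r ^ (-(1 / p)) * r ^ (1 / p) = 1 := by rw [← Real.rpow_add hr]; simp
    calc _ = u * v * (r ^ (-(1 / p)) * r ^ (1 / p)) := by ring
      _ = _ := by rw [this, mul_one]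
  have hgm : AEStronglyMeasurable g volume := aestronglyMeasurable_of_tendsto_ae atTop (fun n => (hf n).1) hlim
  obtain ⟨-, h2, h3, h4, h5⟩ := fi_weak_conv (μ := volume) hpq (F := fun x => V x * ρ x ^ (-(1 / p)))
    (g := fun x => g x * ρ x ^ (1 / p)) (f := fun n x => f n x * ρ x ^ (1 / p)) (M := M)
    (hV.1.mul (hmr _)) (hV.2.congr (ae_of_all _ fun x => (fi_w_conj (d := d) hp (hpos x) (V x)).1.symm))
    (fun n => (hf n).1.mul (hmr _))
    (fun n => (hf n).2.congr (ae_of_all _ fun x => (fi_w_conj (d := d) hp (hpos x) (f n x)).2.symm))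
    (fun n => by simp_rw [(fi_w_conj (d := d) hp (hpos _) _).2]; exact hM n)
    (by filter_upwards [hlim] with x hx; exact hx.mul_const _)
  simp_rw [(fi_w_conj (d := d) hp (hpos _) _).2] at h2 h3
  simp_rw [e1 _ _ _ (hpos _)] at h4 h5
  exact ⟨⟨hgm, h2⟩, h3, h4, h5⟩

theorem fi_w_young {d : ℕ} {p : ℝ} (hp : 2 ≤ p) {ρ : Ed d → ℝ} (hpos : ∀ x, 0 < ρ x) (hm : Measurable ρ)
    {V f : Ed d → ℝ} (hV : MemWLp d (p / (p - 1)) (fun x => ρ x ^ (-(p / (p - 1) - 1))) V)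
    (hf : MemWLp d p ρ f) : Integrable (fun x => V x * f x) ∧
    |∫ x, V x * f x| ≤ (∫ x, |V x| ^ (p / (p - 1)) * ρ x ^ (-(p / (p - 1) - 1))) + ∫ x, |f x| ^ p * ρ x := by
  have hpq : p.HolderConjugate (p / (p - 1)) := Real.HolderConjugate.conjExponent (by linarith)
  have hpt : ∀ x, |V x * f x| ≤ |V x| ^ (p / (p - 1)) * ρ x ^ (-(p / (p - 1) - 1)) + |f x| ^ p * ρ x := by
    intro x
    have h1 := (fi_w_conj (d := d) hp (hpos x) (V x)).1
    have h2 := (fi_w_conj (d := d) hp (hpos x) (f x)).2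
    have hy := Real.young_inequality_of_nonneg (abs_nonneg (f x * ρ x ^ (1 / p)))
      (abs_nonneg (V x * ρ x ^ (-(1 / p)))) hpq
    rw [h1, h2, ← abs_mul] at hy
    have e1 : f x * ρ x ^ (1 / p) * (V x * ρ x ^ (-(1 / p))) = V x * f x := by
      have : ρ x ^ (-(1 / p)) * ρ x ^ (1 / p) = 1 := by rw [← Real.rpow_add (hpos x)]; simp
      calc _ = V x * f x * (ρ x ^ (-(1 / p)) * ρ x ^ (1 / p)) := by ring
        _ = _ := by rw [this, mul_one]
    rw [e1] at hy
    have := hpos x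
    have q1 : |f x| ^ p * ρ x / p ≤ |f x| ^ p * ρ x := div_le_self (by positivity) (by linarith)
    have q2 : |V x| ^ (p / (p - 1)) * ρ x ^ (-(p / (p - 1) - 1)) / (p / (p - 1)) ≤
      |V x| ^ (p / (p - 1)) * ρ x ^ (-(p / (p - 1) - 1)) := div_le_self (by positivity) hpq.symm.lt.le
    linarith
  have hi := (hV.2.add hf.2).mono' (hV.1.mul hf.1) (ae_of_all _ hpt)
  refine ⟨hi, ?_⟩
  rw [← integral_add hV.2 hf.2]
  refine abs_integral_le_integral_abs.trans (integral_mono hi.abs (hV.2.add hf.2) hpt)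

theorem fi_bdd_mem {d : ℕ} {p : ℝ} (hp : 2 ≤ p) {ρ : Ed d → ℝ} (hpos : ∀ x, 0 < ρ x) (hm : Measurable ρ)
    (hloc : ∀ r, IntegrableOn ρ (ball 0 r)) {f : Ed d → ℝ} (hf : AEStronglyMeasurable f volume) {A r : ℝ}
    (hA : ∀ x, |f x| ≤ A) (hr : ∀ x, r ≤ ‖x‖ → f x = 0) : MemWLp d p ρ f := by
  refine ⟨hf, ?_⟩
  have hi : Integrable (fun x => A ^ p * (ball (0 : Ed d) r).indicator ρ x) :=
    ((integrable_indicator_iff measurableSet_ball).2 (hloc r)).const_mul _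
  have hmm : AEStronglyMeasurable (fun x => |f x| ^ p) volume :=
    (Real.continuous_rpow_const (by linarith)).comp_aestronglyMeasurable
      (continuous_abs.comp_aestronglyMeasurable hf)
  refine hi.mono' (hmm.mul hm.aestronglyMeasurable) (ae_of_all _ fun x => ?_)
  have := hpos x
  rw [Real.norm_eq_abs, abs_of_nonneg (by positivity)]
  by_cases hx : x ∈ ball (0 : Ed d) r
  · rw [indicator_of_mem hx]
    gcongr
    exact hA x
  · rw [indicator_of_notMem hx, hr x (by simpa using hx)]
    simp [Real.zero_rpow (by linarith : p ≠ 0)]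

theorem fi_V_loc {d : ℕ} {p : ℝ} (hp : 2 ≤ p) {ρ : Ed d → ℝ} (hpos : ∀ x, 0 < ρ x) (hm : Measurable ρ)
    (hloc : ∀ r, IntegrableOn ρ (ball 0 r)) {V : Ed d → ℝ}
    (hV : MemWLp d (p / (p - 1)) (fun x => ρ x ^ (-(p / (p - 1) - 1))) V) (r : ℝ) :
    IntegrableOn V (ball 0 r) := by
  have h1 : MemWLp d p ρ ((ball (0 : Ed d) r).indicator fun _ => (1:ℝ)) := by
    refine fi_bdd_mem (A := 1) (r := r) hp hpos hm hloc
      ((measurable_const.indicator measurableSet_ball).aestronglyMeasurable) (fun x => ?_) (fun x hx => ?_)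
    · by_cases h : x ∈ ball (0 : Ed d) r <;> simp [h]
    · rw [indicator_of_notMem]; simpa using hx
  have h2 := (fi_w_young hp hpos hm hV h1).1
  rw [← integrable_indicator_iff measurableSet_ball]
  refine h2.congr (ae_of_all _ fun x => ?_)
  by_cases h : x ∈ ball (0 : Ed d) r <;> simp [h]

open MeasureTheory Filter Metric Set
open scoped Topology ENNReal

theorem fiT_eq_conv {d n : ℕ} (f : Ed d → ℝ) :
    fiT d n f = MeasureTheory.convolution (fiE d n) f (ContinuousLinearMap.lsmul ℝ ℝ) volume := rfl

theorem fi_locint {d : ℕ} {e : ℝ} (he : 0 ≤ e) {f : Ed d → ℝ} (hf : AEStronglyMeasurable f volume)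
    (hi : Integrable (fun x => f x ^ 2 * fiJ d e x)) : LocallyIntegrable f := by
  have hball : ∀ r, 0 ≤ r → IntegrableOn f (ball 0 r) := by
    intro r hr
    have h1 : IntegrableOn (fun x => 1 + (1 + r) ^ e * (f x ^ 2 * fiJ d e x)) (ball 0 r) :=
      (integrableOn_const (by exact measure_ball_lt_top.ne)).add (hi.const_mul _).integrableOn
    refine h1.mono' hf.restrict ?_
    filter_upwards [ae_restrict_mem measurableSet_ball] with x hx
    have h2 := fi_near_J he hr (mem_ball_zero_iff.1 hx).le
    have h3 := mul_le_mul_of_nonneg_left h2 (sq_nonneg (f x))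
    rw [Real.norm_eq_abs]
    nlinarith [sq_nonneg (|f x| - 1), sq_abs (f x)]
  intro x
  refine ⟨ball 0 (‖x‖ + 1), isOpen_ball.mem_nhds (by simp), hball _ (by positivity)⟩

theorem fi_absJ {d : ℕ} {e : ℝ} (he : (d:ℝ) < e) {f : Ed d → ℝ} (hf : AEStronglyMeasurable f volume)
    (hi : Integrable (fun x => f x ^ 2 * fiJ d e x)) : Integrable (fun x => f x * fiJ d e x) := by
  refine ((fiJ_integrable he).add hi).mono' (hf.mul fiJ_meas.aestronglyMeasurable) (ae_of_all _ fun x => ?_)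
  have := fiJ_pos (d := d) (e := e) x
  rw [Real.norm_eq_abs, abs_mul, abs_of_pos this]
  simp only [Pi.add_apply]
  nlinarith [sq_nonneg (|f x| - 1), sq_abs (f x), abs_nonneg (f x)]

theorem fiT_smooth {d n : ℕ} {f : Ed d → ℝ} (hf : LocallyIntegrable f) : ContDiff ℝ (⊤ : ℕ∞) (fiT d n f) := by
  rw [fiT_eq_conv]
  exact fiE_compact.contDiff_convolution_left _ fiE_smooth hf

theorem fiT_compact {d n : ℕ} {f : Ed d → ℝ} (hf : HasCompactSupport f) : HasCompactSupport (fiT d n f) := by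
  rw [fiT_eq_conv]
  exact fiE_compact.convolution _ hf

theorem fiT_tendsto {d : ℕ} {f : Ed d → ℝ} (hf : LocallyIntegrable f) :
    ∀ᵐ x, Tendsto (fun n => fiT d n f x) atTop (𝓝 (f x)) := by
  refine ContDiffBump.ae_convolution_tendsto_right_of_locallyIntegrable (φ := fun n => fiB d n) (K := 2) ?_ ?_ hf
  · exact tendsto_one_div_add_atTop_nhds_zero_nat
  · refine Eventually.of_forall fun n => ?_
    simp only [fiB]; apply le_of_eq; field_simp

theorem fiT_jensen {d n : ℕ} {p : ℝ} (hp : 2 ≤ p) {f : Ed d → ℝ} (hf : AEStronglyMeasurable f volume) (x : Ed d) :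
    ENNReal.ofReal (|fiT d n f x| ^ p) ≤
      ∫⁻ z, ENNReal.ofReal (fiE d n z) * ENNReal.ofReal (|f (x - z)| ^ p) := by
  have hp0 : 0 < p := by linarith
  obtain ⟨ν, hν⟩ : ∃ ν : Measure (Ed d), ν = volume.withDensity (fun z => ENNReal.ofReal (fiE d n z)) := ⟨_, rfl⟩
  have hmE : Measurable (fun z => ENNReal.ofReal (fiE d n z)) := fiE_cont.measurable.ennreal_ofReal
  have : IsProbabilityMeasure ν := by
    refine ⟨?_⟩
    rw [hν, withDensity_apply _ MeasurableSet.univ, setLIntegral_univ, fiE_lint]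
  have hfx : AEStronglyMeasurable (fun z => f (x - z)) volume :=
    hf.comp_quasiMeasurePreserving (quasiMeasurePreserving_sub_left volume x)
  have hac : ν ≪ volume := by rw [hν]; exact withDensity_absolutelyContinuous _ _
  have h1 := eLpNorm'_le_eLpNorm'_of_exponent_le (p := 1) (q := p) one_pos (by linarith) ν (hfx.mono_ac hac)
  have hintg : ∀ q : ℝ, 0 < q → ∫⁻ z, ‖f (x - z)‖ₑ ^ q ∂ν = ∫⁻ z, ENNReal.ofReal (fiE d n z) * ENNReal.ofReal (|f (x - z)| ^ q) := by
    intro q hq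
    rw [hν, lintegral_withDensity_eq_lintegral_mul₀ hmE.aemeasurable (hfx.enorm.pow_const q)]
    refine lintegral_congr fun z => ?_
    rw [Pi.mul_apply, ← ENNReal.ofReal_rpow_of_nonneg (abs_nonneg _) hq.le, ← Real.norm_eq_abs, ofReal_norm]
  rw [eLpNorm'_eq_lintegral_enorm, eLpNorm'_eq_lintegral_enorm, hintg 1 one_pos, hintg p hp0] at h1
  simp only [Real.rpow_one, div_one, ENNReal.rpow_one] at h1
  have h2 : ENNReal.ofReal |fiT d n f x| ≤ ∫⁻ z, ENNReal.ofReal (fiE d n z) * ENNReal.ofReal |f (x - z)| := by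
    rw [← Real.norm_eq_abs, ofReal_norm]
    refine (enorm_integral_le_lintegral_enorm _).trans (le_of_eq ?_)
    refine lintegral_congr fun z => ?_
    rw [enorm_mul, ← ofReal_norm, ← ofReal_norm, Real.norm_eq_abs, Real.norm_eq_abs, abs_of_nonneg (fiE_nonneg z)]
  rw [← ENNReal.ofReal_rpow_of_nonneg (abs_nonneg _) hp0.le]
  have h3 := ENNReal.rpow_le_rpow (h2.trans h1) hp0.le
  refine h3.trans (le_of_eq ?_)
  rw [← ENNReal.rpow_mul, one_div_mul_cancel hp0.ne', ENNReal.rpow_one]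

theorem fiT_bound {d : ℕ} {p K : ℝ} (hp : 2 ≤ p) {ρ : Ed d → ℝ} (hpos : ∀ x, 0 < ρ x) (hm : Measurable ρ)
    (hK0 : 0 ≤ K) {n : ℕ} (hK : ∀ᵐ x : Ed d, ∫⁻ z, ENNReal.ofReal (fiE d n z * ρ (x - z)) ≤ ENNReal.ofReal (K * ρ x))
    {f : Ed d → ℝ} (hloc : LocallyIntegrable f) (hf : MemWLp d p ρ f) :
    MemWLp d p ρ (fiT d n f) ∧ ∫ x, |fiT d n f x| ^ p * ρ x ≤ K * ∫ x, |f x| ^ p * ρ x := by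
  have hp0 : 0 < p := by linarith
  have hTm : Measurable (fiT d n f) := (fiT_smooth hloc).continuous.measurable
  have hmE : Measurable (fun z => ENNReal.ofReal (fiE d n z)) := fiE_cont.measurable.ennreal_ofReal
  have hfp : AEMeasurable (fun x => ENNReal.ofReal (|f x| ^ p)) volume :=
    ((hf.1.aemeasurable.norm).pow_const p).ennreal_ofReal
  have hlint : ∫⁻ x, ENNReal.ofReal (|fiT d n f x| ^ p * ρ x) ≤ ENNReal.ofReal (K * ∫ x, |f x| ^ p * ρ x) := by
    calc ∫⁻ x, ENNReal.ofReal (|fiT d n f x| ^ p * ρ x)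
        ≤ ∫⁻ x, ∫⁻ y, ENNReal.ofReal (fiE d n (x - y)) * ENNReal.ofReal (|f y| ^ p) * ENNReal.ofReal (ρ x) := by
          refine lintegral_mono fun x => ?_
          dsimp only
          rw [ENNReal.ofReal_mul (by positivity), lintegral_mul_const' _ _ ENNReal.ofReal_ne_top]
          gcongr
          refine (fiT_jensen hp hf.1 x).trans (le_of_eq ?_)
          rw [← lintegral_sub_left_eq_self _ x]
          simp
      _ = ∫⁻ y, ∫⁻ x, ENNReal.ofReal (fiE d n (x - y)) * ENNReal.ofReal (|f y| ^ p) * ENNReal.ofReal (ρ x) := by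
          refine lintegral_lintegral_swap ?_
          refine ((hmE.comp (measurable_fst.sub measurable_snd)).aemeasurable.mul ?_).mul
            (hm.ennreal_ofReal.comp measurable_fst).aemeasurable
          exact hfp.comp_snd
      _ ≤ ∫⁻ y, ENNReal.ofReal (|f y| ^ p) * ENNReal.ofReal (K * ρ y) := by
          refine lintegral_mono_ae ?_
          filter_upwards [hK] with y hy
          calc ∫⁻ x, ENNReal.ofReal (fiE d n (x - y)) * ENNReal.ofReal (|f y| ^ p) * ENNReal.ofReal (ρ x)
              = ∫⁻ x, ENNReal.ofReal (|f y| ^ p) * ENNReal.ofReal (fiE d n (x - y) * ρ x) := by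
                refine lintegral_congr fun x => ?_
                rw [ENNReal.ofReal_mul (fiE_nonneg _)]; ring
            _ = ENNReal.ofReal (|f y| ^ p) * ∫⁻ x, ENNReal.ofReal (fiE d n (x - y) * ρ x) := by
                rw [lintegral_const_mul' _ _ ENNReal.ofReal_ne_top]
            _ = ENNReal.ofReal (|f y| ^ p) * ∫⁻ z, ENNReal.ofReal (fiE d n z * ρ (y - z)) := by
                congr 1
                rw [← lintegral_sub_left_eq_self _ y]
                refine lintegral_congr fun z => ?_
                rw [sub_sub_cancel_left, fiE_even]
            _ ≤ _ := by gcongr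
      _ = ∫⁻ y, ENNReal.ofReal (K * (|f y| ^ p * ρ y)) := by
          refine lintegral_congr fun y => ?_
          rw [← ENNReal.ofReal_mul (by positivity)]; congr 1; ring
      _ = ENNReal.ofReal (K * ∫ x, |f x| ^ p * ρ x) := by
          rw [← integral_const_mul, ofReal_integral_eq_lintegral_ofReal (hf.2.const_mul K)]
          exact ae_of_all _ fun y => by have := hpos y; positivity
  have hmm : AEStronglyMeasurable (fun x => |fiT d n f x| ^ p * ρ x) volume :=
    ((hTm.norm.pow_const p).mul hm).aestronglyMeasurable
  have hnn : ∀ᵐ x, 0 ≤ |fiT d n f x| ^ p * ρ x := ae_of_all _ fun y => by have := hpos y; positivity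
  refine ⟨⟨hTm.aestronglyMeasurable, hmm, ?_⟩, ?_⟩
  · rw [hasFiniteIntegral_iff_ofReal hnn]
    exact hlint.trans_lt ENNReal.ofReal_lt_top
  · rw [integral_eq_lintegral_of_nonneg_ae hnn hmm]
    refine ENNReal.toReal_le_of_le_ofReal (mul_nonneg hK0 (integral_nonneg fun y => ?_)) hlint
    have := hpos y
    positivity

open MeasureTheory Filter Metric Set
open scoped Topology ENNReal

theorem fi_transfer {d n : ℕ} (hd : 1 ≤ d) {s Cds : ℝ} (hs : s ∈ Ioo (0:ℝ) 1) {v V ψ : Ed d → ℝ}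
    (hv : AEStronglyMeasurable v volume)
    (hvJ : Integrable (fun x => v x * fiJ d (d + 2 * s) x)) (hVm : AEStronglyMeasurable V volume)
    (hV : ∀ r, IntegrableOn V (ball 0 r)) (hD : IsDistFracLap d s Cds v V)
    (h : ContDiff ℝ (⊤ : ℕ∞) ψ) (hc : HasCompactSupport ψ) :
    Cds * ∫ x, fiT d n v x * fiLL d (d + 2 * s) ψ x = ∫ x, V x * fiT d n ψ x := by
  obtain ⟨hs0, hs1⟩ := hs
  have he : (d:ℝ) < d + 2 * s := by linarith
  have he2 : (d:ℝ) + 2 * s < d + 2 := by linarith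
  obtain ⟨e, hee⟩ : ∃ e, e = (d:ℝ) + 2 * s := ⟨_, rfl⟩
  rw [← hee] at he he2 hvJ ⊢
  have he0 : 0 ≤ e := (Nat.cast_nonneg d).trans he.le
  obtain ⟨C, hC0, hC⟩ := fiLL_test_bound hd he he2 h hc
  obtain ⟨A, hA⟩ := fi_test_bdd h hc
  have hLm := fiLL_meas hd he he2 h hc
  obtain ⟨r, hr⟩ := hc.isCompact.isBounded.subset_closedBall (0 : Ed d)
  have hψ0 : ∀ x, r < ‖x‖ → ψ x = 0 := fun x hx => by
    by_contra hne
    have := hr (subset_tsupport _ hne)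
    rw [mem_closedBall_zero_iff] at this
    linarith
  -- first Fubini
  have hI1 : Integrable (fun q : Ed d × Ed d => fiE d n q.2 * v (q.1 - q.2) * fiLL d e ψ q.1) (volume.prod volume) := by
    have hb := (fiE_integrable (d := d) (n := n)).convolution_integrand (ContinuousLinearMap.lsmul ℝ ℝ) hvJ.abs (μ := volume) (ν := volume)
    have hmv := (fiE_integrable (d := d) (n := n)).1.convolution_integrand (ContinuousLinearMap.lsmul ℝ ℝ) hv (μ := volume) (ν := volume)
    refine (hb.const_mul (C * 2 ^ e)).mono' (hmv.mul hLm.comp_fst) (ae_of_all _ fun q => ?_)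
    simp only [ContinuousLinearMap.lsmul_apply, smul_eq_mul]
    have hE := fiE_nonneg (n := n) q.2
    rw [Real.norm_eq_abs, abs_mul, abs_mul, abs_of_nonneg hE, abs_mul, abs_of_pos (fiJ_pos _)]
    rcases le_or_gt 1 ‖q.2‖ with h1 | h1
    · rw [fiE_supp1 h1]; simp
    · have h2 := hC q.1
      have h3 := fiJ_shift he0 q.1 (-q.2)
      rw [norm_neg, ← sub_eq_add_neg] at h3
      have h4 : (1 + ‖q.2‖) ^ e ≤ 2 ^ e := Real.rpow_le_rpow (by positivity) (by linarith) he0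
      have h5 : fiJ d e q.1 ≤ 2 ^ e * fiJ d e (q.1 - q.2) :=
        h3.trans (mul_le_mul_of_nonneg_right h4 (fiJ_pos _).le)
      have h6 : |fiLL d e ψ q.1| ≤ C * (2 ^ e * fiJ d e (q.1 - q.2)) :=
        h2.trans (mul_le_mul_of_nonneg_left h5 hC0)
      have h7 := mul_le_mul_of_nonneg_left h6 (by positivity : 0 ≤ fiE d n q.2 * |v (q.1 - q.2)|)
      linarith
  have hI2 : Integrable (fun q : Ed d × Ed d => fiE d n q.1 * (V q.2 * ψ (q.2 + q.1))) (volume.prod volume) := by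
    have hVi : Integrable ((ball (0 : Ed d) (r + 2)).indicator V) := (integrable_indicator_iff measurableSet_ball).2 (hV _)
    have hb := (fiE_integrable (d := d) (n := n)).mul_prod hVi
    refine (hb.norm.const_mul A).mono' ?_ (ae_of_all _ fun q => ?_)
    · refine (fiE_cont.comp continuous_fst).aestronglyMeasurable.mul (hVm.comp_snd.mul ?_)
      exact (h.continuous.comp (continuous_snd.add continuous_fst)).aestronglyMeasurable
    · have hE := fiE_nonneg (n := n) q.1
      rw [Real.norm_eq_abs, Real.norm_eq_abs, abs_mul, abs_mul, abs_mul, abs_of_nonneg hE]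
      rcases le_or_gt 1 ‖q.1‖ with h1 | h1
      · rw [fiE_supp1 h1]; simp
      · by_cases h2 : q.2 ∈ ball (0 : Ed d) (r + 2)
        · rw [indicator_of_mem h2]
          have := mul_le_mul_of_nonneg_left (hA (q.2 + q.1)) (by positivity : 0 ≤ fiE d n q.1 * |V q.2|)
          linarith
        · have h3 : ψ (q.2 + q.1) = 0 := by
            apply hψ0
            rw [mem_ball_zero_iff] at h2
            push Not at h2
            have := norm_sub_le (q.2 + q.1) q.1
            rw [add_sub_cancel_right] at this
            linarith
          rw [h3, indicator_of_notMem h2]; simp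
  have hz : ∀ z, Cds * ∫ x, v x * fiLL d e ψ (x + z) = ∫ x, V x * ψ (x + z) := by
    intro z
    have hsh : ContDiff ℝ (⊤ : ℕ∞) (fun y => ψ (y + z)) := h.comp (contDiff_id.add contDiff_const)
    have hch : HasCompactSupport (fun y => ψ (y + z)) := hc.comp_homeomorph (Homeomorph.addRight z)
    have := hD _ hsh hch
    simp_rw [fi_fracLap_eq hd ⟨hs0, hs1⟩ hsh hch, ← hee, fiLL_shift] at this
    rw [← this, ← integral_const_mul]
    refine integral_congr_ae (ae_of_all _ fun x => ?_)
    dsimp only; ring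
  calc Cds * ∫ x, fiT d n v x * fiLL d e ψ x
      = Cds * ∫ x, ∫ z, fiE d n z * v (x - z) * fiLL d e ψ x := by
        congr 1
        refine integral_congr_ae (ae_of_all _ fun x => ?_)
        dsimp only
        rw [integral_mul_const]; rfl
    _ = Cds * ∫ z, ∫ x, fiE d n z * v (x - z) * fiLL d e ψ x := by
        rw [integral_integral_swap hI1]
    _ = ∫ z, ∫ x, fiE d n z * (V x * ψ (x + z)) := by
        rw [← integral_const_mul]
        refine integral_congr_ae (ae_of_all _ fun z => ?_)
        dsimp only
        rw [integral_const_mul, ← hz z, ← integral_add_right_eq_self _ z]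
        simp_rw [add_sub_cancel_right, mul_assoc]
        rw [integral_const_mul]; ring
    _ = ∫ x, ∫ z, fiE d n z * (V x * ψ (x + z)) := integral_integral_swap hI2
    _ = _ := by
        refine integral_congr_ae (ae_of_all _ fun x => ?_)
        dsimp only
        unfold fiT
        rw [← integral_const_mul, ← integral_neg_eq_self]
        refine integral_congr_ae (ae_of_all _ fun z => ?_)
        dsimp only
        rw [fiE_even, sub_eq_add_neg]; ring

open MeasureTheory Filter Metric Set
open scoped Topology ENNReal

/-! ### energy identities -/

theorem fi_test_supp {d : ℕ} {ψ : Ed d → ℝ} (hc : HasCompactSupport ψ) :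
    ∃ r, 0 < r ∧ ∀ y, r < ‖y‖ → ψ y = 0 := by
  obtain ⟨r, hr⟩ := hc.isCompact.isBounded.subset_closedBall (0 : Ed d)
  refine ⟨max r 1, lt_max_of_lt_right one_pos, fun y hy => ?_⟩
  by_contra hne
  have h1 : y ∈ tsupport ψ := subset_tsupport _ hne
  have h2 := hr h1
  simp only [mem_closedBall, dist_zero_right] at h2
  exact absurd (h2.trans (le_max_left r 1)) (not_le.2 hy)

theorem fi_int_mul_test {d : ℕ} {e : ℝ} (he : 0 ≤ e) {u ψ : Ed d → ℝ}
    (hu : AEStronglyMeasurable u volume) (hui : Integrable (fun x => u x * fiJ d e x))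
    (h : ContDiff ℝ (⊤ : ℕ∞) ψ) (hc : HasCompactSupport ψ) :
    Integrable (fun x => u x * ψ x) := by
  obtain ⟨A, hA⟩ := fi_test_bdd h hc
  have hA0 : 0 ≤ A := (abs_nonneg _).trans (hA 0)
  obtain ⟨r, hr0, hr⟩ := fi_test_supp hc
  refine ((hui.norm).const_mul (A * (1 + r) ^ e)).mono' (hu.mul h.continuous.aestronglyMeasurable)
    (ae_of_all _ fun x => ?_)
  have hJ := fiJ_pos (d := d) (e := e) x
  rw [Real.norm_eq_abs, abs_mul, Real.norm_eq_abs, abs_mul, abs_of_pos hJ]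
  by_cases hx : r < ‖x‖
  · rw [hr x hx, abs_zero, mul_zero]; positivity
  · have hx' : 1 + ‖x‖ ≤ 1 + r := by linarith
    have h1 : 1 ≤ (1 + r) ^ e * fiJ d e x := by
      unfold fiJ
      rw [Real.rpow_neg (by positivity), ← div_eq_mul_inv, one_le_div (by positivity)]
      exact Real.rpow_le_rpow (by positivity) hx' he
    have h2 := mul_le_mul (hA x) h1 zero_le_one hA0
    have h3 := mul_le_mul_of_nonneg_left h2 (abs_nonneg (u x))
    rw [mul_one] at h3
    refine h3.trans (le_of_eq ?_)
    ring

theorem fi_prodK {d : ℕ} {e ε : ℝ} (he : (d:ℝ) < e) (hε : 0 < ε) {a : Ed d → ℝ}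
    (ha : Integrable a) :
    Integrable (fun z : Ed d × Ed d => a z.1 * fiK d e ε (z.1 - z.2)) := by
  have h := (ha.convolution_integrand (ContinuousLinearMap.mul ℝ ℝ)
    (fiK_integrable (d := d) he hε)).swap
  refine h.congr (ae_of_all _ fun z => ?_)
  simp only [Function.comp, Prod.swap, ContinuousLinearMap.mul_apply']
  rw [fiK_symm]

theorem fi_prodK2 {d : ℕ} {e ε : ℝ} (he : 0 ≤ e) (hε : 0 < ε) {u ψ : Ed d → ℝ}
    (hu : AEStronglyMeasurable u volume) (hui : Integrable (fun x => u x * fiJ d e x))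
    (h : ContDiff ℝ (⊤ : ℕ∞) ψ) (hc : HasCompactSupport ψ) :
    Integrable (fun z : Ed d × Ed d => u z.1 * ψ z.2 * fiK d e ε (z.1 - z.2)) := by
  have h1 : Integrable (fun y => ψ y * (1 + ‖y‖) ^ e) := by
    refine Continuous.integrable_of_hasCompactSupport ?_ hc.mul_right
    exact h.continuous.mul ((continuous_const.add continuous_norm).rpow_const (fun x => Or.inr he))
  have h2 := (hui.mul_prod h1).norm.const_mul ((1 / ε + 1) ^ e)
  refine h2.mono' ?_ (ae_of_all _ fun z => ?_)
  · refine ((hu.comp_fst).mul (h.continuous.aestronglyMeasurable.comp_snd)).mul ?_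
    exact (fiK_meas.comp (measurable_fst.sub measurable_snd)).aestronglyMeasurable
  · have hJ := fiJ_pos (d := d) (e := e) z.1
    have hN : 0 ≤ (1 + ‖z.2‖) ^ e := by positivity
    rw [Real.norm_eq_abs, Real.norm_eq_abs, abs_mul, abs_mul, abs_mul, abs_mul, abs_mul,
      abs_of_nonneg (fiK_nonneg _), abs_of_pos hJ, abs_of_nonneg hN]
    have h3 := fiK_le_J he hε (z.1 - z.2)
    have h4 := fiJ_shift he (z.1 - z.2) z.2
    rw [sub_add_cancel] at h4
    have h5 := h3.trans (mul_le_mul_of_nonneg_left h4 (by positivity))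
    have h6 := mul_le_mul_of_nonneg_left h5 (mul_nonneg (abs_nonneg (u z.1)) (abs_nonneg (ψ z.2)))
    refine h6.trans (le_of_eq ?_)
    ring

theorem fi_I1 {d : ℕ} {e ε : ℝ} (he : (d:ℝ) < e) (hε : 0 < ε) {u ψ : Ed d → ℝ}
    (hu : AEStronglyMeasurable u volume) (hui : Integrable (fun x => u x * fiJ d e x))
    (h : ContDiff ℝ (⊤ : ℕ∞) ψ) (hc : HasCompactSupport ψ) :
    Integrable (fun z : Ed d × Ed d => (u z.1 - u z.2) * (ψ z.1 - ψ z.2) * fiK d e ε (z.1 - z.2)) ∧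
    ∫ z : Ed d × Ed d, (u z.1 - u z.2) * (ψ z.1 - ψ z.2) * fiK d e ε (z.1 - z.2)
      = 2 * ∫ x, u x * fiL d e ε ψ x := by
  have he0 : 0 ≤ e := (Nat.cast_nonneg d).trans he.le
  have hF : Integrable (fun z : Ed d × Ed d => u z.1 * (ψ z.1 - ψ z.2) * fiK d e ε (z.1 - z.2)) := by
    refine ((fi_prodK he hε (fi_int_mul_test he0 hu hui h hc)).sub
      (fi_prodK2 he0 hε hu hui h hc)).congr (ae_of_all _ fun z => ?_)
    simp only [Pi.sub_apply]; ring
  have hFs : Integrable (fun z : Ed d × Ed d => u z.2 * (ψ z.2 - ψ z.1) * fiK d e ε (z.2 - z.1)) :=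
    hF.swap
  have e1 : (∫ z : Ed d × Ed d, u z.2 * (ψ z.2 - ψ z.1) * fiK d e ε (z.2 - z.1))
      = ∫ z : Ed d × Ed d, u z.1 * (ψ z.1 - ψ z.2) * fiK d e ε (z.1 - z.2) :=
    integral_prod_swap (μ := (volume : Measure (Ed d))) (ν := (volume : Measure (Ed d)))
      (fun z : Ed d × Ed d => u z.1 * (ψ z.1 - ψ z.2) * fiK d e ε (z.1 - z.2))
  have e2 : (∫ z : Ed d × Ed d, u z.1 * (ψ z.1 - ψ z.2) * fiK d e ε (z.1 - z.2))
      = ∫ x, u x * fiL d e ε ψ x := by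
    rw [show (volume : Measure (Ed d × Ed d)) = (volume : Measure (Ed d)).prod volume from rfl,
      integral_prod _ hF]
    refine integral_congr_ae (ae_of_all _ fun x => ?_)
    dsimp only
    unfold fiL
    rw [← integral_const_mul]
    refine integral_congr_ae (ae_of_all _ fun y => ?_)
    dsimp only; ring
  have hEq : ∀ z : Ed d × Ed d, (u z.1 - u z.2) * (ψ z.1 - ψ z.2) * fiK d e ε (z.1 - z.2)
      = u z.1 * (ψ z.1 - ψ z.2) * fiK d e ε (z.1 - z.2)
        + u z.2 * (ψ z.2 - ψ z.1) * fiK d e ε (z.2 - z.1) := by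
    intro z
    rw [fiK_symm z.2 z.1]; ring
  refine ⟨(hF.add hFs).congr (ae_of_all _ fun z => (hEq z).symm), ?_⟩
  rw [integral_congr_ae (ae_of_all _ hEq), integral_add hF hFs, e1, e2]
  ring

/-- the limit of the right side of the identity -/
theorem fi_I1_lim {d : ℕ} (hd : 1 ≤ d) {e : ℝ} (he : (d:ℝ) < e) (he2 : e < d + 2) {u ψ : Ed d → ℝ}
    (hu : AEStronglyMeasurable u volume) (hui : Integrable (fun x => u x * fiJ d e x))
    (h : ContDiff ℝ (⊤ : ℕ∞) ψ) (hc : HasCompactSupport ψ) :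
    Integrable (fun x => u x * fiLL d e ψ x) ∧
    Tendsto (fun n : ℕ => ∫ x, u x * fiL d e (1 / ((n:ℝ) + 1)) ψ x) atTop
      (𝓝 (∫ x, u x * fiLL d e ψ x)) := by
  obtain ⟨C, hC0, hC⟩ := fiL_test_bound hd he he2 h hc
  obtain ⟨C', hC0', hC'⟩ := fiLL_test_bound hd he he2 h hc
  have hJ := fun x => fiJ_pos (d := d) (e := e) x
  have hε : ∀ n : ℕ, 0 < 1 / ((n:ℝ) + 1) := fun n => by positivity
  have hlim : Tendsto (fun n : ℕ => 1 / ((n:ℝ) + 1)) atTop (𝓝[>] 0) :=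
    tendsto_nhdsWithin_iff.2 ⟨tendsto_one_div_add_atTop_nhds_zero_nat,
      Eventually.of_forall fun n => hε n⟩
  have key : ∀ (A t : ℝ) (x : Ed d), |t| ≤ A * fiJ d e x → ‖u x * t‖ ≤ A * ‖u x * fiJ d e x‖ := by
    intro A t x ht
    rw [Real.norm_eq_abs, Real.norm_eq_abs, abs_mul, abs_mul, abs_of_pos (hJ x)]
    have := mul_le_mul_of_nonneg_left ht (abs_nonneg (u x))
    linarith
  constructor
  · refine (hui.norm.const_mul C').mono' (hu.mul (fiLL_meas hd he he2 h hc)) (ae_of_all _ fun x => ?_)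
    exact key C' _ x (hC' x)
  · refine tendsto_integral_of_dominated_convergence (fun x => C * ‖u x * fiJ d e x‖) ?_
      (hui.norm.const_mul C) ?_ ?_
    · intro n
      refine hu.mul ?_
      unfold fiL
      have hm : Measurable (fun q : Ed d × Ed d => (ψ q.1 - ψ q.2) * fiK d e (1 / ((n:ℝ) + 1)) (q.1 - q.2)) :=
        ((h.continuous.measurable.comp measurable_fst).sub
          (h.continuous.measurable.comp measurable_snd)).mul
          (fiK_meas.comp (measurable_fst.sub measurable_snd))
      exact (StronglyMeasurable.integral_prod_right' (ν := volume) hm.stronglyMeasurable).aestronglyMeasurable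
    · intro n
      exact ae_of_all _ fun x => key C _ x (hC _ (hε n) x)
    · exact ae_of_all _ fun x =>
        ((fiL_test_tendsto hd he he2 h hc x).comp hlim).const_mul (u x)

theorem fi_fatou {α : Type*} [MeasurableSpace α] {μ : Measure α} {f : ℕ → α → ℝ} {g : α → ℝ}
    {M : ℕ → ℝ} {M' : ℝ}
    (hf : ∀ n, Integrable (f n) μ) (hf0 : ∀ n, 0 ≤ᵐ[μ] f n)
    (hM : ∀ n, ∫ x, f n x ∂μ ≤ M n) (hMl : Tendsto M atTop (𝓝 M'))
    (hlim : ∀ᵐ x ∂μ, Tendsto (fun n => f n x) atTop (𝓝 (g x))) :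
    Integrable g μ ∧ ∫ x, g x ∂μ ≤ M' := by
  have hgm : AEStronglyMeasurable g μ :=
    aestronglyMeasurable_of_tendsto_ae atTop (fun n => (hf n).aestronglyMeasurable) hlim
  have hall : ∀ᵐ x ∂μ, ∀ n, 0 ≤ f n x := ae_all_iff.2 hf0
  have hg0 : 0 ≤ᵐ[μ] g := by
    filter_upwards [hall, hlim] with x h1 h2
    exact ge_of_tendsto' h2 h1
  have hM0 : 0 ≤ M' := ge_of_tendsto' hMl fun n =>
    (integral_nonneg_of_ae (hf0 n)).trans (hM n)
  have h1 : ∫⁻ x, ENNReal.ofReal (g x) ∂μ ≤ ENNReal.ofReal M' := by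
    calc ∫⁻ x, ENNReal.ofReal (g x) ∂μ
        = ∫⁻ x, liminf (fun n => ENNReal.ofReal (f n x)) atTop ∂μ := by
          refine lintegral_congr_ae ?_
          filter_upwards [hlim] with x hx
          exact ((ENNReal.tendsto_ofReal hx).liminf_eq).symm
      _ ≤ liminf (fun n => ∫⁻ x, ENNReal.ofReal (f n x) ∂μ) atTop :=
          lintegral_liminf_le' fun n => (hf n).aestronglyMeasurable.aemeasurable.ennreal_ofReal
      _ ≤ liminf (fun n => ENNReal.ofReal (M n)) atTop := by
          refine liminf_le_liminf (Eventually.of_forall fun n => ?_)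
          rw [← ofReal_integral_eq_lintegral_ofReal (hf n) (hf0 n)]
          exact ENNReal.ofReal_le_ofReal (hM n)
      _ = ENNReal.ofReal M' := (ENNReal.tendsto_ofReal hMl).liminf_eq
  refine ⟨⟨hgm, ?_⟩, ?_⟩
  · rw [hasFiniteIntegral_iff_ofReal hg0]
    exact h1.trans_lt ENNReal.ofReal_lt_top
  · rw [integral_eq_lintegral_of_nonneg_ae hg0 hgm]
    exact ENNReal.toReal_le_of_le_ofReal hM0 h1

theorem fi_one_div_lim : Tendsto (fun n : ℕ => 1 / ((n:ℝ) + 1)) atTop (𝓝[>] 0) :=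
  tendsto_nhdsWithin_iff.2 ⟨tendsto_one_div_add_atTop_nhds_zero_nat,
      Eventually.of_forall fun n => by simp only [mem_Ioi]; positivity⟩

set_option maxHeartbeats 1000000 in
/-- first energy estimate -/
theorem fi_E2 {d : ℕ} (hd : 1 ≤ d) {e : ℝ} (he : (d:ℝ) < e) (he2 : e < d + 2) {u χ : Ed d → ℝ}
    (hu : ContDiff ℝ (⊤ : ℕ∞) u) (hi : Integrable (fun x => u x ^ 2 * fiJ d e x))
    (h : ContDiff ℝ (⊤ : ℕ∞) χ) (hc : HasCompactSupport χ) (hχ0 : ∀ x, 0 ≤ χ x) :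
    Integrable (fun z : Ed d × Ed d => (χ z.1 + χ z.2) * (u z.1 - u z.2) ^ 2 * ‖z.1 - z.2‖ ^ (-e)) ∧
    ∫ z : Ed d × Ed d, (χ z.1 + χ z.2) * (u z.1 - u z.2) ^ 2 * ‖z.1 - z.2‖ ^ (-e)
      ≤ 4 * (∫ x, u x * fiLL d e (fun y => χ y * u y) x) - 2 * ∫ x, u x ^ 2 * fiLL d e χ x := by
  have he0 : 0 < e := lt_of_le_of_lt (Nat.cast_nonneg d) he
  have hum := hu.continuous.aestronglyMeasurable (μ := (volume : Measure (Ed d)))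
  have hu2m : AEStronglyMeasurable (fun x => u x ^ 2) volume := (hu.continuous.pow 2).aestronglyMeasurable
  have hui := fi_absJ he hum hi
  have hcu : HasCompactSupport (fun y => χ y * u y) := hc.mul_right
  have hsu : ContDiff ℝ (⊤ : ℕ∞) (fun y => χ y * u y) := h.mul hu
  have hl1 := (fi_I1_lim hd he he2 hum hui hsu hcu).2
  have hl2 := (fi_I1_lim hd he he2 hu2m hi h hc).2
  have hε : ∀ n : ℕ, 0 < 1 / ((n:ℝ) + 1) := fun n => by positivity
  have hEq : ∀ (n : ℕ) (z : Ed d × Ed d), (χ z.1 + χ z.2) * (u z.1 - u z.2) ^ 2 * fiK d e (1 / ((n:ℝ) + 1)) (z.1 - z.2)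
      = 2 * ((u z.1 - u z.2) * (χ z.1 * u z.1 - χ z.2 * u z.2) * fiK d e (1 / ((n:ℝ) + 1)) (z.1 - z.2))
        - (u z.1 ^ 2 - u z.2 ^ 2) * (χ z.1 - χ z.2) * fiK d e (1 / ((n:ℝ) + 1)) (z.1 - z.2) := by
    intro n z; ring
  have hI1 := fun n : ℕ => fi_I1 he (hε n) hum hui hsu hcu
  have hI2 := fun n : ℕ => fi_I1 he (hε n) hu2m hi h hc
  refine fi_fatou (f := fun (n : ℕ) (z : Ed d × Ed d) => (χ z.1 + χ z.2) * (u z.1 - u z.2) ^ 2 * fiK d e (1 / ((n:ℝ) + 1)) (z.1 - z.2))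
    (M := fun n : ℕ => 4 * (∫ x, u x * fiL d e (1 / ((n:ℝ) + 1)) (fun y => χ y * u y) x) - 2 * ∫ x, u x ^ 2 * fiL d e (1 / ((n:ℝ) + 1)) χ x)
    ?_ ?_ ?_ ((hl1.const_mul 4).sub (hl2.const_mul 2)) ?_
  · intro n
    exact (((hI1 n).1.const_mul 2).sub (hI2 n).1).congr (ae_of_all _ fun z => (hEq n z).symm)
  · intro n
    refine ae_of_all _ fun z => ?_
    have := fiK_nonneg (d := d) (e := e) (ε := 1 / ((n:ℝ) + 1)) (z.1 - z.2)
    have := hχ0 z.1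
    have := hχ0 z.2
    simp only [Pi.zero_apply]
    positivity
  · intro n
    rw [integral_congr_ae (ae_of_all _ (hEq n)), integral_sub ((hI1 n).1.const_mul 2) (hI2 n).1,
      integral_const_mul, (hI1 n).2, (hI2 n).2]
    linarith
  · refine ae_of_all _ fun z => ?_
    exact ((fiK_tendsto he0 (z.1 - z.2)).comp fi_one_div_lim).const_mul _

set_option maxHeartbeats 1000000 in
/-- second energy estimate -/
theorem fi_E3 {d : ℕ} (hd : 1 ≤ d) {e : ℝ} (he : (d:ℝ) < e) (he2 : e < d + 2) {u χ : Ed d → ℝ}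
    (hu : ContDiff ℝ (⊤ : ℕ∞) u) (hi : Integrable (fun x => u x ^ 2 * fiJ d e x))
    (h : ContDiff ℝ (⊤ : ℕ∞) χ) (hc : HasCompactSupport χ) (hχ0 : ∀ x, 0 ≤ χ x) (hχ1 : ∀ x, χ x ≤ 1)
    (hE : Integrable (fun z : Ed d × Ed d => (u z.1 - u z.2) ^ 2 * ‖z.1 - z.2‖ ^ (-e))) :
    Integrable (fun z : Ed d × Ed d => (χ z.1 * u z.1 - χ z.2 * u z.2) ^ 2 * ‖z.1 - z.2‖ ^ (-e)) ∧
    ∫ z : Ed d × Ed d, (χ z.1 * u z.1 - χ z.2 * u z.2) ^ 2 * ‖z.1 - z.2‖ ^ (-e)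
      ≤ (∫ z : Ed d × Ed d, (u z.1 - u z.2) ^ 2 * ‖z.1 - z.2‖ ^ (-e))
        + 2 * ∫ x, χ x * u x ^ 2 * fiLL d e χ x := by
  have he0 : 0 < e := lt_of_le_of_lt (Nat.cast_nonneg d) he
  have hum := hu.continuous.aestronglyMeasurable (μ := (volume : Measure (Ed d)))
  have hum2 : AEStronglyMeasurable (fun y => χ y * u y ^ 2) volume :=
    (h.continuous.mul (hu.continuous.pow 2)).aestronglyMeasurable
  have hui := fi_absJ he hum hi
  have hcu : HasCompactSupport (fun y => χ y * u y) := hc.mul_right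
  have hsu : ContDiff ℝ (⊤ : ℕ∞) (fun y => χ y * u y) := h.mul hu
  have hi2 : Integrable (fun x => χ x * u x ^ 2 * fiJ d e x) := by
    refine hi.mono' (hum2.mul fiJ_meas.aestronglyMeasurable) (ae_of_all _ fun x => ?_)
    have h0 : 0 ≤ u x ^ 2 * fiJ d e x := mul_nonneg (sq_nonneg _) (fiJ_pos x).le
    rw [mul_assoc, Real.norm_eq_abs, abs_of_nonneg (mul_nonneg (hχ0 x) h0)]
    exact mul_le_of_le_one_left h0 (hχ1 x)
  have hl2 := (fi_I1_lim hd he he2 hum2 hi2 h hc).2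
  have hε : ∀ n : ℕ, 0 < 1 / ((n:ℝ) + 1) := fun n => by positivity
  have hI2 := fun n : ℕ => fi_I1 he (hε n) hum2 hi2 h hc
  have hEq : ∀ (n : ℕ) (z : Ed d × Ed d), (χ z.1 * u z.1 - χ z.2 * u z.2) ^ 2 * fiK d e (1 / ((n:ℝ) + 1)) (z.1 - z.2)
      = χ z.1 * χ z.2 * ((u z.1 - u z.2) ^ 2 * fiK d e (1 / ((n:ℝ) + 1)) (z.1 - z.2))
        + (χ z.1 * u z.1 ^ 2 - χ z.2 * u z.2 ^ 2) * (χ z.1 - χ z.2) * fiK d e (1 / ((n:ℝ) + 1)) (z.1 - z.2) := by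
    intro n z; ring
  have hKm : ∀ n : ℕ, AEStronglyMeasurable (fun z : Ed d × Ed d => fiK d e (1 / ((n:ℝ) + 1)) (z.1 - z.2)) volume :=
    fun n => (fiK_meas.comp (measurable_fst.sub measurable_snd)).aestronglyMeasurable
  have hb : ∀ (n : ℕ) (z : Ed d × Ed d), χ z.1 * χ z.2 * ((u z.1 - u z.2) ^ 2 * fiK d e (1 / ((n:ℝ) + 1)) (z.1 - z.2))
      ≤ (u z.1 - u z.2) ^ 2 * ‖z.1 - z.2‖ ^ (-e) := by
    intro n z
    have h1 : χ z.1 * χ z.2 ≤ 1 := mul_le_one₀ (hχ1 _) (hχ0 _) (hχ1 _)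
    have h2 : 0 ≤ (u z.1 - u z.2) ^ 2 * fiK d e (1 / ((n:ℝ) + 1)) (z.1 - z.2) :=
      mul_nonneg (sq_nonneg _) (fiK_nonneg _)
    exact (mul_le_of_le_one_left h2 h1).trans (mul_le_mul_of_nonneg_left (fiK_le _) (sq_nonneg _))
  have hb0 : ∀ (n : ℕ) (z : Ed d × Ed d), 0 ≤ χ z.1 * χ z.2 * ((u z.1 - u z.2) ^ 2 * fiK d e (1 / ((n:ℝ) + 1)) (z.1 - z.2)) :=
    fun n z => mul_nonneg (mul_nonneg (hχ0 _) (hχ0 _)) (mul_nonneg (sq_nonneg _) (fiK_nonneg _))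
  have hI1 : ∀ n : ℕ, Integrable (fun z : Ed d × Ed d => χ z.1 * χ z.2 * ((u z.1 - u z.2) ^ 2 * fiK d e (1 / ((n:ℝ) + 1)) (z.1 - z.2))) := by
    intro n
    refine hE.mono' ?_ (ae_of_all _ fun z => ?_)
    · refine AEStronglyMeasurable.mul ?_ (AEStronglyMeasurable.mul ?_ (hKm n))
      · have := h.continuous
        exact (Continuous.aestronglyMeasurable (by fun_prop))
      · have := hu.continuous
        exact (Continuous.aestronglyMeasurable (by fun_prop))
    · rw [Real.norm_eq_abs, abs_of_nonneg (hb0 n z)]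
      exact hb n z
  refine fi_fatou (f := fun (n : ℕ) (z : Ed d × Ed d) => (χ z.1 * u z.1 - χ z.2 * u z.2) ^ 2 * fiK d e (1 / ((n:ℝ) + 1)) (z.1 - z.2))
    (M := fun n : ℕ => (∫ z : Ed d × Ed d, (u z.1 - u z.2) ^ 2 * ‖z.1 - z.2‖ ^ (-e)) + 2 * ∫ x, χ x * u x ^ 2 * fiL d e (1 / ((n:ℝ) + 1)) χ x)
    ?_ ?_ ?_ ((hl2.const_mul 2).const_add _) ?_
  · intro n
    exact ((hI1 n).add (hI2 n).1).congr (ae_of_all _ fun z => (hEq n z).symm)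
  · intro n
    exact ae_of_all _ fun z => mul_nonneg (sq_nonneg _) (fiK_nonneg _)
  · intro n
    rw [integral_congr_ae (ae_of_all _ (hEq n)), integral_add (hI1 n) (hI2 n).1, (hI2 n).2]
    have := integral_mono (hI1 n) hE (hb n)
    linarith
  · refine ae_of_all _ fun z => ?_
    exact ((fiK_tendsto he0 (z.1 - z.2)).comp fi_one_div_lim).const_mul _

/-- bilinear identity against test functions -/
theorem fi_B {d : ℕ} (hd : 1 ≤ d) {e : ℝ} (he : (d:ℝ) < e) (he2 : e < d + 2) {u ψ : Ed d → ℝ}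
    (hum : AEStronglyMeasurable u volume) (hui : Integrable (fun x => u x * fiJ d e x))
    (h : ContDiff ℝ (⊤ : ℕ∞) ψ) (hc : HasCompactSupport ψ)
    (hE : Integrable (fun z : Ed d × Ed d => (u z.1 - u z.2) ^ 2 * ‖z.1 - z.2‖ ^ (-e)))
    (hE' : Integrable (fun z : Ed d × Ed d => (ψ z.1 - ψ z.2) ^ 2 * ‖z.1 - z.2‖ ^ (-e))) :
    ∫ z : Ed d × Ed d, (u z.1 - u z.2) * (ψ z.1 - ψ z.2) * ‖z.1 - z.2‖ ^ (-e)
      = 2 * ∫ x, u x * fiLL d e ψ x := by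
  have he0 : 0 < e := lt_of_le_of_lt (Nat.cast_nonneg d) he
  have hε : ∀ n : ℕ, 0 < 1 / ((n:ℝ) + 1) := fun n => by positivity
  have hI1 := fun n : ℕ => fi_I1 he (hε n) hum hui h hc
  have hl1 := (fi_I1_lim hd he he2 hum hui h hc).2.const_mul 2
  refine tendsto_nhds_unique ?_ hl1
  simp only [← (hI1 _).2]
  refine tendsto_integral_of_dominated_convergence
    (fun z : Ed d × Ed d => (u z.1 - u z.2) ^ 2 * ‖z.1 - z.2‖ ^ (-e) + (ψ z.1 - ψ z.2) ^ 2 * ‖z.1 - z.2‖ ^ (-e))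
    (fun n => (hI1 n).1.aestronglyMeasurable) (hE.add hE') ?_ ?_
  · intro n
    refine ae_of_all _ fun z => ?_
    rw [Real.norm_eq_abs, abs_mul, abs_of_nonneg (fiK_nonneg _), ← add_mul, abs_mul]
    have h1 : |u z.1 - u z.2| * |ψ z.1 - ψ z.2| ≤ (u z.1 - u z.2) ^ 2 + (ψ z.1 - ψ z.2) ^ 2 := by
      rw [← sq_abs (u z.1 - u z.2), ← sq_abs (ψ z.1 - ψ z.2)]
      nlinarith [sq_nonneg (|u z.1 - u z.2| - |ψ z.1 - ψ z.2|), sq_nonneg (|u z.1 - u z.2|),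
        sq_nonneg (|ψ z.1 - ψ z.2|)]
    exact mul_le_mul h1 (fiK_le _) (fiK_nonneg _) (by positivity)
  · refine ae_of_all _ fun z => ?_
    exact ((fiK_tendsto he0 (z.1 - z.2)).comp fi_one_div_lim).const_mul _

open MeasureTheory Filter Metric Set
open scoped Topology ENNReal

/-! ### assembly -/

def fiCut (d : ℕ) (e : ℝ) (f : Ed d → ℝ) : Prop :=
  Integrable (fun x => f x ^ 2 * fiJ d e x) ∧
  ∃ χ r : ℕ → Ed d → ℝ, (∀ n, ContDiff ℝ (⊤ : ℕ∞) (χ n)) ∧ (∀ n, HasCompactSupport (χ n)) ∧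
      (∀ n x, 0 ≤ χ n x) ∧ (∀ n x, χ n x ≤ 1) ∧ (∀ x, Tendsto (fun n => χ n x) atTop (𝓝 1)) ∧
      (∀ n, Measurable (r n)) ∧ (∀ n x, 0 ≤ r n x) ∧ (∀ n, ∃ K, ∀ x, r n x ≤ K * fiJ d e x) ∧
      (∀ n x, - r n x ≤ fiLL d e (χ n) x) ∧ (∀ n, ∫ x, f x ^ 2 * r n x ≤ 1)

structure FiCtx (d : ℕ) (s p : ℝ) (ρ : Ed d → ℝ) : Prop where
  hd : 1 ≤ d
  hs : s ∈ Ioo (0:ℝ) 1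
  hp : 2 ≤ p
  hpos : ∀ x, 0 < ρ x
  hm : Measurable ρ
  hloc : ∀ r, IntegrableOn ρ (ball 0 r)
  hA1 : ∃ K : ℝ, 0 ≤ K ∧ ∀ n : ℕ, ∀ᵐ x : Ed d,
      ∫⁻ z, ENNReal.ofReal (fiE d n z * ρ (x - z)) ≤ ENNReal.ofReal (K * ρ x)
  hcut : ∀ f, MemWLp d p ρ f → fiCut d ((d:ℝ) + 2 * s) f

theorem fi_ctx {d : ℕ} (hd : 1 ≤ d) {s : ℝ} (hs : s ∈ Set.Ioo (0:ℝ) 1) {p : ℝ}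
    (hp : ((d:ℝ) ≤ 2 * s ∧ 2 ≤ p) ∨
          (2 * s < (d:ℝ) ∧ 2 ≤ p ∧ p ≤ 2 * d / ((d:ℝ) - 2 * s)))
    {ρ : Ed d → ℝ} (hρpos : ∀ x, 0 < ρ x) (hρm : Measurable ρ)
    {c C γ₀ γ : ℝ} (hw : TwoPowerWeight d ρ c C γ₀ γ)
    (hγ₀ : γ₀ ∈ Set.Ico (0:ℝ) d)
    (hγ : γ ∈ Set.Icc (0:ℝ) (max (d:ℝ) ((d:ℝ) - (p / 2) * ((d:ℝ) - 2 * s)))) :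
    FiCtx d s p ρ := by
  have hp2 : 2 ≤ p := by rcases hp with h | h; exacts [h.2, h.2.1]
  have hd0 : (1:ℝ) ≤ d := by exact_mod_cast hd
  refine ⟨hd, hs, hp2, hρpos, hρm, fi_w_locint hd hw hρm hρpos hγ₀.2 hγ.1,
    fi_w_A1 hd hw hγ₀.1 hγ₀.2 hγ.1, fun f hf => ?_⟩
  have hc : 0 < c := hw.1
  have hfi : Integrable (fun x => |f x| ^ p * (1 + ‖x‖) ^ (-γ)) := by
    refine (hf.2.const_mul c⁻¹).mono' ?_ ?_
    · refine AEStronglyMeasurable.mul ?_ ?_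
      · exact (Real.continuous_rpow_const (by linarith)).comp_aestronglyMeasurable
          (continuous_abs.comp_aestronglyMeasurable hf.1)
      · exact ((measurable_const.add measurable_norm).pow_const _).aestronglyMeasurable
    · filter_upwards [fi_w_lower hd hw hγ₀.1 hγ.1] with x hx
      have h0 : 0 ≤ |f x| ^ p := by positivity
      rw [Real.norm_eq_abs, abs_of_nonneg (by positivity)]
      have h1 : (1 + ‖x‖) ^ (-γ) ≤ c⁻¹ * ρ x := by
        rw [inv_mul_eq_div, le_div_iff₀ hc]; linarith
      have := mul_le_mul_of_nonneg_left h1 h0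
      linarith
  have h2s := hs.1
  have h2s' := hs.2
  rcases hp with ⟨hds, _⟩ | ⟨hds, _, hp3⟩
  · have hx : γ ≤ (d:ℝ) - (p / 2) * ((d:ℝ) - 2 * s) := by
      have : (d:ℝ) ≤ (d:ℝ) - (p / 2) * ((d:ℝ) - 2 * s) := by nlinarith
      have h3 := hγ.2
      rwa [max_eq_right this] at h3
    have hN := fi_N hd (b := 2 * s) (e := (d:ℝ) + 2 * s) hp2 hγ.1 (by linarith) (by linarith)
      (by linarith) hf.1 hfi
    refine ⟨hN.1, fi_cutoff hd (a := 0) le_rfl (by linarith) (by linarith) (by linarith)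
      (fun h => absurd h (lt_irrefl _)) ?_⟩
    have h4 : (0:ℝ) + ((d:ℝ) + 2 * s - d) = 2 * s := by ring
    rw [h4]; exact hN.2
  · have hpos : 0 < (d:ℝ) - 2 * s := by linarith
    have hx : γ ≤ (d:ℝ) := by
      have : (d:ℝ) - (p / 2) * ((d:ℝ) - 2 * s) ≤ (d:ℝ) := by nlinarith
      have h3 := hγ.2
      rwa [max_eq_left this] at h3
    have hp4 : p * ((d:ℝ) - 2 * s) ≤ 2 * d := (le_div_iff₀ hpos).1 hp3
    have hN := fi_N hd (b := (d:ℝ)) (e := (d:ℝ) + 2 * s) hp2 hγ.1 (by linarith) (by linarith)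
      (by linarith) hf.1 hfi
    refine ⟨hN.1, fi_cutoff hd (a := (d:ℝ) - 2 * s) hpos.le (by linarith) (by linarith) (by linarith)
      (fun h => by ring) ?_⟩
    have h4 : (d:ℝ) - 2 * s + ((d:ℝ) + 2 * s - d) = d := by ring
    rw [h4]; exact hN.2

theorem fi_mul_mem {d : ℕ} {p : ℝ} (hp : 2 ≤ p) {ρ : Ed d → ℝ} (hpos : ∀ x, 0 < ρ x) (hm : Measurable ρ)
    {χ u : Ed d → ℝ} (hχ : Continuous χ) (h0 : ∀ x, 0 ≤ χ x) (h1 : ∀ x, χ x ≤ 1)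
    (hu : MemWLp d p ρ u) : MemWLp d p ρ (fun x => χ x * u x) ∧
      ∫ x, |χ x * u x| ^ p * ρ x ≤ ∫ x, |u x| ^ p * ρ x := by
  have hmm : AEStronglyMeasurable (fun x => χ x * u x) volume := hχ.aestronglyMeasurable.mul hu.1
  have hb : ∀ x, |χ x * u x| ^ p * ρ x ≤ |u x| ^ p * ρ x := by
    intro x
    refine mul_le_mul_of_nonneg_right ?_ (hpos x).le
    refine Real.rpow_le_rpow (abs_nonneg _) ?_ (by linarith)
    rw [abs_mul, abs_of_nonneg (h0 x)]
    exact mul_le_of_le_one_left (abs_nonneg _) (h1 x)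
  have hi : Integrable (fun x => |χ x * u x| ^ p * ρ x) := by
    refine hu.2.mono' (AEStronglyMeasurable.mul ?_ hm.aestronglyMeasurable) (ae_of_all _ fun x => ?_)
    · exact (Real.continuous_rpow_const (by linarith)).comp_aestronglyMeasurable
          (continuous_abs.comp_aestronglyMeasurable hmm)
    · have := hpos x
      rw [Real.norm_eq_abs, abs_of_nonneg (by positivity)]
      exact hb x
  exact ⟨⟨hmm, hi⟩, integral_mono hi hu.2 hb⟩

theorem FiCtx.base {d : ℕ} {s p : ℝ} {ρ : Ed d → ℝ} (H : FiCtx d s p ρ) {f : Ed d → ℝ}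
    (hf : MemWLp d p ρ f) : Integrable (fun x => f x ^ 2 * fiJ d ((d:ℝ) + 2 * s) x) ∧
      Integrable (fun x => f x * fiJ d ((d:ℝ) + 2 * s) x) ∧ LocallyIntegrable f := by
  have h1 := (H.hcut f hf).1
  have := H.hs.1
  exact ⟨h1, fi_absJ (by linarith) hf.1 h1, fi_locint (by positivity) hf.1 h1⟩

set_option maxHeartbeats 1000000 in
theorem fi_key {d : ℕ} {s p Cds : ℝ} {ρ : Ed d → ℝ} (H : FiCtx d s p ρ) (hC : 0 < Cds)
    {v V : Ed d → ℝ} (hv : MemX d s Cds p ρ v V) :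
    ∃ M, ∀ n, (Integrable (fun z : Ed d × Ed d =>
        (fiT d n v z.1 - fiT d n v z.2) ^ 2 * ‖z.1 - z.2‖ ^ (-((d:ℝ) + 2 * s))) ∧
      ∫ z : Ed d × Ed d, (fiT d n v z.1 - fiT d n v z.2) ^ 2 * ‖z.1 - z.2‖ ^ (-((d:ℝ) + 2 * s)) ≤ M) ∧
      ∃ χ : ℕ → Ed d → ℝ, (∀ k, ContDiff ℝ (⊤ : ℕ∞) (χ k)) ∧ (∀ k, HasCompactSupport (χ k)) ∧
        (∀ k x, 0 ≤ χ k x) ∧ (∀ k x, χ k x ≤ 1) ∧ (∀ x, Tendsto (fun k => χ k x) atTop (𝓝 1)) ∧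
        ∀ k, Integrable (fun z : Ed d × Ed d =>
          (χ k z.1 * fiT d n v z.1 - χ k z.2 * fiT d n v z.2) ^ 2 * ‖z.1 - z.2‖ ^ (-((d:ℝ) + 2 * s))) ∧
        ∫ z : Ed d × Ed d, (χ k z.1 * fiT d n v z.1 - χ k z.2 * fiT d n v z.2) ^ 2
          * ‖z.1 - z.2‖ ^ (-((d:ℝ) + 2 * s)) ≤ M := by
  obtain ⟨K, hK0, hK⟩ := H.hA1
  obtain ⟨hvm, hD, hV⟩ := hv
  have hs := H.hs
  obtain ⟨e, hee⟩ : ∃ e : ℝ, e = (d:ℝ) + 2 * s := ⟨_, rfl⟩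
  have he : (d:ℝ) < e := by rw [hee]; linarith [hs.1]
  have he2 : e < d + 2 := by rw [hee]; linarith [hs.2]
  have hbv := H.base hvm
  obtain ⟨A, hA⟩ : ∃ A, A = ∫ x, |V x| ^ (p / (p - 1)) * ρ x ^ (-(p / (p - 1) - 1)) := ⟨_, rfl⟩
  obtain ⟨N, hN⟩ : ∃ N, N = ∫ x, |v x| ^ p * ρ x := ⟨_, rfl⟩
  obtain ⟨Q, hQ⟩ : ∃ Q, Q = A + K * (K * N) := ⟨_, rfl⟩
  have main : ∀ n, (Integrable (fun z : Ed d × Ed d =>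
        (fiT d n v z.1 - fiT d n v z.2) ^ 2 * ‖z.1 - z.2‖ ^ (-e)) ∧
      ∫ z : Ed d × Ed d, (fiT d n v z.1 - fiT d n v z.2) ^ 2 * ‖z.1 - z.2‖ ^ (-e) ≤ 2 * (Q / Cds) + 1) ∧
      ∃ χ : ℕ → Ed d → ℝ, (∀ k, ContDiff ℝ (⊤ : ℕ∞) (χ k)) ∧ (∀ k, HasCompactSupport (χ k)) ∧
        (∀ k x, 0 ≤ χ k x) ∧ (∀ k x, χ k x ≤ 1) ∧ (∀ x, Tendsto (fun k => χ k x) atTop (𝓝 1)) ∧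
        ∀ k, Integrable (fun z : Ed d × Ed d =>
          (χ k z.1 * fiT d n v z.1 - χ k z.2 * fiT d n v z.2) ^ 2 * ‖z.1 - z.2‖ ^ (-e)) ∧
        ∫ z : Ed d × Ed d, (χ k z.1 * fiT d n v z.1 - χ k z.2 * fiT d n v z.2) ^ 2
          * ‖z.1 - z.2‖ ^ (-e) ≤ 2 * (Q / Cds) + 1 + 2 * (2 * (Q / Cds) + 1) := by
    intro n
    have hTb := fiT_bound H.hp H.hpos H.hm hK0 (hK n) hbv.2.2 hvm
    have hus := fiT_smooth (n := n) hbv.2.2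
    have htr := fun {ψ : Ed d → ℝ} => fi_transfer (n := n) (ψ := ψ) H.hd hs hvm.1 hbv.2.1 hV.1
      (fi_V_loc H.hp H.hpos H.hm H.hloc hV) hD
    rw [← hee] at htr
    obtain ⟨u, hu⟩ : ∃ u, u = fiT d n v := ⟨_, rfl⟩
    rw [← hu] at hTb hus htr ⊢
    obtain ⟨hui2, χ, r, hχs, hχc, hχ0, hχ1, hχl, hrm, hr0, hrK, hrL, hrI⟩ := H.hcut u hTb.1
    rw [← hee] at hui2 hrK hrL
    have hE2 := fun k => fi_E2 H.hd he he2 hus hui2 (hχs k) (hχc k) (hχ0 k)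
    have hψ : ∀ k, Cds * (∫ x, u x * fiLL d e (fun y => χ k y * u y) x) ≤ Q := by
      intro k
      have hcu : HasCompactSupport (fun y => χ k y * u y) := (hχc k).mul_right
      have hsu : ContDiff ℝ (⊤ : ℕ∞) (fun y => χ k y * u y) := (hχs k).mul hus
      rw [htr hsu hcu]
      have h1 := fi_mul_mem H.hp H.hpos H.hm (hχs k).continuous (hχ0 k) (hχ1 k) hTb.1
      have h2 := fiT_bound H.hp H.hpos H.hm hK0 (hK n) hsu.continuous.locallyIntegrable h1.1
      have h3 := (fi_w_young H.hp H.hpos H.hm hV h2.1).2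
      rw [← hA] at h3
      have h4 := mul_le_mul_of_nonneg_left (h1.2.trans hTb.2) hK0
      rw [← hN] at h4
      rw [hQ]
      linarith [le_abs_self (∫ x, V x * fiT d n (fun y => χ k y * u y) x), h2.2]
    have hψ' : ∀ k, (∫ x, u x * fiLL d e (fun y => χ k y * u y) x) ≤ Q / Cds := by
      intro k
      rw [le_div_iff₀ hC]
      linarith [hψ k]
    have hu2m : AEStronglyMeasurable (fun x => u x ^ 2) volume := (hus.continuous.pow 2).aestronglyMeasurable
    have hLi : ∀ k, Integrable (fun x => u x ^ 2 * fiLL d e (χ k) x) :=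
      fun k => (fi_I1_lim H.hd he he2 hu2m hui2 (hχs k) (hχc k)).1
    have hri : ∀ k, Integrable (fun x => u x ^ 2 * r k x) := by
      intro k
      obtain ⟨B, hB⟩ := hrK k
      refine (hui2.const_mul B).mono' (hu2m.mul (hrm k).aestronglyMeasurable) (ae_of_all _ fun x => ?_)
      rw [Real.norm_eq_abs, abs_of_nonneg (mul_nonneg (sq_nonneg _) (hr0 k x))]
      have := mul_le_mul_of_nonneg_left (hB x) (sq_nonneg (u x))
      linarith
    have hLlow : ∀ k, -1 ≤ ∫ x, u x ^ 2 * fiLL d e (χ k) x := by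
      intro k
      have h1 : (∫ x, -(u x ^ 2 * r k x)) ≤ ∫ x, u x ^ 2 * fiLL d e (χ k) x := by
        refine integral_mono (hri k).neg (hLi k) fun x => ?_
        dsimp only
        have := mul_le_mul_of_nonneg_left (hrL k x) (sq_nonneg (u x))
        linarith
      rw [integral_neg] at h1
      linarith [hrI k]
    have hLup : ∀ k, (∫ x, u x ^ 2 * fiLL d e (χ k) x) ≤ 2 * (Q / Cds) := by
      intro k
      have h1 : 0 ≤ ∫ z : Ed d × Ed d, (χ k z.1 + χ k z.2) * (u z.1 - u z.2) ^ 2 * ‖z.1 - z.2‖ ^ (-e) := by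
        refine integral_nonneg fun z => ?_
        have := hχ0 k z.1
        have := hχ0 k z.2
        simp only [Pi.zero_apply]
        positivity
      linarith [(hE2 k).2, hψ' k]
    have hEu := fi_fatou (μ := (volume : Measure (Ed d × Ed d)))
      (f := fun k (z : Ed d × Ed d) => 1 / 2 * ((χ k z.1 + χ k z.2) * (u z.1 - u z.2) ^ 2 * ‖z.1 - z.2‖ ^ (-e)))
      (g := fun z : Ed d × Ed d => (u z.1 - u z.2) ^ 2 * ‖z.1 - z.2‖ ^ (-e))
      (M := fun _ => 2 * (Q / Cds) + 1) (M' := 2 * (Q / Cds) + 1)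
      (fun k => (hE2 k).1.const_mul _)
      (fun k => ae_of_all _ fun z => by
        have := hχ0 k z.1
        have := hχ0 k z.2
        simp only [Pi.zero_apply]
        positivity)
      (fun k => by
        rw [integral_const_mul]
        linarith [(hE2 k).2, hψ' k, hLlow k])
      tendsto_const_nhds
      (ae_of_all _ fun z => by
        have h1 := (((((hχl z.1).add (hχl z.2)).mul_const ((u z.1 - u z.2) ^ 2)).mul_const
          (‖z.1 - z.2‖ ^ (-e))).const_mul (1 / 2 : ℝ))
        refine h1.trans (le_of_eq ?_)
        congr 1; ring)
    refine ⟨hEu, χ, hχs, hχc, hχ0, hχ1, hχl, fun k => ?_⟩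
    have hE3 := fi_E3 H.hd he he2 hus hui2 (hχs k) (hχc k) (hχ0 k) (hχ1 k) hEu.1
    refine ⟨hE3.1, ?_⟩
    have h5 : (∫ x, χ k x * u x ^ 2 * fiLL d e (χ k) x) ≤ ∫ x, (u x ^ 2 * fiLL d e (χ k) x + u x ^ 2 * r k x) := by
      refine integral_mono ?_ ((hLi k).add (hri k)) fun x => ?_
      · refine (hLi k).norm.mono' ?_ (ae_of_all _ fun x => ?_)
        · exact ((hχs k).continuous.aestronglyMeasurable.mul hu2m).mul (fiLL_meas H.hd he he2 (hχs k) (hχc k))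
        · rw [mul_assoc, norm_mul, Real.norm_eq_abs (χ k x), abs_of_nonneg (hχ0 k x)]
          exact mul_le_of_le_one_left (norm_nonneg _) (hχ1 k x)
      · dsimp only
        have h6 : 0 ≤ u x ^ 2 * (fiLL d e (χ k) x + r k x) :=
          mul_nonneg (sq_nonneg _) (by linarith [hrL k x])
        have h7 := mul_le_of_le_one_left h6 (hχ1 k x)
        have h8 : 0 ≤ χ k x * (u x ^ 2 * r k x) :=
          mul_nonneg (hχ0 k x) (mul_nonneg (sq_nonneg _) (hr0 k x))
        linarith
    rw [integral_add (hLi k) (hri k)] at h5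
    linarith [hE3.2, hEu.2, hLup k, hrI k]
  refine ⟨max (2 * (Q / Cds) + 1) (2 * (Q / Cds) + 1 + 2 * (2 * (Q / Cds) + 1)), fun n => ?_⟩
  rw [← hee]
  obtain ⟨h1, χ, h2, h3, h4, h5, h6, h7⟩ := main n
  exact ⟨⟨h1.1, h1.2.trans (le_max_left _ _)⟩, χ, h2, h3, h4, h5, h6,
    fun k => ⟨(h7 k).1, (h7 k).2.trans (le_max_right _ _)⟩⟩

open MeasureTheory Filter Metric Set
open scoped Topology ENNReal

theorem fi_Dsq {d : ℕ} {e : ℝ} (he : 0 < e) (x : Ed d) :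
    ‖x‖ ^ (-(e / 2)) * ‖x‖ ^ (-(e / 2)) = ‖x‖ ^ (-e) := by
  rw [← Real.rpow_add' (norm_nonneg _) (by linarith)]
  congr 1; ring

theorem fi_ae_prod {d : ℕ} {P : Ed d → Prop} (h : ∀ᵐ x : Ed d, P x) :
    ∀ᵐ z : Ed d × Ed d, P z.1 ∧ P z.2 := by
  have h1 : ∀ᵐ z : Ed d × Ed d, P z.1 :=
    (Measure.quasiMeasurePreserving_fst (μ := (volume : Measure (Ed d))) (ν := (volume : Measure (Ed d)))).ae h
  have h2 : ∀ᵐ z : Ed d × Ed d, P z.2 :=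
    (Measure.quasiMeasurePreserving_snd (μ := (volume : Measure (Ed d))) (ν := (volume : Measure (Ed d)))).ae h
  exact h1.and h2

theorem fi_Bconv {d : ℕ} {e : ℝ} (he : 0 < e) {w u : Ed d → ℝ} {f : ℕ → Ed d → ℝ} {M : ℝ}
    (hw : AEStronglyMeasurable w volume) (hf : ∀ n, AEStronglyMeasurable (f n) volume)
    (hwE : Integrable (fun z : Ed d × Ed d => (w z.1 - w z.2) ^ 2 * ‖z.1 - z.2‖ ^ (-e)))
    (hfE : ∀ n, Integrable (fun z : Ed d × Ed d => (f n z.1 - f n z.2) ^ 2 * ‖z.1 - z.2‖ ^ (-e)))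
    (hM : ∀ n, ∫ z : Ed d × Ed d, (f n z.1 - f n z.2) ^ 2 * ‖z.1 - z.2‖ ^ (-e) ≤ M)
    (hlim : ∀ᵐ x, Tendsto (fun n => f n x) atTop (𝓝 (u x))) :
    Integrable (fun z : Ed d × Ed d => (u z.1 - u z.2) ^ 2 * ‖z.1 - z.2‖ ^ (-e)) ∧
    Tendsto (fun n => ∫ z : Ed d × Ed d, (w z.1 - w z.2) * (f n z.1 - f n z.2) * ‖z.1 - z.2‖ ^ (-e))
      atTop (𝓝 (∫ z : Ed d × Ed d, (w z.1 - w z.2) * (u z.1 - u z.2) * ‖z.1 - z.2‖ ^ (-e))) := by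
  have hKm : AEStronglyMeasurable (fun z : Ed d × Ed d => ‖z.1 - z.2‖ ^ (-(e / 2))) volume :=
    ((measurable_fst.sub measurable_snd).norm.pow_const _).aestronglyMeasurable
  have hDm : ∀ {g : Ed d → ℝ}, AEStronglyMeasurable g volume →
      AEStronglyMeasurable (fun z : Ed d × Ed d => (g z.1 - g z.2) * ‖z.1 - z.2‖ ^ (-(e / 2))) volume :=
    fun hg => (hg.comp_fst.sub hg.comp_snd).mul hKm
  have hsq : ∀ (g : Ed d → ℝ) (z : Ed d × Ed d), |(g z.1 - g z.2) * ‖z.1 - z.2‖ ^ (-(e / 2))| ^ (2:ℝ)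
      = (g z.1 - g z.2) ^ 2 * ‖z.1 - z.2‖ ^ (-e) := by
    intro g z
    rw [Real.rpow_two, sq_abs, ← fi_Dsq he]; ring
  have hmul : ∀ (g : Ed d → ℝ) (z : Ed d × Ed d), (w z.1 - w z.2) * ‖z.1 - z.2‖ ^ (-(e / 2)) *
      ((g z.1 - g z.2) * ‖z.1 - z.2‖ ^ (-(e / 2))) = (w z.1 - w z.2) * (g z.1 - g z.2) * ‖z.1 - z.2‖ ^ (-e) := by
    intro g z
    rw [← fi_Dsq he]; ring
  have h := fi_weak_conv (μ := (volume : Measure (Ed d × Ed d))) Real.HolderConjugate.two_two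
    (F := fun z => (w z.1 - w z.2) * ‖z.1 - z.2‖ ^ (-(e / 2)))
    (g := fun z => (u z.1 - u z.2) * ‖z.1 - z.2‖ ^ (-(e / 2)))
    (f := fun n z => (f n z.1 - f n z.2) * ‖z.1 - z.2‖ ^ (-(e / 2))) (M := M)
    (hDm hw) (by simpa only [hsq] using hwE) (fun n => hDm (hf n))
    (fun n => by simpa only [hsq] using hfE n) (fun n => by simpa only [hsq] using hM n)
    (by
      filter_upwards [fi_ae_prod hlim] with z hz
      exact (hz.1.sub hz.2).mul_const _)
  obtain ⟨_, h2, _, _, h5⟩ := h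
  simp only [hsq, hmul] at h2 h5
  exact ⟨h2, h5⟩

theorem fiT_lim {d n : ℕ} {g : Ed d → ℝ} (hg : Continuous g) {χ : ℕ → Ed d → ℝ}
    (hχ : ∀ k, Continuous (χ k)) (h0 : ∀ k x, 0 ≤ χ k x) (h1 : ∀ k x, χ k x ≤ 1)
    (hl : ∀ x, Tendsto (fun k => χ k x) atTop (𝓝 1)) (x : Ed d) :
    Tendsto (fun k => fiT d n (fun y => χ k y * g y) x) atTop (𝓝 (fiT d n g x)) := by
  unfold fiT
  have hEc := fiE_cont (d := d) (n := n)
  have hi : Integrable (fun z => fiE d n z * g (x - z)) :=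
    Continuous.integrable_of_hasCompactSupport (hEc.mul (hg.comp (by fun_prop)))
      (fiE_compact (d := d) (n := n)).mul_right
  refine tendsto_integral_of_dominated_convergence (fun z => ‖fiE d n z * g (x - z)‖) ?_ hi.norm ?_ ?_
  · intro k
    have := hχ k
    exact Continuous.aestronglyMeasurable (by fun_prop)
  · intro k
    refine ae_of_all _ fun z => ?_
    rw [show fiE d n z * (χ k (x - z) * g (x - z)) = χ k (x - z) * (fiE d n z * g (x - z)) by ring,
      norm_mul, Real.norm_eq_abs (χ k (x - z)), abs_of_nonneg (h0 k _)]
    exact mul_le_of_le_one_left (norm_nonneg _) (h1 k _)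
  · refine ae_of_all _ fun z => ?_
    have := ((hl (x - z)).mul_const (g (x - z))).const_mul (fiE d n z)
    rwa [one_mul] at this

theorem fi_main {d : ℕ} {s p Cds : ℝ} {ρ : Ed d → ℝ} (H : FiCtx d s p ρ) (hC : 0 < Cds)
    {v V w W : Ed d → ℝ} (hv : MemX d s Cds p ρ v V) (hw : MemX d s Cds p ρ w W) :
    Cds / 2 * (∫ z : Ed d × Ed d, (v z.1 - v z.2) * (w z.1 - w z.2) * ‖z.1 - z.2‖ ^ (-((d:ℝ) + 2 * s)))
      = ∫ x, V x * w x := by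
  obtain ⟨K, hK0, hK⟩ := H.hA1
  obtain ⟨M, hMv⟩ := fi_key H hC hv
  obtain ⟨M', hMw⟩ := fi_key H hC hw
  have hs := H.hs
  have hbv := H.base hv.1
  have hbw := H.base hw.1
  have hV := hv.2.2
  have htr := fun (n : ℕ) {ψ : Ed d → ℝ} => fi_transfer (n := n) (ψ := ψ) H.hd hs hv.1.1 hbv.2.1 hV.1
      (fi_V_loc H.hp H.hpos H.hm H.hloc hV) hv.2.1
  obtain ⟨e, hee⟩ : ∃ e : ℝ, e = (d:ℝ) + 2 * s := ⟨_, rfl⟩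
  have he : (d:ℝ) < e := by rw [hee]; linarith [hs.1]
  have he0 : 0 < e := lt_of_le_of_lt (Nat.cast_nonneg d) he
  have he2 : e < d + 2 := by rw [hee]; linarith [hs.2]
  rw [← hee] at hMv hMw htr ⊢
  have hTv := fun n => fiT_bound H.hp H.hpos H.hm hK0 (hK n) hbv.2.2 hv.1
  have hTw := fun n => fiT_bound H.hp H.hpos H.hm hK0 (hK n) hbw.2.2 hw.1
  have hsv := fun n => fiT_smooth (n := n) hbv.2.2
  have hsw := fun n => fiT_smooth (n := n) hbw.2.2
  have hJv : ∀ n, Integrable (fun x => fiT d n v x * fiJ d e x) := by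
    intro n; rw [hee]; exact (H.base (hTv n).1).2.1
  -- smooth identity
  have step1 : ∀ n m, Cds / 2 * (∫ z : Ed d × Ed d, (fiT d n v z.1 - fiT d n v z.2) *
      (fiT d m w z.1 - fiT d m w z.2) * ‖z.1 - z.2‖ ^ (-e)) = ∫ x, V x * fiT d n (fiT d m w) x := by
    intro n m
    obtain ⟨⟨hE, _⟩, _⟩ := hMv n
    obtain ⟨_, χ, hχs, hχc, hχ0, hχ1, hχl, hχE⟩ := hMw m
    have hψs : ∀ k, ContDiff ℝ (⊤ : ℕ∞) (fun y => χ k y * fiT d m w y) := fun k => (hχs k).mul (hsw m)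
    have hψc : ∀ k, HasCompactSupport (fun y => χ k y * fiT d m w y) := fun k => (hχc k).mul_right
    have hL := (fi_Bconv he0 (hTv n).1.1 (fun k => (hψs k).continuous.aestronglyMeasurable) hE
      (fun k => (hχE k).1) (fun k => (hχE k).2) (u := fiT d m w)
      (ae_of_all _ fun x => by
        have := (hχl x).mul_const (fiT d m w x)
        rwa [one_mul] at this)).2.const_mul (Cds / 2)
    have hmem := fun k => fi_mul_mem H.hp H.hpos H.hm (hχs k).continuous (hχ0 k) (hχ1 k) (hTw m).1
    have hTm := fun k => fiT_bound H.hp H.hpos H.hm hK0 (hK n) (hψs k).continuous.locallyIntegrable (hmem k).1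
    have hR := (fi_w_weak H.hp H.hpos H.hm hV (fun k => (hTm k).1)
      (fun k => (hTm k).2.trans (mul_le_mul_of_nonneg_left (hmem k).2 hK0))
      (ae_of_all _ fun x => fiT_lim (n := n) (hsw m).continuous (fun k => (hχs k).continuous) hχ0 hχ1 hχl x)).2.2.2
    refine tendsto_nhds_unique hL (hR.congr fun k => ?_)
    rw [← htr n (hψs k) (hψc k), fi_B H.hd he he2 (hTv n).1.1 (hJv n) (hψs k) (hψc k) hE (hχE k).1]
    ring
  -- remove the mollification of the first function
  have step2 : ∀ m, Integrable (fun z : Ed d × Ed d => (v z.1 - v z.2) ^ 2 * ‖z.1 - z.2‖ ^ (-e)) ∧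
      Cds / 2 * (∫ z : Ed d × Ed d, (fiT d m w z.1 - fiT d m w z.2) * (v z.1 - v z.2)
        * ‖z.1 - z.2‖ ^ (-e)) = ∫ x, V x * fiT d m w x := by
    intro m
    have hB := fi_Bconv he0 (hTw m).1.1 (fun n => (hTv n).1.1) (hMw m).1.1 (fun n => (hMv n).1.1)
      (fun n => (hMv n).1.2) (fiT_tendsto hbv.2.2)
    refine ⟨hB.1, ?_⟩
    have hloc := (hsw m).continuous.locallyIntegrable (μ := (volume : Measure (Ed d)))
    have hTT := fun n => fiT_bound H.hp H.hpos H.hm hK0 (hK n) hloc (hTw m).1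
    have hR := (fi_w_weak H.hp H.hpos H.hm hV (fun n => (hTT n).1) (fun n => (hTT n).2)
      (fiT_tendsto hloc)).2.2.2
    refine tendsto_nhds_unique (hB.2.const_mul (Cds / 2)) (hR.congr fun n => ?_)
    rw [← step1 n m]
    congr 1
    refine integral_congr_ae (ae_of_all _ fun z => ?_)
    dsimp only; ring
  have hB := fi_Bconv he0 hv.1.1 (fun n => (hTw n).1.1) (step2 0).1 (fun n => (hMw n).1.1)
      (fun n => (hMw n).1.2) (fiT_tendsto hbw.2.2)
  have hR := (fi_w_weak H.hp H.hpos H.hm hV (fun n => (hTw n).1) (fun n => (hTw n).2)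
      (fiT_tendsto hbw.2.2)).2.2.2
  refine tendsto_nhds_unique (hB.2.const_mul (Cds / 2)) (hR.congr fun n => ?_)
  rw [← (step2 n).2]
  congr 1
  refine integral_congr_ae (ae_of_all _ fun z => ?_)
  dsimp only; ring

open MeasureTheory Filter Metric Set
open scoped Topology ENNReal
theorem stmt17 (d : ℕ) (hd : 1 ≤ d) (s : ℝ) (hs : s ∈ Set.Ioo (0:ℝ) 1)
    (Cds : ℝ) (hC : 0 < Cds) (p : ℝ)
    (hp : ((d:ℝ) ≤ 2 * s ∧ 2 ≤ p) ∨
          (2 * s < (d:ℝ) ∧ 2 ≤ p ∧ p ≤ 2 * d / ((d:ℝ) - 2 * s)))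
    (ρ : Ed d → ℝ) (hρpos : ∀ x, 0 < ρ x) (hρm : Measurable ρ)
    (c C γ₀ γ : ℝ) (hw : TwoPowerWeight d ρ c C γ₀ γ)
    (hγ₀ : γ₀ ∈ Set.Ico (0:ℝ) d)
    (hγ : γ ∈ Set.Icc (0:ℝ) (max (d:ℝ) ((d:ℝ) - (p / 2) * ((d:ℝ) - 2 * s)))) :
    ∀ v V w W : Ed d → ℝ, MemX d s Cds p ρ v V → MemX d s Cds p ρ w W →
      Cds / 2 * ∫ z : Ed d × Ed d,
          (v z.1 - v z.2) * (w z.1 - w z.2) / dist z.1 z.2 ^ ((d:ℝ) + 2 * s)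
        = ∫ x : Ed d, v x * W x ∧
      (∫ x : Ed d, v x * W x) = ∫ x : Ed d, V x * w x := by
  intro v V w W hv hw'
  have H := fi_ctx hd hs hp hρpos hρm hw hγ₀ hγ
  have h1 := fi_main H hC hv hw'
  have h2 := fi_main H hC hw' hv
  have e1 : (∫ z : Ed d × Ed d, (v z.1 - v z.2) * (w z.1 - w z.2) / dist z.1 z.2 ^ ((d:ℝ) + 2 * s))
      = ∫ z : Ed d × Ed d, (v z.1 - v z.2) * (w z.1 - w z.2) * ‖z.1 - z.2‖ ^ (-((d:ℝ) + 2 * s)) := by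
    refine integral_congr_ae (ae_of_all _ fun z => ?_)
    dsimp only
    rw [dist_eq_norm, Real.rpow_neg (norm_nonneg _), div_eq_mul_inv]
  have e2 : (∫ z : Ed d × Ed d, (w z.1 - w z.2) * (v z.1 - v z.2) * ‖z.1 - z.2‖ ^ (-((d:ℝ) + 2 * s)))
      = ∫ z : Ed d × Ed d, (v z.1 - v z.2) * (w z.1 - w z.2) * ‖z.1 - z.2‖ ^ (-((d:ℝ) + 2 * s)) := by
    refine integral_congr_ae (ae_of_all _ fun z => ?_)
    dsimp only; ring
  have e3 : (∫ x : Ed d, v x * W x) = ∫ x : Ed d, W x * v x := by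
    refine integral_congr_ae (ae_of_all _ fun z => ?_)
    dsimp only; ring
  rw [e2] at h2
  rw [e1, e3]
  exact ⟨h2, h2.symm.trans h1⟩
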